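/- Fix integers k ≥ 1 and k₀, k₁, k₂ ≥ 0 with k₀ + k₁ + k₂ = k and k₀·k₂ = 0, and set d₁(n) = −min(n, k₀) − 2·max(n − k₀, 0) and d₂(n) = −min(n, k₀+k₁) − 2·max(n − k₀ − k₁, 0). Call a quasi-particle datum a pair of non-increasing integer sequences k ≥ n_{1,1} ≥ ⋯ ≥ n_{1,a} ≥ 1 and k ≥ n_{2,1} ≥ ⋯ ≥ n_{2,b} ≥ 1 together with integers m_{1,1}, …, m_{1,a}, m_{2,1}, …, m_{2,b} satisfying: (i) m_{i,s+1} ≤ m_{i,s} − 2n_{i,s} whenever n_{i,s+1} = n_{i,s} (i = 1, 2); (ii) m_{1,s} ≤ d₁(n_{1,s}) − 2(s−1)·n_{1,s}; (iii) m_{2,s} ≤ d₂(n_{2,s}) − 2(s−1)·n_{2,s} − ∑_{s'=1}^{a} max(0, n_{2,s} + n_{1,s'} − k); its charge is (∑_s n_{1,s}, ∑_s n_{2,s}) and its degree is −∑_s m_{1,s} − ∑_s m_{2,s}. Call a (k,3)-admissible configuration a finitely supported sequence (a_i)_{i≥0} of nonnegative integers with a_i + a_{i+1} + a_{i+2} ≤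 k for all i ≥ 0, a₀ ≤ k₀, and a₀ + a₁ ≤ k₀ + k₁; its charge is (∑_{t≥0} a_{2t}, ∑_{t≥0} a_{2t+1}) and its degree is ∑_{t≥0} (t+1)·(a_{2t} + a_{2t+1}). Then for all nonnegative integers n₁, n₂, d, the number of (k,3)-admissible configurations of charge (n₁, n₂) and degree d equals the number of quasi-particle data of charge (n₁, n₂) and degree d. -/

import Mathlib

/-- Maximal degree `d_{max}(nγ₁, Λ) = -min(n,k₀) - 2·max(n-k₀,0)`. -/
def dmax1 (k₀ : ℕ) (n : ℕ) : ℤ :=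
  -min (n : ℤ) (k₀ : ℤ) - 2 * max ((n : ℤ) - (k₀ : ℤ)) 0

/-- Maximal degree `d_{max}(nγ₂, Λ) = -min(n,k₀+k₁) - 2·max(n-k₀-k₁,0)`. -/
def dmax2 (k₀ k₁ : ℕ) (n : ℕ) : ℤ :=
  -min (n : ℤ) ((k₀ : ℤ) + (k₁ : ℤ)) - 2 * max ((n : ℤ) - (k₀ : ℤ) - (k₁ : ℤ)) 0

/-- A quasi-particle datum: the charges and degrees of a quasi-particle basis monomial
of `𝔅_{W(Λ)}` for level `k` and `Λ` determined by `k₀, k₁` (and `k₂ = k - k₀ - k₁`). -/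
structure QPDatum (k k₀ k₁ : ℕ) where
  a : ℕ
  b : ℕ
  n1 : Fin a → ℕ
  n2 : Fin b → ℕ
  m1 : Fin a → ℤ
  m2 : Fin b → ℤ
  n1_pos : ∀ s, 1 ≤ n1 s
  n1_le : ∀ s, n1 s ≤ k
  n1_anti : ∀ s t : Fin a, s ≤ t → n1 t ≤ n1 s
  n2_pos : ∀ s, 1 ≤ n2 s
  n2_le : ∀ s, n2 s ≤ k
  n2_anti : ∀ s t : Fin b, s ≤ t → n2 t ≤ n2 s
  diff1 : ∀ (s : ℕ) (h : s + 1 < a), n1 ⟨s + 1, h⟩ = n1 ⟨s, Nat.lt_of_succ_lt h⟩ →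
    m1 ⟨s + 1, h⟩ ≤ m1 ⟨s, Nat.lt_of_succ_lt h⟩ - 2 * (n1 ⟨s, Nat.lt_of_succ_lt h⟩ : ℤ)
  diff2 : ∀ (s : ℕ) (h : s + 1 < b), n2 ⟨s + 1, h⟩ = n2 ⟨s, Nat.lt_of_succ_lt h⟩ →
    m2 ⟨s + 1, h⟩ ≤ m2 ⟨s, Nat.lt_of_succ_lt h⟩ - 2 * (n2 ⟨s, Nat.lt_of_succ_lt h⟩ : ℤ)
  init1 : ∀ s : Fin a, m1 s ≤ dmax1 k₀ (n1 s) - 2 * (s : ℕ) * (n1 s : ℤ)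
  init2 : ∀ s : Fin b, m2 s ≤ dmax2 k₀ k₁ (n2 s) - 2 * (s : ℕ) * (n2 s : ℤ)
    - ∑ s' : Fin a, max 0 ((n2 s : ℤ) + (n1 s' : ℤ) - (k : ℤ))

/-- The charge of a quasi-particle datum: `(∑ n_{1,s}, ∑ n_{2,s})`. -/
def QPDatum.charge {k k₀ k₁ : ℕ} (q : QPDatum k k₀ k₁) : ℕ × ℕ :=
  (∑ s : Fin q.a, q.n1 s, ∑ s : Fin q.b, q.n2 s)

/-- The degree of a quasi-particle datum: `-∑ m_{1,s} - ∑ m_{2,s}`. -/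
def QPDatum.degree {k k₀ k₁ : ℕ} (q : QPDatum k k₀ k₁) : ℤ :=
  -(∑ s : Fin q.a, q.m1 s) - (∑ s : Fin q.b, q.m2 s)

/-- A `(k,3)`-admissible configuration (for `Λ` determined by `k₀, k₁`): a finitely
supported sequence of nonnegative integers satisfying the difference and initial
conditions. -/
def IsAdmissibleConfig (k k₀ k₁ : ℕ) (a : ℕ →₀ ℕ) : Prop :=
  (∀ i : ℕ, a i + a (i + 1) + a (i + 2) ≤ k) ∧ a 0 ≤ k₀ ∧ a 0 + a 1 ≤ k₀ + k₁

/-- The charge `(∑_t a_{2t}, ∑_t a_{2t+1})` of a configuration. -/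
def configCharge (a : ℕ →₀ ℕ) : ℕ × ℕ :=
  (a.sum fun i v => if Even i then v else 0, a.sum fun i v => if Odd i then v else 0)

/-- The degree `∑_t (t+1)(a_{2t} + a_{2t+1})` of a configuration. -/
def configDegree (a : ℕ →₀ ℕ) : ℕ :=
  a.sum fun i v => (i / 2 + 1) * v


namespace QPProof

open MvPolynomial

/-- Piece A: a triangular family of functionals and vectors counts the dimension. -/
theorem card_eq_finrank_of_triangular {E : Type*} [AddCommGroup E] [Module ℚ E]
    [FiniteDimensional ℚ E] {ι Ω : Type*} [LinearOrder Ω]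
    (l : ι → E →ₗ[ℚ] ℚ) (ha : ∀ P : E, P ≠ 0 → ∃ i, l i P ≠ 0)
    (p : ι → E) (f : ι → Ω) (hd : ∀ i, l i (p i) ≠ 0)
    (ht : ∀ i j, l j (p i) ≠ 0 → j = i ∨ f j < f i) :
    Nat.card ι = Module.finrank ℚ E := by
  classical
  have hli : LinearIndependent ℚ p := by
    rw [linearIndependent_iff']
    intro s g hg
    by_contra hcon
    push Not at hcon
    obtain ⟨i0, hi0, hgi0⟩ := hcon
    -- choose index with maximal f
    obtain ⟨i, hi, hmax⟩ := (s.filter (fun i => g i ≠ 0)).exists_max_image f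
      ⟨i0, by simp [hi0, hgi0]⟩
    simp only [Finset.mem_filter] at hi hmax
    have h1 : l i (∑ j ∈ s, g j • p j) = 0 := by rw [hg]; simp
    rw [map_sum, Finset.sum_eq_single i] at h1
    · simp only [map_smul, smul_eq_mul, mul_eq_zero] at h1
      exact h1.elim hi.2 (hd i)
    · intro j hj hji
      rw [map_smul, smul_eq_mul]
      by_cases hgj : g j = 0
      · simp [hgj]
      · have : l i (p j) = 0 := by
          by_contra hne
          rcases ht j i hne with h | h
          · exact hji h.symm
          · exact absurd h (not_lt.mpr (hmax j ⟨hj, hgj⟩))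
        simp [this]
    · intro h; exact absurd hi.1 h
  have : Finite ι := hli.finite_of_isNoetherian
  have := Fintype.ofFinite ι
  apply le_antisymm
  · rw [Nat.card_eq_fintype_card]; exact hli.fintype_card_le_finrank
  · have hinj : Function.Injective (LinearMap.pi l : E →ₗ[ℚ] (ι → ℚ)) := by
      rw [← LinearMap.ker_eq_bot, LinearMap.ker_eq_bot']
      intro P hP
      by_contra hne
      obtain ⟨i, hi⟩ := ha P hne
      exact hi (congrFun hP i)
    have := LinearMap.finrank_le_finrank_of_injective hinj
    rw [Module.finrank_fintype_fun_eq_card] at this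
    rw [Nat.card_eq_fintype_card]; exact this

theorem finsupp_nat_induction {σ : Type*} {p : (σ →₀ ℕ) → Prop} (a : σ →₀ ℕ) (h0 : p 0)
    (h1 : ∀ a i, p a → p (a + Finsupp.single i 1)) : p a := by
  refine Finsupp.induction a h0 fun i n f _ hn hf => ?_
  clear a hn
  induction n with
  | zero => simpa using hf
  | succ n ih =>
    have : Finsupp.single i (n + 1) + f = (Finsupp.single i n + f) + Finsupp.single i 1 := by
      rw [Finsupp.single_add]; abel
    rw [this]
    exact h1 _ _ ih

/-! ### Lead exponents -/

section Lead
variable {σ : Type*} [LinearOrder σ] {K : Type*} [CommRing K]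

theorem lexlt_iff {a b : σ →₀ ℕ} :
    toLex a < toLex b ↔ ∃ i, (∀ j, j < i → a j = b j) ∧ a i < b i := Finsupp.Lex.lt_iff

/-- `ν` is the lexicographically largest exponent of `F`. -/
def Lead (F : MvPolynomial σ K) (ν : σ →₀ ℕ) : Prop :=
  coeff ν F ≠ 0 ∧ ∀ ν', coeff ν' F ≠ 0 → toLex ν' ≤ toLex ν

theorem exists_lead {F : MvPolynomial σ K} (hF : F ≠ 0) : ∃ ν, Lead F ν := by
  obtain ⟨ν, hν, hmax⟩ := F.support.exists_max_image (fun ν => toLex ν)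
    (MvPolynomial.support_nonempty.mpr hF)
  exact ⟨ν, by simpa using hν, fun ν' h => hmax ν' (by simpa using h)⟩

theorem Lead.coeff_mul {F F' : MvPolynomial σ K} {ν ν' : σ →₀ ℕ} (h : Lead F ν)
    (h' : Lead F' ν') : coeff (ν + ν') (F * F') = coeff ν F * coeff ν' F' := by
  classical
  rw [MvPolynomial.coeff_mul, Finset.sum_eq_single (ν, ν')]
  · rintro ⟨a, b⟩ hab hne
    by_contra hcon
    have ha : coeff a F ≠ 0 := left_ne_zero_of_mul hcon
    have hb : coeff b F' ≠ 0 := right_ne_zero_of_mul hcon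
    have h1 := h.2 a ha
    have h2 := h'.2 b hb
    rw [Finset.HasAntidiagonal.mem_antidiagonal] at hab
    simp only at hab
    have h3 : toLex a + toLex b = toLex ν + toLex ν' := by
      rw [← toLex_add, ← toLex_add, hab]
    have h4 : toLex a = toLex ν := by
      rcases h1.lt_or_eq with h1 | h1
      · exact absurd h3 (add_lt_add_of_lt_of_le h1 h2).ne
      · exact h1
    have h5 : toLex b = toLex ν' := by
      rw [h4] at h3; exact add_left_cancel h3
    exact hne (by rw [toLex_inj.mp h4, toLex_inj.mp h5])
  · intro h; exact absurd (by simp) h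

theorem Lead.mul [NoZeroDivisors K] {F F' : MvPolynomial σ K} {ν ν' : σ →₀ ℕ} (h : Lead F ν)
    (h' : Lead F' ν') : Lead (F * F') (ν + ν') := by
  classical
  refine ⟨by rw [h.coeff_mul h']; exact mul_ne_zero h.1 h'.1, ?_⟩
  intro μ hμ
  rw [MvPolynomial.coeff_mul] at hμ
  obtain ⟨⟨a, b⟩, hab, hne⟩ := Finset.exists_ne_zero_of_sum_ne_zero hμ
  rw [Finset.HasAntidiagonal.mem_antidiagonal] at hab
  simp only at hab
  rw [← hab, toLex_add, toLex_add]
  exact add_le_add (h.2 a (left_ne_zero_of_mul hne)) (h'.2 b (right_ne_zero_of_mul hne))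

theorem lead_one [Nontrivial K] : Lead (1 : MvPolynomial σ K) 0 := by
  classical
  refine ⟨by simp, fun ν' h => ?_⟩
  rw [MvPolynomial.coeff_one] at h
  have : ν' = 0 := by by_contra hh; exact h (by rw [if_neg (fun h' => hh h'.symm)])
  rw [this]

theorem lead_prod [NoZeroDivisors K] [Nontrivial K] {ι : Type*} (s : Finset ι)
    (F : ι → MvPolynomial σ K) (ν : ι → σ →₀ ℕ) (h : ∀ i ∈ s, Lead (F i) (ν i)) :
    Lead (∏ i ∈ s, F i) (∑ i ∈ s, ν i) := by
  classical
  induction s using Finset.induction_on with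
  | empty => simpa using lead_one
  | insert i s hi ih =>
    rw [Finset.prod_insert hi, Finset.sum_insert hi]
    exact (h i (by simp)).mul (ih fun j hj => h j (by simp [hj]))

theorem coeff_lead_prod [NoZeroDivisors K] [Nontrivial K] {ι : Type*} (s : Finset ι)
    (F : ι → MvPolynomial σ K) (ν : ι → σ →₀ ℕ) (h : ∀ i ∈ s, Lead (F i) (ν i)) :
    coeff (∑ i ∈ s, ν i) (∏ i ∈ s, F i) = ∏ i ∈ s, coeff (ν i) (F i) := by
  classical
  induction s using Finset.induction_on with
  | empty => simp
  | insert i s hi ih =>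
    rw [Finset.prod_insert hi, Finset.sum_insert hi, Finset.prod_insert hi,
      (h i (by simp)).coeff_mul (lead_prod s F ν fun j hj => h j (by simp [hj])),
      ih fun j hj => h j (by simp [hj])]

end Lead

end QPProof


namespace QPProof

open MvPolynomial

/-! ### The spaces of good polynomials -/

/-- A point of the curve `x ↦ (α, β, α x, β x, α x², β x², …)`. -/
def cur {B : Type*} [CommRing B] (α β x : B) (i : ℕ) : B :=
  (if Even i then α else β) * x ^ (i / 2)

/-- The line `t + v X`. -/
noncomputable def lin {B : Type*} [CommRing B] (t v : ℕ → B) (i : ℕ) : Polynomial B :=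
  Polynomial.C (t i) + Polynomial.C (v i) * Polynomial.X

/-- Degree bounds along all lines in the directions of the curve. -/
def Good (k k01 k0 : ℕ) (P : MvPolynomial ℕ ℚ) : Prop :=
  ∀ (B : Type) [CommRing B] [Algebra ℚ B] (t : ℕ → B) (α β x : B),
    (aeval (lin t (cur α β x)) P).natDegree ≤ k ∧
    (aeval (lin t (cur α β 0)) P).natDegree ≤ k01 ∧
    (aeval (lin t (cur α 0 0)) P).natDegree ≤ k0

theorem Good.mul {k k01 k0 l l01 l0 : ℕ} {P Q : MvPolynomial ℕ ℚ} (hP : Good k k01 k0 P)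
    (hQ : Good l l01 l0 Q) : Good (k + l) (k01 + l01) (k0 + l0) (P * Q) := by
  intro B _ _ t α β x
  obtain ⟨h1, h2, h3⟩ := hP B t α β x
  obtain ⟨g1, g2, g3⟩ := hQ B t α β x
  simp only [map_mul]
  exact ⟨Polynomial.natDegree_mul_le_of_le h1 g1, Polynomial.natDegree_mul_le_of_le h2 g2,
    Polynomial.natDegree_mul_le_of_le h3 g3⟩

theorem good_one : Good 0 0 0 1 := by
  intro B _ _ t α β x
  simp

theorem good_prod {ι : Type*} (s : Finset ι) (k k01 k0 : ι → ℕ) (P : ι → MvPolynomial ℕ ℚ)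
    (h : ∀ i ∈ s, Good (k i) (k01 i) (k0 i) (P i)) :
    Good (∑ i ∈ s, k i) (∑ i ∈ s, k01 i) (∑ i ∈ s, k0 i) (∏ i ∈ s, P i) := by
  classical
  induction s using Finset.induction_on with
  | empty => simpa using good_one
  | insert i s hi ih =>
    simp only [Finset.prod_insert hi, Finset.sum_insert hi]
    exact (h i (by simp)).mul (ih fun j hj => h j (by simp [hj]))

theorem Good.mono {k k01 k0 l l01 l0 : ℕ} {P : MvPolynomial ℕ ℚ} (hP : Good k k01 k0 P)
    (h : k ≤ l) (h' : k01 ≤ l01) (h'' : k0 ≤ l0) : Good l l01 l0 P := by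
  intro B _ _ t α β x
  obtain ⟨h1, h2, h3⟩ := hP B t α β x
  exact ⟨h1.trans h, h2.trans h', h3.trans h''⟩

/-- The submodule of good polynomials. -/
def goodSub (k k01 k0 : ℕ) : Submodule ℚ (MvPolynomial ℕ ℚ) where
  carrier := {P | Good k k01 k0 P}
  zero_mem' := by
    intro B _ _ t α β x
    simp
  add_mem' := by
    intro P Q hP hQ B _ _ t α β x
    obtain ⟨h1, h2, h3⟩ := hP B t α β x
    obtain ⟨g1, g2, g3⟩ := hQ B t α β x
    simp only [map_add]
    exact ⟨Polynomial.natDegree_add_le_of_degree_le h1 g1,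
      Polynomial.natDegree_add_le_of_degree_le h2 g2,
      Polynomial.natDegree_add_le_of_degree_le h3 g3⟩
  smul_mem' := by
    intro c P hP B _ _ t α β x
    obtain ⟨h1, h2, h3⟩ := hP B t α β x
    simp only [map_smul]
    exact ⟨(Polynomial.natDegree_smul_le _ _).trans h1, (Polynomial.natDegree_smul_le _ _).trans h2,
      (Polynomial.natDegree_smul_le _ _).trans h3⟩

/-- The weights of the variables. -/
def wt (i : ℕ) : ℕ × ℕ × ℕ := (if Even i then 1 else 0, if Odd i then 1 else 0, i / 2 + 1)

theorem weight_wt (a : ℕ →₀ ℕ) :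
    Finsupp.weight wt a = ((configCharge a).1, (configCharge a).2, configDegree a) := by
  rw [Finsupp.weight_apply, configCharge, configDegree, Finsupp.sum, Finsupp.sum, Finsupp.sum,
    Finsupp.sum]
  refine Prod.ext ?_ (Prod.ext ?_ ?_)
  · rw [Prod.fst_sum]
    exact Finset.sum_congr rfl fun i _ => by simp [wt]
  · rw [Prod.snd_sum, Prod.fst_sum]
    exact Finset.sum_congr rfl fun i _ => by simp [wt]
  · rw [Prod.snd_sum, Prod.snd_sum]
    exact Finset.sum_congr rfl fun i _ => by simp [wt, mul_comm]

theorem weight_wt_iff (a : ℕ →₀ ℕ) (n₁ n₂ d : ℕ) : Finsupp.weight wt a = (n₁, n₂, d) ↔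
    configCharge a = (n₁, n₂) ∧ configDegree a = d := by
  rw [weight_wt]
  simp [Prod.ext_iff, and_assoc]

theorem le_of_weight {a : ℕ →₀ ℕ} {w : ℕ × ℕ × ℕ} (h : Finsupp.weight wt a = w) (i : ℕ) :
    (i / 2 + 1) * a i ≤ w.2.2 := by
  have h2 : configDegree a = w.2.2 := by rw [← h, weight_wt]
  rw [← h2, configDegree, Finsupp.sum]
  by_cases hi : i ∈ a.support
  · exact Finset.single_le_sum (f := fun i => (i / 2 + 1) * a i) (fun _ _ => Nat.zero_le _) hi
  · simp [Finsupp.notMem_support_iff.mp hi]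

theorem eq_zero_of_weight {a : ℕ →₀ ℕ} {w : ℕ × ℕ × ℕ} (h : Finsupp.weight wt a = w) (i : ℕ)
    (hi : 2 * w.2.2 ≤ i) : a i = 0 := by
  have := le_of_weight h i
  by_contra hne
  have h1 : 1 ≤ a i := Nat.one_le_iff_ne_zero.mpr hne
  have h2 : (i / 2 + 1) * 1 ≤ (i / 2 + 1) * a i := Nat.mul_le_mul_left _ h1
  omega

theorem finite_weight (w : ℕ × ℕ × ℕ) : {a : ℕ →₀ ℕ | Finsupp.weight wt a = w}.Finite := by
  classical
  apply (Set.finite_Iic (Finsupp.onFinset (Finset.range (2 * w.2.2))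
    (fun i => if i < 2 * w.2.2 then w.2.2 else 0) (by intro i; simp; tauto) : ℕ →₀ ℕ)).subset
  intro a ha
  simp only [Set.mem_ofPred_eq] at ha
  intro i
  simp only [Finsupp.onFinset_apply]
  split_ifs with h
  · have := le_of_weight ha i
    exact (Nat.le_mul_of_pos_left _ (Nat.succ_pos _)).trans this
  · rw [eq_zero_of_weight ha i (by omega)]

/-- The graded piece of the space of good polynomials. -/
noncomputable def gradedE (k k01 k0 : ℕ) (w : ℕ × ℕ × ℕ) : Submodule ℚ (MvPolynomial ℕ ℚ) :=
  goodSub k k01 k0 ⊓ weightedHomogeneousSubmodule ℚ wt w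

instance (k k01 k0 : ℕ) (w : ℕ × ℕ × ℕ) : FiniteDimensional ℚ (gradedE k k01 k0 w) := by
  have h : FiniteDimensional ℚ (weightedHomogeneousSubmodule ℚ wt w) := by
    rw [weightedHomogeneousSubmodule_eq_finsupp_supported]
    have : Finite {d | Finsupp.weight wt d = w} := finite_weight w
    exact Module.Finite.equiv (AddMonoidAlgebra.supportedEquivFinsupp
      {d | Finsupp.weight wt d = w}).symm
  exact Submodule.finiteDimensional_of_le (inf_le_right : gradedE k k01 k0 w ≤ _)

theorem mem_gradedE {k k01 k0 : ℕ} {w : ℕ × ℕ × ℕ} {P : MvPolynomial ℕ ℚ} :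
    P ∈ gradedE k k01 k0 w ↔ Good k k01 k0 P ∧ IsWeightedHomogeneous wt P w := Iff.rfl

end QPProof


set_option linter.unusedSectionVars false

namespace QPProof

open MvPolynomial

/-! ### Umbral evaluation -/

section Umb
variable {ι : Type*} [Fintype ι] {B : Type*} [CommRing B] [Algebra ℚ B]

/-- The linear map sending a monomial `∏ X_s ^ α_s` to `∏ τ_s(α_s)`. -/
noncomputable def umb (τ : ι → ℕ → B) : MvPolynomial ι ℚ →ₗ[ℚ] B :=
  (basisMonomials ι ℚ).constr ℚ (fun α => ∏ s, τ s (α s))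

theorem umb_monomial (τ : ι → ℕ → B) (α : ι →₀ ℕ) (c : ℚ) :
    umb τ (monomial α c) = c • ∏ s, τ s (α s) := by
  have h : monomial α c = c • (basisMonomials ι ℚ) α := by
    rw [coe_basisMonomials, smul_monomial, smul_eq_mul, mul_one]
  rw [h, map_smul, umb, Module.Basis.constr_basis]

/-- To prove two linear maps agree it suffices to check monomials. -/
theorem lin_ext {M : Type*} [AddCommMonoid M] [Module ℚ M] {σ : Type*}
    {f g : MvPolynomial σ ℚ →ₗ[ℚ] M}
    (h : ∀ α, f (monomial α 1) = g (monomial α 1)) (p : MvPolynomial σ ℚ) : f p = g p := by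
  have : f = g := (basisMonomials σ ℚ).ext fun α => by simpa using h α
  rw [this]

theorem umb_one (τ : ι → ℕ → B) : umb τ 1 = ∏ s, τ s 0 := by
  have := umb_monomial τ 0 1
  simpa using this

theorem map_umb {B' : Type*} [CommRing B'] [Algebra ℚ B'] (ψ : B →ₐ[ℚ] B') (τ : ι → ℕ → B)
    (f : MvPolynomial ι ℚ) : ψ (umb τ f) = umb (fun s j => ψ (τ s j)) f := by
  refine lin_ext (f := ψ.toLinearMap ∘ₗ umb τ) (g := umb (fun s j => ψ (τ s j))) ?_ f
  intro α
  simp [umb_monomial]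

theorem umb_sum {R : Type*} [DecidableEq ι] (S : ι → Finset R) (τ : R → ι → ℕ → B)
    (f : MvPolynomial ι ℚ) :
    umb (fun s j => ∑ r ∈ S s, τ r s j) f =
      ∑ g ∈ Fintype.piFinset S, umb (fun s j => τ (g s) s j) f := by
  have := lin_ext (f := umb (fun s j => ∑ r ∈ S s, τ r s j))
    (g := ∑ g ∈ Fintype.piFinset S, umb (fun s j => τ (g s) s j)) ?_ f
  · rw [this]; simp
  intro α
  simp only [LinearMap.sum_apply, umb_monomial, one_smul]
  rw [Finset.prod_univ_sum]

theorem umb_X_mul {τ : ι → ℕ → B} {p : ι} {x : B}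
    (h : ∀ j, τ p (j + 1) = x * τ p j) (g : MvPolynomial ι ℚ) :
    umb τ (X p * g) = x * umb τ g := by
  classical
  refine lin_ext (f := umb τ ∘ₗ LinearMap.mulLeft ℚ (X p))
    (g := LinearMap.mulLeft ℚ x ∘ₗ umb τ) ?_ g
  intro α
  simp only [LinearMap.comp_apply, LinearMap.mulLeft_apply]
  rw [show (X p : MvPolynomial ι ℚ) * monomial α 1 = monomial (α + Finsupp.single p 1) 1 by
    rw [X, monomial_mul, mul_one, add_comm], umb_monomial, umb_monomial, one_smul, one_smul,
    ← Finset.mul_prod_erase _ _ (Finset.mem_univ p), ← Finset.mul_prod_erase _ _ (Finset.mem_univ p)]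
  rw [Finsupp.add_apply, Finsupp.single_eq_same, h, mul_assoc]
  congr 2
  apply Finset.prod_congr rfl
  intro s hs
  rw [Finsupp.add_apply, Finsupp.single_eq_of_ne (Finset.ne_of_mem_erase hs), add_zero]

theorem umb_sub_mul {τ : ι → ℕ → B} {p q : ι} {x : B}
    (h : ∀ j, τ p (j + 1) = x * τ p j) (h' : ∀ j, τ q (j + 1) = x * τ q j)
    (f : MvPolynomial ι ℚ) (hf : X p - X q ∣ f) :
    umb τ f = 0 := by
  obtain ⟨g, rfl⟩ := hf
  rw [sub_mul, map_sub, umb_X_mul h, umb_X_mul h', sub_self]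

theorem umb_geom (κ x : ι → B) (f : MvPolynomial ι ℚ) :
    umb (fun s j => κ s * x s ^ j) f = (∏ s, κ s) * aeval x f := by
  refine lin_ext (f := umb (fun s j => κ s * x s ^ j))
    (g := LinearMap.mulLeft ℚ (∏ s, κ s) ∘ₗ (aeval x : MvPolynomial ι ℚ →ₐ[ℚ] B).toLinearMap) ?_ f
  intro α
  simp only [LinearMap.comp_apply, LinearMap.mulLeft_apply, AlgHom.toLinearMap_apply,
    umb_monomial, one_smul, aeval_monomial, map_one, one_mul, Finset.prod_mul_distrib]
  rw [Finsupp.prod_fintype _ _ (by simp)]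

theorem umb_rename {ι' : Type*} [Fintype ι'] (e : ι ≃ ι') (τ : ι' → ℕ → B)
    (f : MvPolynomial ι ℚ) : umb τ (rename e f) = umb (fun s => τ (e s)) f := by
  refine lin_ext (f := umb τ ∘ₗ (rename e : MvPolynomial ι ℚ →ₐ[ℚ] _).toLinearMap)
    (g := umb (fun s => τ (e s))) ?_ f
  intro α
  simp only [LinearMap.comp_apply, AlgHom.toLinearMap_apply, rename_monomial, umb_monomial,
    one_smul]
  rw [← e.prod_comp]
  apply Finset.prod_congr rfl
  intro s _
  rw [Finsupp.mapDomain_apply e.injective]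

theorem umb_shift (τ : ι → ℕ → B) (A : ι → ℕ) (f : MvPolynomial ι ℚ) :
    umb τ ((∏ s, X s ^ A s) * f) = umb (fun s j => τ s (j + A s)) f := by
  refine lin_ext (f := umb τ ∘ₗ LinearMap.mulLeft ℚ (∏ s, X s ^ A s))
    (g := umb (fun s j => τ s (j + A s))) ?_ f
  intro α
  have h : (∏ s, X s ^ A s : MvPolynomial ι ℚ) = monomial (Finsupp.equivFunOnFinite.symm A) 1 := by
    rw [monomial_eq, Finsupp.prod_fintype _ _ (by simp)]
    simp
  simp only [LinearMap.comp_apply, LinearMap.mulLeft_apply, h, monomial_mul, umb_monomial,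
    mul_one, one_smul]
  apply Finset.prod_congr rfl
  intro s _
  simp [add_comm]

theorem umb_option {τ : Option ι → ℕ → B} (h : ∀ j, τ none (j + 1) = 0)
    (f : MvPolynomial (Option ι) ℚ) :
    umb τ f = τ none 0 * umb (fun s => τ (some s))
      (aeval (fun o : Option ι => o.elim (0 : MvPolynomial ι ℚ) X) f) := by
  refine lin_ext (f := umb τ) (g := LinearMap.mulLeft ℚ (τ none 0) ∘ₗ
    umb (fun s => τ (some s)) ∘ₗ (aeval (fun o : Option ι => o.elim (0 : MvPolynomial ι ℚ) X) :
      MvPolynomial (Option ι) ℚ →ₐ[ℚ] MvPolynomial ι ℚ).toLinearMap) ?_ f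
  intro α
  simp only [LinearMap.comp_apply, LinearMap.mulLeft_apply, AlgHom.toLinearMap_apply,
    umb_monomial, one_smul, aeval_monomial, map_one, one_mul]
  rw [Finsupp.prod_fintype _ _ (by simp), Fintype.prod_option, Fintype.prod_option]
  simp only [Option.elim]
  rcases hα : α none with _ | n
  · simp only [pow_zero, one_mul]
    have := umb_shift (fun s => τ (some s)) (fun s => α (some s)) 1
    rw [mul_one] at this
    rw [this, umb_one]
    simp
  · rw [h]; simp

theorem umb_congr {τ τ' : ι → ℕ → B} (h : ∀ s j, τ s j = τ' s j) (f : MvPolynomial ι ℚ) :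
    umb τ f = umb τ' f := by
  have : τ = τ' := funext fun s => funext fun j => h s j
  rw [this]

theorem natDegree_umb_le {τ : ι → ℕ → Polynomial B} (D : ι → ℕ)
    (h : ∀ s j, (τ s j).natDegree ≤ D s) (f : MvPolynomial ι ℚ) :
    (umb τ f).natDegree ≤ ∑ s, D s := by
  induction f using MvPolynomial.induction_on' with
  | monomial α c =>
    rw [umb_monomial]
    refine (Polynomial.natDegree_smul_le _ _).trans ((Polynomial.natDegree_prod_le _ _).trans ?_)
    exact Finset.sum_le_sum fun s _ => h s _
  | add p q hp hq =>
    rw [map_add]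
    exact Polynomial.natDegree_add_le_of_degree_le hp hq

end Umb

/-! ### The polynomials `E(b)` -/

section Eb
variable {ι : Type*} [Fintype ι] [DecidableEq ι]

/-- A factor of the kernel. -/
noncomputable def fac (b : ι → ℕ) (s s' : ι) : MvPolynomial ι ℚ :=
  if s ≠ s' ∧ ¬ (Odd (b s) ∧ Even (b s')) then X s - X s' else 1

/-- The kernel. -/
noncomputable def Del (b : ι → ℕ) : MvPolynomial ι ℚ := ∏ s, ∏ s', fac b s s'

/-- The polynomial `E(b)`. -/
noncomputable def Epol (b : ι → ℕ) : MvPolynomial ℕ ℚ :=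
  umb (fun s j => X (2 * j + b s)) (Del b)

theorem dvd_Del (b : ι → ℕ) {p q : ι} (h : p ≠ q) : X p - X q ∣ Del b := by
  have key : ∀ p q : ι, fac b p q ∣ Del b := fun p q =>
    (Finset.dvd_prod_of_mem (fun s' => fac b p s') (Finset.mem_univ q)).trans
      (Finset.dvd_prod_of_mem (fun s => ∏ s', fac b s s') (Finset.mem_univ p))
  by_cases hc : Odd (b p) ∧ Even (b q)
  · have h2 := key q p
    rw [fac, if_pos ⟨h.symm, fun h' => (Nat.not_even_iff_odd.mpr hc.1) h'.2⟩] at h2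
    rw [← neg_sub, neg_dvd]; exact h2
  · have h2 := key p q
    rwa [fac, if_pos ⟨h, hc⟩] at h2

theorem fac_isHomogeneous (b : ι → ℕ) (s s' : ι) :
    (fac b s s').IsHomogeneous (if s ≠ s' ∧ ¬ (Odd (b s) ∧ Even (b s')) then 1 else 0) := by
  unfold fac
  split_ifs
  · exact (isHomogeneous_X _ _).sub (isHomogeneous_X _ _)
  · exact isHomogeneous_one _ _

theorem Del_isHomogeneous (b : ι → ℕ) : ∃ N, (Del b).IsHomogeneous N :=
  ⟨_, IsHomogeneous.prod _ _ _ fun s _ => IsHomogeneous.prod _ _ _ fun s' _ =>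
    fac_isHomogeneous b s s'⟩

theorem umb_isWeightedHomogeneous (b : ι → ℕ) (f : MvPolynomial ι ℚ) (N : ℕ)
    (hf : f.IsHomogeneous N) :
    IsWeightedHomogeneous wt (umb (fun s j => (X (2 * j + b s) : MvPolynomial ℕ ℚ)) f)
      ((0, 0, N) + ∑ s, wt (b s)) := by
  rw [f.as_sum, map_sum]
  apply IsWeightedHomogeneous.sum
  intro α hα
  rw [umb_monomial, smul_eq_C_mul]
  have h1 : IsWeightedHomogeneous wt (∏ s, (X (2 * α s + b s) : MvPolynomial ℕ ℚ))
      (∑ s, wt (2 * α s + b s)) :=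
    IsWeightedHomogeneous.prod _ _ _ fun s _ => isWeightedHomogeneous_X _ _ _
  have h2 : ∑ s, wt (2 * α s + b s) = (0, 0, N) + ∑ s, wt (b s) := by
    have hN := hf (mem_support_iff.mp hα)
    rw [Finsupp.weight_apply, Finsupp.sum_fintype _ _ (by simp)] at hN
    have : ∀ s, wt (2 * α s + b s) = (0, 0, α s) + wt (b s) := by
      intro s
      simp only [wt, Prod.mk_add_mk]
      refine Prod.ext ?_ (Prod.ext ?_ ?_)
      · simp [Nat.even_add]
      · simp [← Nat.not_even_iff_odd, Nat.even_add]
      · simp; omega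
    simp only [this, Finset.sum_add_distrib]
    congr 1
    simp only [Pi.one_apply, smul_eq_mul, mul_one] at hN
    rw [← hN]
    refine Prod.ext ?_ (Prod.ext ?_ ?_)
    · simp [Prod.fst_sum]
    · simp [Prod.fst_sum, Prod.snd_sum]
    · simp [Prod.snd_sum]
  rw [← h2]
  have := (isWeightedHomogeneous_C (R := ℚ) wt (coeff α f)).mul h1
  simpa using this

theorem Epol_isWeightedHomogeneous (b : ι → ℕ) : ∃ w, IsWeightedHomogeneous wt (Epol b) w := by
  obtain ⟨N, hN⟩ := Del_isHomogeneous b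
  exact ⟨_, umb_isWeightedHomogeneous b _ N hN⟩

theorem cur_add {B : Type*} [CommRing B] (α β x : B) (j b : ℕ) :
    cur α β x (2 * (j + 1) + b) = x * cur α β x (2 * j + b) := by
  unfold cur
  have h1 : Even (2 * (j + 1) + b) ↔ Even (2 * j + b) := by simp [Nat.even_add]
  have h2 : (2 * (j + 1) + b) / 2 = (2 * j + b) / 2 + 1 := by omega
  simp only [h1, h2, pow_succ]
  ring

theorem Epol_natDegree_le_one (b : ι → ℕ) {B : Type} [CommRing B] [Algebra ℚ B] (t : ℕ → B)
    (α β x : B) : (aeval (lin t (cur α β x)) (Epol b)).natDegree ≤ 1 := by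
  rw [Epol, map_umb]
  have h : ∀ s j, aeval (lin t (cur α β x)) (X (2 * j + b s) : MvPolynomial ℕ ℚ) =
      ∑ r ∈ (Finset.univ : Finset Bool), (if r then
        Polynomial.C (cur α β x (2 * j + b s)) * Polynomial.X else
        Polynomial.C (t (2 * j + b s))) := by
    intro s j
    simp [lin, add_comm]
  rw [umb_congr h]
  rw [umb_sum (fun _ => Finset.univ) (fun (r : Bool) s j => (if r = true then
        Polynomial.C (cur α β x (2 * j + b s)) * Polynomial.X else
        Polynomial.C (t (2 * j + b s))))]
  apply Polynomial.natDegree_sum_le_of_forall_le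
  intro g _
  by_cases hg : ∃ p q, p ≠ q ∧ g p = true ∧ g q = true
  · obtain ⟨p, q, hpq, hp, hq⟩ := hg
    rw [umb_sub_mul (p := p) (q := q) (x := Polynomial.C x) _ _ _ (dvd_Del b hpq)]
    · simp
    · intro j; simp only [hp, if_true, cur_add, Polynomial.C_mul]; ring
    · intro j; simp only [hq, if_true, cur_add, Polynomial.C_mul]; ring
  · refine (natDegree_umb_le (fun s => if g s then 1 else 0) ?_ _).trans ?_
    · intro s j
      by_cases hs : g s = true
      · simp only [hs, if_true]
        exact (Polynomial.natDegree_C_mul_le _ _).trans Polynomial.natDegree_X_le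
      · simp [hs]
    · rw [Finset.sum_boole, Nat.cast_id, Finset.card_le_one]
      intro p hp q hq
      by_contra hne
      exact hg ⟨p, q, hne, by simpa using hp, by simpa using hq⟩

theorem Epol_good (b : ι → ℕ) (e e' : ℕ) (he : e = 1 ∨ ∀ s, 2 ≤ b s)
    (he' : e' = 1 ∨ ∀ s, 1 ≤ b s) : Good 1 e e' (Epol b) := by
  intro B _ _ t α β x
  refine ⟨Epol_natDegree_le_one b t α β x, ?_, ?_⟩
  · rcases he with rfl | he
    · exact Epol_natDegree_le_one b t α β 0
    · rw [Epol, map_umb]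
      refine (natDegree_umb_le (fun s => 0) ?_ _).trans (by simp)
      intro s j
      have h1 := he s
      have h2 : (2 * j + b s) / 2 ≠ 0 := by omega
      simp [lin, cur, h2]
  · rcases he' with rfl | he'
    · exact Epol_natDegree_le_one b t α 0 0
    · rw [Epol, map_umb]
      refine (natDegree_umb_le (fun s => 0) ?_ _).trans (by simp)
      intro s j
      have h1 := he' s
      by_cases h2 : (2 * j + b s) / 2 = 0
      · have h3 : ¬ Even (2 * j + b s) := by
          have : 2 * j + b s = 1 := by omega
          rw [this]; decide
        simp [lin, cur, h3]
      · simp [lin, cur, h2]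

theorem rename_Del {ι' : Type*} [Fintype ι'] [DecidableEq ι'] (e : ι ≃ ι') (b : ι' → ℕ) :
    rename e (Del (fun s => b (e s))) = Del b := by
  simp only [Del, map_prod]
  rw [← e.prod_comp]
  apply Finset.prod_congr rfl
  intro s _
  rw [← e.prod_comp]
  apply Finset.prod_congr rfl
  intro s' _
  unfold fac
  simp only [apply_ite (rename e), map_sub, rename_X, map_one, ne_eq, EmbeddingLike.apply_eq_iff_eq]

theorem Del_succ (b : ι → ℕ) : ∃ u : ℚ, u ≠ 0 ∧ Del (fun s => b s + 1) = u • Del b := by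
  refine ⟨∏ s : ι, ∏ s' : ι, (if s ≠ s' ∧ ¬ (Odd (b s) ∧ Even (b s')) then -1 else 1), ?_, ?_⟩
  · refine Finset.prod_ne_zero_iff.mpr fun s _ => Finset.prod_ne_zero_iff.mpr fun s' _ => ?_
    split_ifs <;> norm_num
  · rw [Del, Finset.prod_comm, Del, smul_eq_C_mul, map_prod, ← Finset.prod_mul_distrib]
    refine Finset.prod_congr rfl fun s _ => ?_
    rw [map_prod, ← Finset.prod_mul_distrib]
    refine Finset.prod_congr rfl fun s' _ => ?_
    unfold fac
    have : (s' ≠ s ∧ ¬ (Odd (b s' + 1) ∧ Even (b s + 1))) ↔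
        (s ≠ s' ∧ ¬ (Odd (b s) ∧ Even (b s'))) := by
      rw [Nat.odd_add_one, Nat.even_add_one, Nat.not_odd_iff_even, Nat.not_even_iff_odd]
      tauto
    simp only [this]
    split_ifs <;> simp

theorem Epol_succ (b : ι → ℕ) : ∃ u : ℚ, u ≠ 0 ∧
    Epol (fun s => b s + 1) = u • rename Nat.succ (Epol b) := by
  obtain ⟨u, hu, h⟩ := Del_succ b
  refine ⟨u, hu, ?_⟩
  rw [Epol, h, map_smul, Epol, map_umb]
  congr 1
  apply umb_congr
  intro s j
  simp [Nat.succ_eq_add_one, add_assoc]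

end Eb

end QPProof


set_option linter.unusedSectionVars false

namespace QPProof

open MvPolynomial

/-! ### Level one elements with prescribed lead exponent -/

theorem Lead.smul {σ : Type*} [LinearOrder σ] {F : MvPolynomial σ ℚ} {ν : σ →₀ ℕ} (h : Lead F ν)
    {u : ℚ} (hu : u ≠ 0) : Lead (u • F) ν := by
  refine ⟨by simp [hu, h.1], fun ν' h' => h.2 ν' ?_⟩
  rw [coeff_smul, smul_eq_mul] at h'
  exact right_ne_zero_of_mul h'

theorem toLex_mapDomain_succ {a a' : ℕ →₀ ℕ} (h : toLex a ≤ toLex a') :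
    toLex (a.mapDomain Nat.succ) ≤ toLex (a'.mapDomain Nat.succ) := by
  rcases h.lt_or_eq with h | h
  · rw [lexlt_iff] at h
    obtain ⟨j, h1, h2⟩ := h
    apply le_of_lt
    rw [lexlt_iff]
    refine ⟨j + 1, fun i hi => ?_, ?_⟩
    · rcases i with _ | i
      · rw [Finsupp.mapDomain_of_notMem_range, Finsupp.mapDomain_of_notMem_range] <;> simp
      · have h3 := h1 i (by omega)
        rw [← Nat.succ_eq_add_one, Finsupp.mapDomain_apply Nat.succ_injective,
          Finsupp.mapDomain_apply Nat.succ_injective, h3]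
    · rw [← Nat.succ_eq_add_one, Finsupp.mapDomain_apply Nat.succ_injective,
          Finsupp.mapDomain_apply Nat.succ_injective]
      exact h2
  · rw [toLex_inj.mp h]

theorem Lead.rename_succ {F : MvPolynomial ℕ ℚ} {a : ℕ →₀ ℕ} (h : Lead F a) :
    Lead (rename Nat.succ F) (a.mapDomain Nat.succ) := by
  refine ⟨by rw [coeff_rename_mapDomain _ Nat.succ_injective]; exact h.1, fun ν' h' => ?_⟩
  obtain ⟨u, rfl, hu⟩ := coeff_rename_ne_zero _ _ _ h'
  exact toLex_mapDomain_succ (h.2 u hu)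

theorem lead_X {σ : Type*} [LinearOrder σ] (i : σ) :
    Lead (X i : MvPolynomial σ ℚ) (Finsupp.single i 1) := by
  classical
  refine ⟨by simp, fun ν' h' => ?_⟩
  rw [coeff_X, ite_ne_right_iff] at h'
  rw [h'.1]

theorem Lead.Epol_succ {κ : Type*} [Fintype κ] [DecidableEq κ] {b : κ → ℕ} {a : ℕ →₀ ℕ}
    (h : Lead (Epol b) a) : Lead (Epol (fun s => b s + 1)) (a.mapDomain Nat.succ) := by
  obtain ⟨u, hu, h'⟩ := QPProof.Epol_succ b
  rw [h']
  exact h.rename_succ.smul hu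

theorem umb_zero {ι : Type*} [Fintype ι] {B : Type*} [CommRing B] [Algebra ℚ B]
    {τ : ι → ℕ → B} {p : ι} (h : ∀ j, τ p j = 0) (f : MvPolynomial ι ℚ) : umb τ f = 0 := by
  have := lin_ext (f := umb τ) (g := 0) ?_ f
  · simpa using this
  · intro α
    rw [umb_monomial, Finset.prod_eq_zero (Finset.mem_univ p) (h _)]
    simp

theorem umb_mem {ι : Type*} [Fintype ι] {B : Type*} [CommRing B] [Algebra ℚ B]
    {τ : ι → ℕ → B} (S : Subalgebra ℚ B) (h : ∀ s j, τ s j ∈ S) (f : MvPolynomial ι ℚ) :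
    umb τ f ∈ S := by
  induction f using MvPolynomial.induction_on' with
  | monomial α c =>
    rw [umb_monomial]
    exact S.smul_mem (S.prod_mem fun s _ => h _ _) _
  | add p q hp hq =>
    rw [map_add]
    exact S.add_mem hp hq

theorem Del_congr {κ : Type*} [Fintype κ] [DecidableEq κ] {b b' : κ → ℕ}
    (h : ∀ s, Even (b s) ↔ Even (b' s)) : Del b = Del b' := by
  unfold Del fac
  simp only [← Nat.not_even_iff_odd, h]

section Rec
variable {κ : Type*} [Fintype κ] [DecidableEq κ]

theorem aeval_Del_option (b : Option κ → ℕ) (hb : b none = 0) :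
    ∃ u : ℚ, u ≠ 0 ∧ aeval (fun o : Option κ => o.elim (0 : MvPolynomial κ ℚ) X) (Del b) =
      u • ((∏ s, X s ^ (if Even (b (some s)) then 2 else 1)) * Del (fun s => b (some s))) := by
  refine ⟨∏ s : κ, (-1), by simp, ?_⟩
  have h1 : fac b none none = 1 := by simp [fac]
  have h2 : ∀ s, aeval (fun o : Option κ => o.elim (0 : MvPolynomial κ ℚ) X) (fac b none (some s))
      = - X s := by
    intro s; simp [fac, hb]
  have h3 : ∀ s, aeval (fun o : Option κ => o.elim (0 : MvPolynomial κ ℚ) X) (fac b (some s) none)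
      = X s ^ (if Even (b (some s)) then 1 else 0) := by
    intro s
    by_cases h : Even (b (some s)) <;> simp [fac, hb, h, ← Nat.not_even_iff_odd]
  have h4 : ∀ s s', aeval (fun o : Option κ => o.elim (0 : MvPolynomial κ ℚ) X)
      (fac b (some s) (some s')) = fac (fun s => b (some s)) s s' := by
    intro s s'
    simp only [fac, ne_eq, Option.some.injEq]
    split_ifs <;> simp
  rw [Del, Fintype.prod_option, Fintype.prod_option, h1, one_mul]
  simp only [Fintype.prod_option, map_mul, map_prod, h2, h3, h4]
  rw [smul_eq_C_mul, map_prod, Del, ← Finset.prod_mul_distrib, ← Finset.prod_mul_distrib,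
    ← Finset.prod_mul_distrib]
  apply Finset.prod_congr rfl
  intro s _
  split_ifs
  · simp only [map_neg, map_one]; ring
  · simp only [map_neg, map_one]; ring

theorem Epol_cons (b'' : κ → ℕ) (b : Option κ → ℕ) (hb : b none = 0)
    (hb' : ∀ s, b (some s) = if Even (b'' s) then b'' s + 1 else b'' s - 1) :
    ∃ E₀ ∈ supported ℚ {i : ℕ | i ≠ 0}, ∃ u : ℚ, u ≠ 0 ∧
      Epol b = E₀ + u • (X 0 * Epol (fun s => b'' s + 3)) := by
  classical
  let τ : Bool → Option κ → ℕ → MvPolynomial ℕ ℚ := fun r s j =>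
    if r = true then (if 2 * j + b s = 0 then X 0 else 0)
    else (if 2 * j + b s = 0 then 0 else X (2 * j + b s))
  have hτ : ∀ s j, (X (2 * j + b s) : MvPolynomial ℕ ℚ) =
      ∑ r ∈ (Finset.univ : Finset Bool), τ r s j := by
    intro s j
    by_cases h : 2 * j + b s = 0 <;> simp only [τ, h, Fintype.univ_bool] <;> simp [-Nat.add_eq_zero_iff]
  have hE : Epol b = ∑ g ∈ Fintype.piFinset (fun _ : Option κ => (Finset.univ : Finset Bool)),
      umb (fun s j => τ (g s) s j) (Del b) := by
    rw [Epol, umb_congr hτ]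
    exact umb_sum (fun _ => Finset.univ) τ (Del b)
  have hgeo : ∀ s j, τ true s (j + 1) = 0 * τ true s j := by
    intro s j
    have : 2 * (j + 1) + b s ≠ 0 := by omega
    simp [τ]
  set T := umb (fun s j => τ (decide (s = none)) s j) (Del b) with hT
  obtain ⟨u, hu, hT'⟩ : ∃ u : ℚ, u ≠ 0 ∧ T = u • (X 0 * Epol (fun s => b'' s + 3)) := by
    obtain ⟨u, hu, h⟩ := aeval_Del_option b hb
    refine ⟨u, hu, ?_⟩
    rw [hT, umb_option, h, map_smul, umb_shift]
    · have h0 : τ (decide ((none : Option κ) = none)) none 0 = X 0 := by simp [τ, hb]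
      rw [h0, mul_smul_comm]
      congr 2
      rw [Epol, Del_congr (b := fun s => b (some s)) (b' := fun s => b'' s + 3)]
      · apply umb_congr
        intro s j
        have hd : decide (some s = none) = false := by simp
        by_cases h : Even (b'' s)
        · have e1 : b (some s) = b'' s + 1 := by rw [hb', if_pos h]
          have e2 : ¬ Even (b (some s)) := by rw [e1, Nat.even_add_one]; simpa using h
          have e3 : 2 * (j + 1) + (b'' s + 1) = 2 * j + (b'' s + 3) := by ring
          rw [hd, if_neg e2]
          simp only [τ, e1, e3]
          simp
        · have e0 : 1 ≤ b'' s := by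
            by_contra hh
            exact h (by rw [show b'' s = 0 by omega]; simp)
          have e1 : b (some s) = b'' s - 1 := by rw [hb', if_neg h]
          have e2 : Even (b (some s)) := by
            rw [e1, Nat.even_sub e0]; simp [h]
          have e3 : 2 * (j + 2) + (b'' s - 1) = 2 * j + (b'' s + 3) := by omega
          rw [hd, if_pos e2]
          simp only [τ, e1, e3]
          simp
      · intro s
        rw [hb']
        split_ifs with h
        · simp [Nat.even_add, h]; decide
        · have e0 : 1 ≤ b'' s := by
            by_contra hh
            exact h (by rw [show b'' s = 0 by omega]; simp)
          rw [Nat.even_sub e0]; simp [Nat.even_add, h]; decide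
    · intro j
      have := hgeo none j
      simpa using this
  have hterm : ∀ g : Option κ → Bool, g ≠ (fun _ => false) →
      umb (fun s j => τ (g s) s j) (Del b) = T ∨ umb (fun s j => τ (g s) s j) (Del b) = 0 := by
    intro g hg
    obtain ⟨p, hp⟩ : ∃ p, g p = true := by
      by_contra hcon
      push Not at hcon
      exact hg (funext fun p => by simpa using hcon p)
    by_cases hex : ∃ q, q ≠ p ∧ g q = true
    · right
      obtain ⟨q, hqp, hq⟩ := hex
      exact umb_sub_mul (p := q) (q := p) (x := 0)
        (by intro j; simp only [hq]; exact hgeo q j) (by intro j; simp only [hp]; exact hgeo p j)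
        _ (dvd_Del b hqp)
    · push Not at hex
      have hgp : ∀ s, g s = decide (s = p) := by
        intro s
        by_cases h : s = p
        · simp [h, hp]
        · have := hex s h; simp [h]; simpa using this
      by_cases hbp : b p = 0
      · left
        have hbe : ∀ s, b (Equiv.swap none p s) = b s := by
          intro s
          rcases eq_or_ne s none with rfl | h1
          · rw [Equiv.swap_apply_left, hbp, hb]
          · rcases eq_or_ne s p with rfl | h2
            · rw [Equiv.swap_apply_right, hbp, hb]
            · rw [Equiv.swap_apply_of_ne_of_ne h1 h2]
        have h1 := rename_Del (Equiv.swap none p) b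
        simp only [hbe] at h1
        conv_lhs => rw [← h1]
        rw [umb_rename, hT]
        apply umb_congr
        intro s j
        have h2 : g (Equiv.swap none p s) = decide (s = none) := by
          rw [hgp]
          congr 1
          rw [Equiv.swap_apply_eq_iff, Equiv.swap_apply_right]
        simp only [h2, τ, hbe]
      · right
        apply umb_zero (p := p)
        intro j
        simp [hp, τ, hbp]
  refine ⟨umb (fun s j => τ ((fun _ => false) s) s j) (Del b), ?_, ?_⟩
  · apply umb_mem
    intro s j
    simp only [τ, Bool.false_eq_true, if_false]
    split_ifs with h
    · exact Subalgebra.zero_mem _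
    · exact X_mem_supported.mpr h
  · set S := (Fintype.piFinset (fun _ : Option κ => (Finset.univ : Finset Bool))).erase
      (fun _ => false) with hS
    refine ⟨((S.filter (fun g => umb (fun s j => τ (g s) s j) (Del b) = T)).card : ℚ) * u, ?_, ?_⟩
    · refine mul_ne_zero ?_ hu
      rw [Nat.cast_ne_zero, Finset.card_ne_zero]
      refine ⟨fun s => decide (s = none), ?_⟩
      rw [Finset.mem_filter, hS, Finset.mem_erase]
      refine ⟨⟨?_, Fintype.mem_piFinset.mpr fun _ => Finset.mem_univ _⟩, rfl⟩
      intro h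
      have := congrFun h none
      simp at this
    · rw [hE, ← Finset.add_sum_erase _ _ (show (fun _ => false) ∈ Fintype.piFinset
        (fun _ : Option κ => (Finset.univ : Finset Bool)) by simp), mul_smul, ← hT', ← hS]
      congr 1
      rw [← Finset.sum_filter_add_sum_filter_not S
        (fun g => umb (fun s j => τ (g s) s j) (Del b) = T)]
      rw [Finset.sum_congr rfl (fun g hg => (Finset.mem_filter.mp hg).2), Finset.sum_const,
        Finset.sum_eq_zero, add_zero, Nat.cast_smul_eq_nsmul]
      intro g hg
      rw [Finset.mem_filter] at hg
      exact (hterm g (Finset.ne_of_mem_erase hg.1)).resolve_left hg.2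

theorem Lead.Epol_cons {b'' : κ → ℕ} {b : Option κ → ℕ} (hb : b none = 0)
    (hb' : ∀ s, b (some s) = if Even (b'' s) then b'' s + 1 else b'' s - 1) {a'' : ℕ →₀ ℕ}
    (h : Lead (Epol b'') a'') : Lead (Epol b) (Finsupp.single 0 1 +
      ((a''.mapDomain Nat.succ).mapDomain Nat.succ).mapDomain Nat.succ) := by
  obtain ⟨E₀, hE₀, u, hu, hE⟩ := QPProof.Epol_cons b'' b hb hb'
  have h1 : Lead (u • (X 0 * Epol (fun s => b'' s + 3))) (Finsupp.single 0 1 +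
      ((a''.mapDomain Nat.succ).mapDomain Nat.succ).mapDomain Nat.succ) :=
    ((lead_X 0).mul h.Epol_succ.Epol_succ.Epol_succ).smul hu
  have h2 : ∀ ν : ℕ →₀ ℕ, coeff ν E₀ ≠ 0 → ν 0 = 0 := by
    intro ν hν
    by_contra hne
    have : 0 ∈ E₀.vars := by
      rw [mem_vars_iff_mem_support]
      exact ⟨ν, mem_support_iff.mpr hν, Finsupp.mem_support_iff.mpr hne⟩
    have h3 := mem_supported.mp hE₀ this
    simp at h3
  have h0 : (Finsupp.single 0 1 +
      ((a''.mapDomain Nat.succ).mapDomain Nat.succ).mapDomain Nat.succ : ℕ →₀ ℕ) 0 = 1 := by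
    rw [Finsupp.add_apply, Finsupp.mapDomain_of_notMem_range] <;> simp
  rw [hE]
  clear h
  generalize (Finsupp.single 0 1 +
      ((a''.mapDomain Nat.succ).mapDomain Nat.succ).mapDomain Nat.succ) = A at h1 h0
  refine ⟨?_, fun ν hν => ?_⟩
  · have : coeff A E₀ = 0 := by
      by_contra hne
      have := h2 A hne
      omega
    rw [coeff_add, this, zero_add]
    exact h1.1
  · by_cases hc : coeff ν E₀ = 0
    · rw [coeff_add, hc, zero_add] at hν
      exact h1.2 ν hν
    · have := h2 ν hc
      apply le_of_lt
      rw [lexlt_iff]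
      refine ⟨0, by simp, ?_⟩
      simp [this, h0]

end Rec

end QPProof


set_option linter.unusedSectionVars false

namespace QPProof

open MvPolynomial

theorem exists_unshift {a : ℕ →₀ ℕ} (h : a 0 = 0) : ∃ a' : ℕ →₀ ℕ,
    a = a'.mapDomain Nat.succ ∧ ∀ i, a' i = a (i + 1) := by
  refine ⟨a.comapDomain Nat.succ Nat.succ_injective.injOn, ?_, fun i => rfl⟩
  rw [Finsupp.mapDomain_comapDomain _ Nat.succ_injective]
  intro i hi
  rcases i with _ | i
  · simp [h] at hi
  · exact ⟨i, rfl⟩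

theorem level_one (n : ℕ) : ∀ a : ℕ →₀ ℕ, (∀ i, a i + a (i + 1) + a (i + 2) ≤ 1) →
    (∀ i, n ≤ i → a i = 0) →
    ∃ (κ : Type) (_ : Fintype κ) (_ : DecidableEq κ) (b : κ → ℕ), Lead (Epol b) a ∧
      (a 0 = 0 → ∀ s, 1 ≤ b s) ∧ (a 0 = 0 → a 1 = 0 → ∀ s, 2 ≤ b s) := by
  induction n using Nat.strong_induction_on with
  | _ n ih =>
  intro a ha hn
  by_cases hz : a = 0
  · subst hz
    refine ⟨PEmpty, inferInstance, inferInstance, fun _ => 0, ?_, by simp, by simp⟩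
    have : Epol (fun _ : PEmpty => 0) = 1 := by
      simp [Epol, Del, umb_one]
    rw [this]
    exact lead_one
  have hnpos : 0 < n := by
    by_contra hn0
    exact hz (Finsupp.ext fun i => hn i (by omega))
  by_cases h0 : a 0 = 0
  · obtain ⟨a', rfl, ha'⟩ := exists_unshift h0
    obtain ⟨κ, i1, i2, b, hb, hb1, hb2⟩ := ih (n - 1) (by omega) a'
      (fun i => by simpa [ha'] using ha (i + 1)) (fun i hi => by rw [ha']; exact hn _ (by omega))
    refine ⟨κ, i1, i2, fun s => b s + 1, hb.Epol_succ, fun _ s => Nat.le_add_left _ _, fun _ h1 s => ?_⟩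
    have := hb1 (by rw [ha']; exact h1) s
    exact Nat.succ_le_succ this
  · have w0 := ha 0
    simp only [zero_add] at w0
    have e0 : a 0 = 1 := by omega
    have e1 : a 1 = 0 := by omega
    have e2 : a 2 = 0 := by omega
    have hd : a = Finsupp.single 0 1 + a.erase 0 := by
      rw [← e0, Finsupp.single_add_erase]
    obtain ⟨a1, h1, h1'⟩ := exists_unshift (a := a.erase 0) (by simp)
    have h1'' : ∀ i, a1 i = a (i + 1) := fun i => by
      rw [h1', Finsupp.erase_ne (by omega)]
    obtain ⟨a2, h2, h2'⟩ := exists_unshift (a := a1) (by rw [h1'', e1])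
    obtain ⟨a3, h3, h3'⟩ := exists_unshift (a := a2) (by rw [h2', h1'', e2])
    have h4 : ∀ i, a3 i = a (i + 3) := fun i => by rw [h3', h2', h1'']
    obtain ⟨κ, i1, i2, b, hb, hb1, hb2⟩ := ih (n - 1) (by omega) a3
      (fun i => by
        have := ha (i + 3)
        rw [h4, h4, h4]; convert this using 1)
      (fun i hi => by rw [h4]; exact hn _ (by omega))
    refine ⟨Option κ, inferInstance, inferInstance, fun o => o.elim 0
      (fun s => if Even (b s) then b s + 1 else b s - 1), ?_, by simp [e0], by simp [e0]⟩
    have := hb.Epol_cons (b := fun o => o.elim 0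
      (fun s => if Even (b s) then b s + 1 else b s - 1)) rfl (fun s => rfl)
    rw [← h3, ← h2, ← h1, ← hd] at this
    exact this

/-- Partial sums of a configuration. -/
def psum (a : ℕ →₀ ℕ) (i : ℕ) : ℕ := ∑ l ∈ Finset.range i, a l

theorem psum_succ (a : ℕ →₀ ℕ) (i : ℕ) : psum a (i + 1) = psum a i + a i :=
  Finset.sum_range_succ _ _

/-- The summands of the decomposition into level one configurations. -/
noncomputable def part (k : ℕ) (a : ℕ →₀ ℕ) (j : ℕ) : ℕ →₀ ℕ :=
  Finsupp.onFinset a.support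
    (fun i => ((Finset.Ico (psum a i) (psum a (i + 1))).filter (fun r => r % k = j)).card) (by
      intro i hi
      rw [Finsupp.mem_support_iff]
      intro h
      apply hi
      rw [psum_succ, h]
      simp)

theorem part_apply (k : ℕ) (a : ℕ →₀ ℕ) (j i : ℕ) : part k a j i =
    ((Finset.Ico (psum a i) (psum a (i + 1))).filter (fun r => r % k = j)).card := rfl

theorem card_mod_le_one (k j p q : ℕ) (h : q ≤ p + k) :
    ((Finset.Ico p q).filter (fun r => r % k = j)).card ≤ 1 := by
  rw [Finset.card_le_one]
  intro x hx y hy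
  simp only [Finset.mem_filter, Finset.mem_Ico] at hx hy
  have key : ∀ x y, p ≤ x → y < q → x ≤ y → x % k = j → y % k = j → x = y := by
    intro x y h1 h2 h3 h4 h5
    have h6 : k ∣ y - x := (Nat.modEq_iff_dvd' h3).mp (h4.trans h5.symm)
    have h7 : y - x < k := by omega
    have := Nat.eq_zero_of_dvd_of_lt h6 h7
    omega
  rcases le_total x y with hxy | hxy
  · exact key x y hx.1.1 hy.1.2 hxy hx.2 hy.2
  · exact (key y x hy.1.1 hx.1.2 hxy hy.2 hx.2).symm

theorem part_window (k : ℕ) (a : ℕ →₀ ℕ) (j : ℕ) (ha : ∀ i, a i + a (i + 1) + a (i + 2) ≤ k)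
    (i : ℕ) : part k a j i + part k a j (i + 1) + part k a j (i + 2) ≤ 1 := by
  have h1 := psum_succ a i
  have h2 : psum a (i + 2) = _ := psum_succ a (i + 1)
  have h3 : psum a (i + 3) = _ := psum_succ a (i + 2)
  have := ha i
  refine le_trans (le_of_eq ?_) (card_mod_le_one k j (psum a i) (psum a (i + 3)) (by omega))
  rw [part_apply, part_apply, part_apply, show i + 1 + 1 = i + 2 from rfl,
    show i + 2 + 1 = i + 3 from rfl, ← Finset.card_union_of_disjoint,
    ← Finset.card_union_of_disjoint, ← Finset.filter_union, ← Finset.filter_union,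
    Finset.Ico_union_Ico_eq_Ico (by omega) (by omega),
    Finset.Ico_union_Ico_eq_Ico (by omega) (by omega)]
  · rw [Finset.disjoint_left]
    intro x hx hx'
    simp only [Finset.mem_union, Finset.mem_filter, Finset.mem_Ico] at hx hx'
    omega
  · rw [Finset.disjoint_left]
    intro x hx hx'
    simp only [Finset.mem_filter, Finset.mem_Ico] at hx hx'
    omega

theorem part_sum {k : ℕ} (hk : 1 ≤ k) (a : ℕ →₀ ℕ) : ∑ j ∈ Finset.range k, part k a j = a := by
  ext i
  rw [Finsupp.finsetSum_apply]
  simp only [part_apply]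
  rw [← Finset.card_eq_sum_card_fiberwise (f := fun r => r % k)]
  · rw [Nat.card_Ico, psum_succ]; omega
  · intro r _
    simpa using Nat.mod_lt r hk

theorem part_zero {k k0 : ℕ} {a : ℕ →₀ ℕ} (h : a 0 ≤ k0) {j : ℕ} (hj : k0 ≤ j) :
    part k a j 0 = 0 := by
  rw [part_apply, Finset.card_eq_zero, Finset.filter_eq_empty_iff]
  intro r hr hrj
  have h1 := psum_succ a 0
  have h2 : psum a 0 = 0 := by simp [psum]
  have h3 := Nat.mod_le r k
  simp only [Finset.mem_Ico] at hr
  omega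

theorem part_one {k k01 : ℕ} {a : ℕ →₀ ℕ} (h : a 0 + a 1 ≤ k01) {j : ℕ} (hj : k01 ≤ j) :
    part k a j 1 = 0 := by
  rw [part_apply, Finset.card_eq_zero, Finset.filter_eq_empty_iff]
  intro r hr hrj
  have h1 := psum_succ a 0
  have h4 := psum_succ a 1
  have h2 : psum a 0 = 0 := by simp [psum]
  have h3 := Nat.mod_le r k
  simp only [Finset.mem_Ico] at hr
  simp only [zero_add] at h1
  omega

theorem config_lower {k k01 k0 : ℕ} (hk : 1 ≤ k) (h0 : k0 ≤ k01) (h01 : k01 ≤ k) {a : ℕ →₀ ℕ}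
    (ha : ∀ i, a i + a (i + 1) + a (i + 2) ≤ k) (ha0 : a 0 ≤ k0) (ha1 : a 0 + a 1 ≤ k01) :
    ∃ P ∈ gradedE k k01 k0 (Finsupp.weight wt a), Lead P a := by
  have hex : ∀ j, ∃ P, Lead P (part k a j) ∧ Good 1 (if j < k01 then 1 else 0)
      (if j < k0 then 1 else 0) P ∧ ∃ w, IsWeightedHomogeneous wt P w := by
    intro j
    obtain ⟨n, hn⟩ : ∃ n, ∀ i, n ≤ i → part k a j i = 0 := by
      refine ⟨(part k a j).support.sup id + 1, fun i hi => ?_⟩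
      by_contra hne
      have := Finset.le_sup (f := id) (Finsupp.mem_support_iff.mpr hne)
      simp only [id] at this
      omega
    obtain ⟨κ, i1, i2, b, hb, hb1, hb2⟩ := level_one n (part k a j) (part_window k a j ha) hn
    refine ⟨Epol b, hb, Epol_good b _ _ ?_ ?_, Epol_isWeightedHomogeneous b⟩
    · by_cases h : j < k01
      · left; simp [h]
      · right
        exact hb2 (part_zero ha0 (by omega)) (part_one ha1 (by omega))
    · by_cases h : j < k0
      · left; simp [h]
      · right
        exact hb1 (part_zero ha0 (by omega))
  choose P hP hG w hw using hex
  have hlead : Lead (∏ j ∈ Finset.range k, P j) a := by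
    have := lead_prod (Finset.range k) P (part k a) fun j _ => hP j
    rwa [part_sum hk] at this
  refine ⟨∏ j ∈ Finset.range k, P j, ?_, hlead⟩
  rw [mem_gradedE]
  have hcount : ∀ m, m ≤ k → ∑ j ∈ Finset.range k, (if j < m then 1 else 0) = m := by
    intro m hm
    rw [Finset.sum_boole, Nat.cast_id]
    have : (Finset.range k).filter (fun j => j < m) = Finset.range m := by
      ext j; simp; omega
    rw [this, Finset.card_range]
  constructor
  · have := good_prod (Finset.range k) _ _ _ P fun j _ => hG j
    rw [hcount k01 h01, hcount k0 (h0.trans h01)] at this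
    simpa using this
  · have hh : IsWeightedHomogeneous wt (∏ j ∈ Finset.range k, P j) (∑ j ∈ Finset.range k, w j) :=
      IsWeightedHomogeneous.prod _ _ _ fun j _ => hw j
    rw [hh hlead.1]
    exact hh

end QPProof


set_option linter.unusedSectionVars false

namespace QPProof

open MvPolynomial

/-! ### Lead exponents of good polynomials are admissible -/

/-- The monomial `y ^ b`. -/
noncomputable def ypow {K : Type*} [CommRing K] (y : ℕ → K) (b : ℕ →₀ ℕ) : K :=
  b.prod fun i e => y i ^ e

theorem ypow_add_single {K : Type*} [CommRing K] (y : ℕ → K) (b : ℕ →₀ ℕ) (i : ℕ) :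
    ypow y (b + Finsupp.single i 1) = ypow y b * y i := by
  classical
  rw [ypow, Finsupp.prod_add_index', Finsupp.prod_single_index] <;> simp [ypow, pow_add]

theorem expand_monomial {K : Type*} [CommRing K] [Algebra ℚ K] (y : ℕ → K) (a : ℕ →₀ ℕ) :
    ∀ (n : ℕ) (c : ℕ →₀ ℕ), ∃ N : ℕ,
      coeff c ((aeval (lin (B := MvPolynomial ℕ K) X (fun i => C (y i)))
        (monomial a (1 : ℚ))).coeff n) = (N : K) * ypow y (a - c) ∧
      (N ≠ 0 ↔ c ≤ a ∧ n + c.degree = a.degree) := by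
  classical
  induction a using finsupp_nat_induction with
  | h0 =>
    intro n c
    refine ⟨if c = 0 ∧ n = 0 then 1 else 0, ?_, ?_⟩
    · rw [show monomial (0 : ℕ →₀ ℕ) (1 : ℚ) = 1 from rfl, map_one, Polynomial.coeff_one]
      by_cases hc : c = 0 <;> by_cases hn : n = 0
      · simp [hc, hn, ypow]
      · simp [hc, hn]
      · rw [if_pos hn, MvPolynomial.coeff_one, if_neg (fun h => hc h.symm)]; simp [hc]
      · simp [hn]
    · by_cases hc : c = 0
      · subst hc; simp
      · simp [hc]
  | h1 a i ih =>
    intro n c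
    have hF : aeval (lin (B := MvPolynomial ℕ K) X (fun i => C (y i)))
        (monomial (a + Finsupp.single i 1) (1 : ℚ)) =
        aeval (lin (B := MvPolynomial ℕ K) X (fun i => C (y i))) (monomial a (1 : ℚ)) *
          Polynomial.C (X i) +
        aeval (lin (B := MvPolynomial ℕ K) X (fun i => C (y i))) (monomial a (1 : ℚ)) *
          Polynomial.C (C (y i)) * Polynomial.X := by
      rw [show monomial (a + Finsupp.single i 1) (1 : ℚ) = monomial a 1 * X i by
        rw [X, monomial_mul, mul_one], map_mul, aeval_X, lin]
      ring
    rw [hF, Polynomial.coeff_add, Polynomial.coeff_mul_C, coeff_add, coeff_mul_X']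
    obtain ⟨N1, h1, h1'⟩ : ∃ N : ℕ, (if i ∈ c.support then coeff (c - Finsupp.single i 1)
        ((aeval (lin (B := MvPolynomial ℕ K) X (fun i => C (y i)))
          (monomial a (1 : ℚ))).coeff n) else 0) =
          (N : K) * ypow y (a + Finsupp.single i 1 - c) ∧ (N ≠ 0 ↔ c i ≠ 0 ∧
            c - Finsupp.single i 1 ≤ a ∧ n + (c - Finsupp.single i 1).degree = a.degree) := by
      by_cases hi : c i = 0
      · exact ⟨0, by simp [hi], by simp [hi]⟩
      · obtain ⟨N, hN, hN'⟩ := ih n (c - Finsupp.single i 1)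
        refine ⟨N, ?_, by rw [hN']; simp [hi]⟩
        rw [if_pos (Finsupp.mem_support_iff.mpr hi), hN]
        congr 2
        ext l
        rcases eq_or_ne l i with rfl | hl
        · simp; omega
        · simp [Finsupp.single_eq_of_ne hl]
    obtain ⟨N2, h2, h2'⟩ : ∃ N : ℕ, coeff c
        (((aeval (lin (B := MvPolynomial ℕ K) X (fun i => C (y i))) (monomial a (1 : ℚ))) *
          Polynomial.C (C (y i)) * Polynomial.X).coeff n) =
          (N : K) * ypow y (a + Finsupp.single i 1 - c) ∧ (N ≠ 0 ↔ n ≠ 0 ∧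
            c ≤ a ∧ n - 1 + c.degree = a.degree) := by
      rcases n with _ | n
      · exact ⟨0, by simp, by simp⟩
      · obtain ⟨N, hN, hN'⟩ := ih n c
        refine ⟨N, ?_, by rw [hN']; simp⟩
        rw [Polynomial.coeff_mul_X, Polynomial.coeff_mul_C, mul_comm _ (C (y i)), coeff_C_mul, hN,
          mul_comm (y i)]
        by_cases hz : N = 0
        · simp [hz]
        · have hca := (hN'.mp hz).1
          rw [mul_assoc, ← ypow_add_single, tsub_add_eq_add_tsub hca]
    refine ⟨N1 + N2, by rw [h1, h2]; push_cast; ring, ?_⟩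
    have hdeg : ∀ c : ℕ →₀ ℕ, c i ≠ 0 → c.degree = (c - Finsupp.single i 1).degree + 1 := by
      intro c hc
      have : c = (c - Finsupp.single i 1) + Finsupp.single i 1 := by
        ext l
        rcases eq_or_ne l i with rfl | hl
        · simp; omega
        · simp [Finsupp.single_eq_of_ne hl]
      conv_lhs => rw [this]
      simp
    have hN : N1 + N2 ≠ 0 ↔ N1 ≠ 0 ∨ N2 ≠ 0 := by omega
    rw [hN, h1', h2', map_add, Finsupp.degree_single]
    constructor
    · rintro (⟨hi, hle, hd⟩ | ⟨hn, hle, hd⟩)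
      · refine ⟨?_, by have := hdeg c hi; omega⟩
        exact tsub_le_iff_right.mp hle
      · exact ⟨hle.trans le_self_add, by omega⟩
    · rintro ⟨hle, hd⟩
      by_cases hi : c i ≤ a i
      · right
        have hca : c ≤ a := by
          intro l
          rcases eq_or_ne l i with rfl | hl
          · exact hi
          · simpa [Finsupp.single_eq_of_ne hl] using hle l
        have : c.degree ≤ a.degree := Finsupp.degree_mono hca
        exact ⟨by omega, hca, by omega⟩
      · left
        have := hdeg c (by omega)
        exact ⟨by omega, tsub_le_iff_right.mpr hle, by omega⟩

theorem expand_zero {K : Type*} [CommRing K] [Algebra ℚ K] (y : ℕ → K) {P : MvPolynomial ℕ ℚ}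
    {a b : ℕ →₀ ℕ} {k : ℕ} (hP : Lead P a)
    (hdeg : (aeval (lin (B := MvPolynomial ℕ K) X (fun i => C (y i))) P).natDegree ≤ k)
    (hba : b ≤ a) (hk : k < b.degree) (L : K →ₗ[ℚ] ℚ) (hL : L (ypow y b) ≠ 0)
    (hmin : ∀ b', L (ypow y b') ≠ 0 → b'.degree = b.degree → toLex b ≤ toLex b') : False := by
  classical
  have h0 : (aeval (lin (B := MvPolynomial ℕ K) X (fun i => C (y i))) P).coeff b.degree = 0 :=
    Polynomial.coeff_eq_zero_of_natDegree_lt (by omega)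
  have h1 : L (coeff (a - b) ((aeval (lin (B := MvPolynomial ℕ K) X (fun i => C (y i))) P).coeff
      b.degree)) = 0 := by rw [h0]; simp
  have hba' : a - b + b = a := tsub_add_cancel_of_le hba
  have hdg : a.degree = (a - b).degree + b.degree := by
    conv_lhs => rw [← hba']
    simp
  rw [P.as_sum, map_sum, Polynomial.finsetSum_coeff, coeff_sum, map_sum,
    Finset.sum_eq_single a] at h1
  · obtain ⟨N, hN, hN'⟩ := expand_monomial y a b.degree (a - b)
    rw [show monomial a (coeff a P) = (coeff a P) • monomial a (1 : ℚ) by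
      rw [smul_monomial, smul_eq_mul, mul_one], map_smul, Polynomial.coeff_smul, coeff_smul, hN,
      map_smul, tsub_tsub_cancel_of_le hba, ← nsmul_eq_mul, map_nsmul, smul_eq_mul,
      nsmul_eq_mul] at h1
    have hN0 : N ≠ 0 := hN'.mpr ⟨tsub_le_self, by omega⟩
    exact mul_ne_zero hP.1 (mul_ne_zero (Nat.cast_ne_zero.mpr hN0) hL) h1
  · intro a' ha' hne
    obtain ⟨N, hN, hN'⟩ := expand_monomial y a' b.degree (a - b)
    rw [show monomial a' (coeff a' P) = (coeff a' P) • monomial a' (1 : ℚ) by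
      rw [smul_monomial, smul_eq_mul, mul_one], map_smul, Polynomial.coeff_smul, coeff_smul, hN,
      map_smul, ← nsmul_eq_mul, map_nsmul]
    by_contra hcon
    have h2 := right_ne_zero_of_mul hcon
    rw [nsmul_eq_mul] at h2
    have hN0 : N ≠ 0 := Nat.cast_ne_zero.mp (left_ne_zero_of_mul h2)
    have hL' := right_ne_zero_of_mul h2
    obtain ⟨h3, h4⟩ := hN'.mp hN0
    have h5 : a - b + (a' - (a - b)) = a' := add_tsub_cancel_of_le h3
    have h6 : a'.degree = (a - b).degree + (a' - (a - b)).degree := by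
      conv_lhs => rw [← h5]
      simp
    have h7 := hmin _ hL' (by omega)
    have h8 := hP.2 a' (mem_support_iff.mp ha')
    have h9 : toLex a ≤ toLex a' := by
      rw [← h5, ← hba', toLex_add, toLex_add, hba']
      exact add_le_add_right h7 _
    exact hne (toLex_inj.mp (le_antisymm h8 h9))
  · intro h
    rw [notMem_support_iff.mp h]
    simp

/-- The type of a variable. -/
noncomputable def tyv (l : ℕ) : Fin 3 →₀ ℕ :=
  Finsupp.equivFunOnFinite.symm ![if Even l then 1 else 0, if Even l then 0 else 1, l / 2]

/-- The type of an exponent. -/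
noncomputable def ty (b : ℕ →₀ ℕ) : Fin 3 →₀ ℕ := b.sum fun l e => e • tyv l

theorem cur_generic (l : ℕ) : cur (X 0 : MvPolynomial (Fin 3) ℚ) (X 1) (X 2) l =
    monomial (tyv l) 1 := by
  rw [monomial_eq, Finsupp.prod_fintype _ _ (by simp), Fin.prod_univ_three]
  simp only [tyv, Finsupp.equivFunOnFinite_symm_apply_apply, cur]
  by_cases h : Even l <;> simp [h]

theorem ypow_generic (b : ℕ →₀ ℕ) : ypow (cur (X 0 : MvPolynomial (Fin 3) ℚ) (X 1) (X 2)) b =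
    monomial (ty b) 1 := by
  rw [ypow, ty, Finsupp.sum, monomial_sum_one, Finsupp.prod]
  apply Finset.prod_congr rfl
  intro l _
  rw [cur_generic, monomial_pow, one_pow]

theorem sum_ty (b : ℕ →₀ ℕ) (A : Fin 3 → ℤ) :
    (b.sum fun l e => (∑ i, A i * tyv l i) * (e : ℤ)) = ∑ i, A i * (ty b i : ℤ) := by
  simp only [ty, Finsupp.sum, Finsupp.finsetSum_apply, Finset.sum_mul]
  rw [Finset.sum_comm]
  apply Finset.sum_congr rfl
  intro i _
  push_cast
  rw [Finset.mul_sum]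
  apply Finset.sum_congr rfl
  intro l _
  simp
  ring

theorem lex_le_of_ty {i : ℕ} {b b' : ℕ →₀ ℕ} (hb : ∀ l, b l ≠ 0 → i ≤ l ∧ l ≤ i + 2)
    (h : ty b' = ty b) : toLex b ≤ toLex b' := by
  classical
  by_contra hcon
  rw [not_le, lexlt_iff] at hcon
  obtain ⟨j, hj, hlt⟩ := hcon
  have hji := hb j (by omega)
  -- the separating weight
  let A : Fin 3 → ℤ := if Even j then ![-((j / 2 : ℕ) : ℤ) - 1, -((j / 2 : ℕ) : ℤ), 1]
    else ![-((j / 2 : ℕ) : ℤ) - 1, -((j / 2 : ℕ) : ℤ) - 1, 1]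
  let g : ℕ → ℤ := fun l => ∑ i, A i * tyv l i
  have hg : ∀ l, g l = if Even j then
      ((l / 2 : ℕ) : ℤ) - ((j / 2 : ℕ) : ℤ) - (if Even l then 1 else 0)
      else ((l / 2 : ℕ) : ℤ) - ((j / 2 : ℕ) : ℤ) - 1 := by
    intro l
    simp only [g, Fin.sum_univ_three, tyv, Finsupp.equivFunOnFinite_symm_apply_apply, A]
    by_cases h1 : Even j <;> by_cases h2 : Even l <;> simp [h1, h2] <;> ring
  have hgj : g j = -1 := by
    rw [hg]; split_ifs <;> simp
  have hg0 : ∀ l, j < l → 0 ≤ g l := by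
    intro l hl
    rw [hg]
    split_ifs with h1 h2
    · rw [Nat.even_iff] at h1 h2; omega
    · rw [Nat.even_iff] at h1 h2; omega
    · rw [Nat.even_iff] at h1; omega
  have hg1 : ∀ l, j < l → l ≤ j + 2 → g l = 0 := by
    intro l hl hl'
    rw [hg]
    split_ifs with h1 h2
    · rw [Nat.even_iff] at h1 h2; omega
    · rw [Nat.even_iff] at h1 h2; omega
    · rw [Nat.even_iff] at h1; omega
  have e1 := sum_ty b A
  have e2 := sum_ty b' A
  rw [h, ← e1] at e2
  rw [Finsupp.sum_of_support_subset b' (s := b.support ∪ b'.support) Finset.subset_union_right _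
    (by simp), Finsupp.sum_of_support_subset b (s := b.support ∪ b'.support)
      Finset.subset_union_left _ (by simp)] at e2
  refine absurd e2.symm (ne_of_lt (Finset.sum_lt_sum ?_ ⟨j, ?_, ?_⟩))
  · intro l _
    change g l * _ ≤ g l * _
    rcases lt_trichotomy l j with hl | rfl | hl
    · rw [hj l hl]
    · rw [hgj]; omega
    · by_cases hbl : b l = 0
      · rw [hbl]
        have := hg0 l hl
        push_cast
        rw [mul_zero]
        positivity
      · rw [hg1 l hl (by have := hb l hbl; omega)]; simp
  · simp; omega
  · change g j * _ < g j * _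
    rw [hgj]; omega

theorem exists_le_degree (a : ℕ →₀ ℕ) : ∀ m, m ≤ a.degree → ∃ b ≤ a, b.degree = m := by
  intro m
  induction m with
  | zero => intro _; exact ⟨0, by simp, by simp⟩
  | succ m ih =>
    intro hm
    obtain ⟨b, hb, hd⟩ := ih (by omega)
    obtain ⟨i, hi⟩ : ∃ i, b i < a i := by
      by_contra hcon
      push Not at hcon
      have : a.degree ≤ b.degree := Finsupp.degree_mono hcon
      omega
    refine ⟨b + Finsupp.single i 1, ?_, by simp [hd]⟩
    intro l
    rcases eq_or_ne l i with rfl | hl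
    · simp; omega
    · simpa [Finsupp.single_eq_of_ne hl] using hb l

theorem exists_le_filter (a : ℕ →₀ ℕ) (S : Finset ℕ) (m : ℕ) (h : m ≤ ∑ i ∈ S, a i) :
    ∃ b ≤ a, (∀ l, b l ≠ 0 → l ∈ S) ∧ b.degree = m := by
  classical
  obtain ⟨b, hb, hd⟩ := exists_le_degree (a.filter (· ∈ S)) m (by
    refine h.trans (le_of_eq ?_)
    rw [Finsupp.degree_apply, Finsupp.support_filter, Finset.sum_filter]
    rw [← Finset.sum_subset (Finset.inter_subset_left : S ∩ a.support ⊆ S),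
      ← Finset.sum_filter, Finset.filter_mem_eq_inter, Finset.inter_comm]
    · apply Finset.sum_congr rfl
      intro l hl
      rw [Finsupp.filter_apply_pos]
      exact (Finset.mem_inter.mp hl).2
    · intro l hl hl'
      simp only [Finset.mem_inter, not_and, Finsupp.notMem_support_iff] at hl'
      exact hl' hl)
  refine ⟨b, fun l => (hb l).trans ?_, fun l hl => ?_, hd⟩
  · rw [Finsupp.filter_apply]; split_ifs <;> omega
  · by_contra hlS
    have := hb l
    rw [Finsupp.filter_apply_neg _ _ hlS] at this
    omega

theorem config_upper {k k01 k0 : ℕ} {P : MvPolynomial ℕ ℚ} (hP : Good k k01 k0 P) {a : ℕ →₀ ℕ}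
    (ha : Lead P a) :
    (∀ i, a i + a (i + 1) + a (i + 2) ≤ k) ∧ a 0 ≤ k0 ∧ a 0 + a 1 ≤ k01 := by
  have hC : ∀ α β x : MvPolynomial (Fin 3) ℚ, cur (C α) (C β) (C x) =
      fun i => (C (cur α β x i) : MvPolynomial ℕ (MvPolynomial (Fin 3) ℚ)) := by
    intro α β x
    funext i
    simp only [cur]
    split_ifs <;> simp
  have hnot : ∀ (y : ℕ → MvPolynomial (Fin 3) ℚ) (b : ℕ →₀ ℕ) (l : ℕ), y l = 0 → b l ≠ 0 →
      ypow y b = 0 := by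
    intro y b l hl hb
    rw [ypow, Finsupp.prod, Finset.prod_eq_zero (Finsupp.mem_support_iff.mpr hb)]
    rw [hl, zero_pow hb]
  refine ⟨fun i => ?_, ?_, ?_⟩
  · by_contra hcon
    obtain ⟨b, hba, hb, hd⟩ := exists_le_filter a {i, i + 1, i + 2} (k + 1) (by simp; omega)
    have h1 := (hP (MvPolynomial ℕ (MvPolynomial (Fin 3) ℚ)) X (C (X 0)) (C (X 1)) (C (X 2))).1
    rw [hC] at h1
    refine expand_zero _ ha h1 hba (by omega) (lcoeff ℚ (ty b)) ?_ ?_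
    · rw [ypow_generic]; simp [lcoeff_apply]
    · intro b' hb' _
      rw [ypow_generic, lcoeff_apply, coeff_monomial, ite_ne_right_iff] at hb'
      refine lex_le_of_ty (i := i) (fun l hl => ?_) hb'.1
      have := hb l hl
      simp at this
      omega
  · by_contra hcon
    obtain ⟨b, hba, hb, hd⟩ := exists_le_filter a {0} (k0 + 1) (by simp; omega)
    have h1 := (hP (MvPolynomial ℕ (MvPolynomial (Fin 3) ℚ)) X (C 1) 0 0).2.2
    have h2 := hC 1 0 0
    rw [map_zero] at h2
    rw [h2] at h1
    have hb0 : ∀ b' : ℕ →₀ ℕ, (∀ l, b' l ≠ 0 → l = 0) → b' = Finsupp.single 0 b'.degree := by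
      intro b' hb'
      have h3 : b' = Finsupp.single 0 (b' 0) := by
        ext l
        rcases eq_or_ne l 0 with rfl | hl
        · simp
        · rw [Finsupp.single_eq_of_ne hl]; by_contra hne; exact hl (hb' l hne)
      conv_rhs => rw [h3]
      rw [Finsupp.degree_single]; exact h3
    have hbb := hb0 b (fun l hl => by simpa using hb l hl)
    refine expand_zero _ ha h1 hba (by omega) (lcoeff ℚ 0) ?_ ?_
    · rw [hbb, ypow, Finsupp.prod_single_index (by simp)]
      simp [cur, lcoeff_apply]
    · intro b' hb' hd'
      have : b' = b := by
        rw [hbb, hb0 b', hd']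
        intro l hl
        by_contra hl0
        refine hb' ?_
        rw [hnot _ b' l _ hl, map_zero]
        simp only [cur]
        rcases Nat.even_or_odd l with h | h
        · have : l / 2 ≠ 0 := by rw [Nat.even_iff] at h; omega
          simp [this]
        · simp [Nat.not_even_iff_odd.mpr h]
      rw [this]
  · by_contra hcon
    obtain ⟨b, hba, hb, hd⟩ := exists_le_filter a {0, 1} (k01 + 1) (by simp; omega)
    have h1 := (hP (MvPolynomial ℕ (MvPolynomial (Fin 3) ℚ)) X (C (X 0)) (C (X 1)) (C 0)).2.1
    have h2 := hC (X 0) (X 1) 0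
    rw [map_zero] at h2
    rw [h2] at h1
    have hb0 : ∀ b' : ℕ →₀ ℕ, (∀ l, b' l ≠ 0 → l = 0 ∨ l = 1) →
        ypow (cur (X 0 : MvPolynomial (Fin 3) ℚ) (X 1) 0) b' =
        ypow (cur (X 0 : MvPolynomial (Fin 3) ℚ) (X 1) (X 2)) b' := by
      intro b' hb'
      unfold ypow
      apply Finset.prod_congr rfl
      intro l hl
      rcases hb' l (Finsupp.mem_support_iff.mp hl) with rfl | rfl <;> simp [cur]
    refine expand_zero _ ha h1 hba (by omega) (lcoeff ℚ (ty b)) ?_ ?_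
    · rw [hb0 b (fun l hl => by simpa using hb l hl), ypow_generic]; simp [lcoeff_apply]
    · intro b' hb' _
      rw [hb0 b', ypow_generic, lcoeff_apply, coeff_monomial, ite_ne_right_iff] at hb'
      · refine lex_le_of_ty (i := 0) (fun l hl => ?_) hb'.1
        have := hb l hl
        simp at this
        omega
      · intro l hl
        by_contra hl0
        refine hb' ?_
        rw [hnot _ b' l _ hl, map_zero]
        have : l / 2 ≠ 0 := by omega
        simp [cur, this]

end QPProof


set_option linter.unusedSectionVars false

namespace QPProof

open MvPolynomial OrderDual

/-! ### Functionals from clusters -/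

section PsiDef

variable {ι : Type} [Fintype ι] [LinearOrder ι] (col : ι → Bool)

/-- The ring of polynomials in positions of the clusters. -/
abbrev AX (ι : Type) := MvPolynomial ιᵒᵈ ℚ

/-- Position of a cluster. -/
noncomputable def xv (r : ι) : AX ι := X (toDual r)

/-- Point of the curve of a given colour. -/
def pt {B : Type*} [CommRing B] (c : Bool) (x : B) (i : ℕ) : B :=
  cur (if c then 0 else 1) (if c then 1 else 0) x i

/-- The cluster substitution. -/
noncomputable def Psi : MvPolynomial ℕ ℚ →ₐ[ℚ] MvPolynomial ι (AX ι) :=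
  aeval fun i => ∑ r, C (pt (col r) (xv r) i) * X r

theorem Psi_X (i : ℕ) : Psi col (X i) = ∑ r, C (pt (col r) (xv r) i) * X r := by
  simp [Psi]

/-- Possible exponents. -/
def Supp (w : ℕ × ℕ × ℕ) (ν : ι →₀ ℕ) (e : ιᵒᵈ →₀ ℕ) : Prop :=
  (∑ r, (if col r then 0 else ν r)) = w.1 ∧ (∑ r, (if col r then ν r else 0)) = w.2.1 ∧
  (∑ r, (ν r + e (toDual r))) = w.2.2 ∧ ∀ r, ν r = 0 → e (toDual r) = 0

theorem Supp.add {w w' : ℕ × ℕ × ℕ} {ν ν' : ι →₀ ℕ} {e e' : ιᵒᵈ →₀ ℕ} (h : Supp col w ν e)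
    (h' : Supp col w' ν' e') : Supp col (w + w') (ν + ν') (e + e') := by
  obtain ⟨h1, h2, h3, h4⟩ := h
  obtain ⟨g1, g2, g3, g4⟩ := h'
  refine ⟨?_, ?_, ?_, ?_⟩
  · rw [Prod.fst_add, ← h1, ← g1, ← Finset.sum_add_distrib]
    refine Finset.sum_congr rfl fun r _ => ?_
    split_ifs <;> simp
  · rw [Prod.snd_add, Prod.fst_add, ← h2, ← g2, ← Finset.sum_add_distrib]
    refine Finset.sum_congr rfl fun r _ => ?_
    split_ifs <;> simp
  · rw [Prod.snd_add, Prod.snd_add, ← h3, ← g3, ← Finset.sum_add_distrib]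
    refine Finset.sum_congr rfl fun r _ => ?_
    simp; ring
  · intro r hr
    simp only [Finsupp.add_apply, Nat.add_eq_zero_iff] at hr ⊢
    exact ⟨h4 r hr.1, g4 r hr.2⟩

/-- All exponents are possible. -/
def HasSupp (w : ℕ × ℕ × ℕ) (F : MvPolynomial ι (AX ι)) : Prop :=
  ∀ ν e, coeff e (coeff ν F) ≠ 0 → Supp col w ν e

theorem HasSupp.mul {w w' : ℕ × ℕ × ℕ} {F F' : MvPolynomial ι (AX ι)} (h : HasSupp col w F)
    (h' : HasSupp col w' F') : HasSupp col (w + w') (F * F') := by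
  intro ν e hne
  rw [coeff_mul, coeff_sum] at hne
  obtain ⟨⟨ν1, ν2⟩, hν, h1⟩ := Finset.exists_ne_zero_of_sum_ne_zero hne
  rw [coeff_mul] at h1
  obtain ⟨⟨e1, e2⟩, he, h2⟩ := Finset.exists_ne_zero_of_sum_ne_zero h1
  rw [Finset.HasAntidiagonal.mem_antidiagonal] at hν he
  rw [← hν, ← he]
  exact Supp.add col (h _ _ (left_ne_zero_of_mul h2)) (h' _ _ (right_ne_zero_of_mul h2))

theorem HasSupp.sum {w : ℕ × ℕ × ℕ} {κ : Type*} (s : Finset κ) {F : κ → MvPolynomial ι (AX ι)}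
    (h : ∀ i ∈ s, HasSupp col w (F i)) : HasSupp col w (∑ i ∈ s, F i) := by
  intro ν e hne
  rw [coeff_sum, coeff_sum] at hne
  obtain ⟨i, hi, h1⟩ := Finset.exists_ne_zero_of_sum_ne_zero hne
  exact h i hi _ _ h1

theorem hasSupp_Psi_X (i : ℕ) : HasSupp col (wt i) (Psi col (X i)) := by
  classical
  rw [Psi_X]
  refine HasSupp.sum col _ fun r _ => ?_
  intro ν e hne
  rw [coeff_C_mul, coeff_X, mul_ite, mul_one, mul_zero] at hne
  have hν : Finsupp.single r 1 = ν := by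
    by_contra h
    simp [h] at hne
  rw [if_pos hν, pt, cur, xv] at hne
  have hpar : (Even i ↔ col r = false) := by
    by_contra h
    apply hne
    by_cases h1 : Even i <;> cases h2 : col r <;> simp_all
  have he : e = Finsupp.single (toDual r) (i / 2) := by
    by_contra h
    apply hne
    rw [X_pow_eq_monomial]
    have : ∀ c : ℚ, coeff e (C c * monomial (Finsupp.single (toDual r) (i / 2)) (1 : ℚ)) = 0 := by
      intro c
      rw [coeff_C_mul, coeff_monomial, if_neg (fun hh => h hh.symm), mul_zero]
    split_ifs
    · simp
    · simpa using this 1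
    · simpa using this 1
    · simp
  subst hν he
  refine ⟨?_, ?_, ?_, ?_⟩
  · rw [Finset.sum_eq_single r]
    · cases h : col r <;> simp [wt, hpar, h]
    · intro s _ hs
      simp [Finsupp.single_eq_of_ne hs]
    · simp
  · rw [Finset.sum_eq_single r]
    · cases h : col r <;> simp [wt, ← Nat.not_even_iff_odd, hpar, h]
    · intro s _ hs
      simp [Finsupp.single_eq_of_ne hs]
    · simp
  · rw [Finset.sum_eq_single r]
    · simp [wt, add_comm]
    · intro s _ hs
      rw [Finsupp.single_eq_of_ne hs, Finsupp.single_eq_of_ne (fun h => hs (toDual.injective h)),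
        add_zero]
    · simp
  · intro s hs
    have : s ≠ r := by rintro rfl; simp at hs
    rw [Finsupp.single_eq_of_ne (fun h => this (toDual.injective h))]

theorem hasSupp_Psi {P : MvPolynomial ℕ ℚ} {w : ℕ × ℕ × ℕ} (hP : IsWeightedHomogeneous wt P w) :
    HasSupp col w (Psi col P) := by
  rw [P.as_sum, map_sum]
  refine HasSupp.sum col _ fun a ha => ?_
  rw [← hP (mem_support_iff.mp ha)]
  generalize coeff a P = c
  clear ha hP
  induction a using finsupp_nat_induction with
  | h0 =>
    intro ν e hne
    rw [show monomial (0 : ℕ →₀ ℕ) c = algebraMap ℚ _ c from rfl, AlgHom.commutes,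
      IsScalarTower.algebraMap_apply ℚ (AX ι), algebraMap_eq, coeff_C] at hne
    have hν : 0 = ν := by
      by_contra h
      simp [h] at hne
    rw [if_pos hν, algebraMap_eq, coeff_C] at hne
    have he : 0 = e := by
      by_contra h
      simp [h] at hne
    subst hν he
    simp [Supp]
  | h1 a i ih =>
    rw [show monomial (a + Finsupp.single i 1) c = monomial a c * X i by
        rw [X, monomial_mul, mul_one], map_mul, map_add, Finsupp.weight_single, one_smul]
    exact HasSupp.mul col ih (hasSupp_Psi_X col i)

/-- Symmetry. -/
theorem Psi_symm (π : Equiv.Perm ι) (hπ : ∀ r, col (π r) = col r) (P : MvPolynomial ℕ ℚ) :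
    rename π (map (rename (fun r => toDual (π (ofDual r)))).toRingHom (Psi col P)) =
      Psi col P := by
  have key : ((rename π : MvPolynomial ι (AX ι) →ₐ[AX ι] _).restrictScalars ℚ).comp
      ((mapAlgHom (rename (fun r => toDual (π (ofDual r))) : AX ι →ₐ[ℚ] AX ι)).comp (Psi col)) =
      Psi col := by
    apply algHom_ext
    intro i
    simp only [AlgHom.comp_apply, Psi_X, map_sum, map_mul, AlgHom.restrictScalars_apply]
    conv_rhs => rw [← Equiv.sum_comp π]
    refine Finset.sum_congr rfl fun r _ => ?_
    rw [mapAlgHom_apply, mapAlgHom_apply, map_C, map_X, rename_X, rename_C, hπ]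
    congr 2
    simp only [pt, cur, map_mul, map_pow, xv]
    cases col r <;> split_ifs <;> simp
  exact DFunLike.congr_fun key P

theorem coeff_symm (π : Equiv.Perm ι) (hπ : ∀ r, col (π r) = col r) (P : MvPolynomial ℕ ℚ)
    (ν : ι →₀ ℕ) : coeff (ν.mapDomain π) (Psi col P) =
      rename (fun r => toDual (π (ofDual r))) (coeff ν (Psi col P)) := by
  conv_lhs => rw [← Psi_symm col π hπ P]
  rw [coeff_rename_mapDomain _ π.injective, coeff_map]
  rfl

end PsiDef

end QPProof


set_option linter.unusedSectionVars false

namespace QPProof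

open MvPolynomial OrderDual

/-! ### Divisibility -/

theorem div_coeff {B : Type} [CommRing B] [Algebra ℚ B] {P : MvPolynomial ℕ ℚ} {k : ℕ}
    (u : ℕ → B)
    (hdeg : ∀ t : ℕ → Polynomial B,
      (aeval (lin t (fun i => Polynomial.C (u i))) P).natDegree ≤ k)
    (w v : ℕ → B) (h : B) (hv : ∀ i, h ∣ v i - u i) (N : ℕ) :
    h ^ (N - k) ∣ (aeval (lin w v) P).coeff N := by
  choose δ hδ using hv
  let F : Polynomial (Polynomial B) := aeval (lin (fun i => Polynomial.C (w i) +
    Polynomial.C (δ i) * Polynomial.X) (fun i => Polynomial.C (u i))) P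
  let φ₁ : Polynomial B →ₐ[ℚ] Polynomial B :=
    ((Polynomial.aeval (Polynomial.C h * Polynomial.X) : Polynomial B →ₐ[B] Polynomial B)).restrictScalars ℚ
  let φ : Polynomial (Polynomial B) →ₐ[ℚ] Polynomial B :=
    { Polynomial.eval₂RingHom φ₁.toRingHom Polynomial.X with
      commutes' := by
        intro r
        have : (algebraMap ℚ (Polynomial (Polynomial B)) r) =
          Polynomial.C (algebraMap ℚ (Polynomial B) r) := rfl
        rw [this]
        change Polynomial.eval₂ φ₁.toRingHom Polynomial.X _ = _
        rw [Polynomial.eval₂_C]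
        exact φ₁.commutes r }
  have hφ : ∀ G, φ G = G.eval₂ φ₁.toRingHom Polynomial.X := fun _ => rfl
  have hφ₁ : ∀ G, φ₁ G = G.comp (Polynomial.C h * Polynomial.X) := fun _ => rfl
  have hF : aeval (lin w v) P = φ F := by
    have : aeval (lin w v) = φ.comp (aeval (lin (fun i => Polynomial.C (w i) +
        Polynomial.C (δ i) * Polynomial.X) (fun i => Polynomial.C (u i)))) := by
      apply algHom_ext
      intro i
      rw [AlgHom.comp_apply, aeval_X, aeval_X, hφ, lin, lin, Polynomial.eval₂_add,
        Polynomial.eval₂_mul, Polynomial.eval₂_C, Polynomial.eval₂_C, Polynomial.eval₂_X]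
      change _ = φ₁ _ + φ₁ _ * _
      rw [hφ₁, hφ₁]
      simp only [Polynomial.add_comp, Polynomial.mul_comp, Polynomial.C_comp, Polynomial.X_comp]
      have h1 : v i = u i + h * δ i := by rw [← hδ]; ring
      rw [h1]
      simp only [map_add, map_mul]
      ring
    rw [this]; rfl
  rw [hF, hφ, Polynomial.eval₂_eq_sum_range' _ (lt_of_le_of_lt (hdeg _) (Nat.lt_succ_self k)),
    Polynomial.finsetSum_coeff]
  refine Finset.dvd_sum fun j hj => ?_
  rw [Finset.mem_range] at hj
  change _ ∣ (φ₁ _ * _).coeff N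
  rw [hφ₁, Polynomial.coeff_mul_X_pow']
  split_ifs with hjN
  · rw [Polynomial.comp_C_mul_X_coeff]
    exact (pow_dvd_pow h (by omega)).mul_left _
  · exact dvd_zero _

theorem cur_congr {B : Type*} [CommRing B] (α β x y : B) (i : ℕ) :
    y - x ∣ cur α β y i - cur α β x i := by
  rw [cur, cur, ← mul_sub]
  exact (sub_dvd_pow_sub_pow y x _).mul_left _

theorem cur_C {B : Type*} [CommRing B] (α β x : B) (i : ℕ) :
    cur (Polynomial.C α) (Polynomial.C β) (Polynomial.C x) i = Polynomial.C (cur α β x i) := by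
  simp only [cur, map_mul, map_pow]
  split_ifs <;> rfl

theorem cur_C0 {B : Type*} [CommRing B] (α β : B) (i : ℕ) :
    cur (Polynomial.C α) (Polynomial.C β) 0 i = Polynomial.C (cur α β 0 i) := by
  rw [← cur_C, map_zero]

theorem cur_C00 {B : Type*} [CommRing B] (α : B) (i : ℕ) :
    cur (Polynomial.C α) 0 0 i = Polynomial.C (cur α 0 0 i) := by
  rw [← cur_C, map_zero]

section

variable {ι : Type} [Fintype ι] [LinearOrder ι] (col : ι → Bool)

/-- Scaling of a set of clusters. -/
noncomputable def scal (S : Finset ι) :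
    MvPolynomial ι (AX ι) →ₐ[AX ι] Polynomial (MvPolynomial ι (AX ι)) :=
  aeval fun r => if r ∈ S then Polynomial.C (X r) * Polynomial.X else Polynomial.C (X r)

theorem scal_monomial (S : Finset ι) (ν : ι →₀ ℕ) (c : AX ι) :
    scal S (monomial ν c) = Polynomial.C (monomial ν c) * Polynomial.X ^ (∑ r ∈ S, ν r) := by
  induction ν using finsupp_nat_induction with
  | h0 =>
    rw [show monomial (0 : ι →₀ ℕ) c = algebraMap (AX ι) _ c from rfl, AlgHom.commutes]
    simp
  | h1 a i ih =>
    rw [show monomial (a + Finsupp.single i 1) c = monomial a c * X i by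
        rw [X, monomial_mul, mul_one], map_mul, ih, scal, aeval_X]
    simp only [Finsupp.add_apply, Finset.sum_add_distrib]
    have : ∑ r ∈ S, (Finsupp.single i 1 : ι →₀ ℕ) r = if i ∈ S then 1 else 0 := by
      simp [Finsupp.single_apply]
    rw [this]
    split_ifs
    · rw [map_mul]; ring
    · rw [map_mul]; ring

theorem coeff_scal (S : Finset ι) (F : MvPolynomial ι (AX ι)) (ν : ι →₀ ℕ) :
    coeff ν ((scal S F).coeff (∑ r ∈ S, ν r)) = coeff ν F := by
  induction F using MvPolynomial.induction_on' with
  | monomial a c =>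
    rw [scal_monomial, Polynomial.coeff_C_mul, Polynomial.coeff_X_pow]
    split_ifs with h
    · simp
    · rw [mul_zero, coeff_zero, coeff_monomial, if_neg]
      rintro rfl
      exact h rfl
  | add p q hp hq => rw [map_add, Polynomial.coeff_add, coeff_add, hp, hq, coeff_add]

theorem dvd_coeff_of {P : MvPolynomial ℕ ℚ} {k : ℕ} (S : Finset ι)
    (u : ℕ → MvPolynomial ι (AX ι))
    (hdeg : ∀ t : ℕ → Polynomial (MvPolynomial ι (AX ι)),
      (aeval (lin t (fun i => Polynomial.C (u i))) P).natDegree ≤ k)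
    (h : AX ι) (hu : ∀ i, C h ∣ ∑ r ∈ S, C (pt (col r) (xv r) i) * X r - u i) (ν : ι →₀ ℕ) :
    h ^ (∑ r ∈ S, ν r - k) ∣ coeff ν (Psi col P) := by
  have key : ((scal S).restrictScalars ℚ).comp (Psi col) =
      aeval (lin (fun i => ∑ r ∈ Sᶜ, C (pt (col r) (xv r) i) * X r)
        (fun i => ∑ r ∈ S, C (pt (col r) (xv r) i) * X r)) := by
    apply algHom_ext
    intro i
    rw [AlgHom.comp_apply, Psi_X, aeval_X, lin, map_sum, ← Finset.sum_add_sum_compl S, map_sum,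
      map_sum, Finset.sum_mul, add_comm]
    congr 1
    · refine Finset.sum_congr rfl fun r hr => ?_
      rw [map_mul, AlgHom.restrictScalars_apply, AlgHom.restrictScalars_apply, ← algebraMap_eq,
        AlgHom.commutes, scal, aeval_X, if_neg (Finset.mem_compl.mp hr), map_mul]
      rfl
    · refine Finset.sum_congr rfl fun r hr => ?_
      rw [map_mul, AlgHom.restrictScalars_apply, AlgHom.restrictScalars_apply, ← algebraMap_eq,
        AlgHom.commutes, scal, aeval_X, if_pos hr, map_mul, mul_assoc]
      rfl
  have h1 := div_coeff u hdeg (fun i => ∑ r ∈ Sᶜ, C (pt (col r) (xv r) i) * X r)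
    (fun i => ∑ r ∈ S, C (pt (col r) (xv r) i) * X r) (C h) hu (∑ r ∈ S, ν r)
  rw [← key] at h1
  obtain ⟨q, hq⟩ := h1
  rw [← coeff_scal S]
  change _ ∣ coeff ν (((((scal S).restrictScalars ℚ).comp (Psi col)) P).coeff _)
  rw [hq, ← C_pow, coeff_C_mul]
  exact dvd_mul_right _ _

theorem pt_C_mul (c : Bool) (x : AX ι) (i : ℕ) (y : MvPolynomial ι (AX ι)) :
    C (pt c x i) * y = cur (if c then 0 else y) (if c then y else 0) (C x) i := by
  simp only [pt, cur]
  cases c <;> split_ifs <;> simp_all [mul_comm]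

variable {k k01 k0 : ℕ} {P : MvPolynomial ℕ ℚ}

theorem le_k (hP : Good k k01 k0 P) (ν : ι →₀ ℕ)
    (r : ι) (hν : coeff ν (Psi col P) ≠ 0) : ν r ≤ k := by
  by_contra hcon
  have := dvd_coeff_of (k := k) (P := P) col {r} (fun i => C (pt (col r) (xv r) i) * X r)
    (fun t => by
      have h := (hP _ t (Polynomial.C (if col r then 0 else X r))
        (Polynomial.C (if col r then X r else 0)) (Polynomial.C (C (xv r)))).1
      refine (congrArg (fun v => (aeval (lin t v) P).natDegree) (funext fun i => ?_)).trans_le h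
      rw [cur_C, pt_C_mul]) 0 (by intro i; simp) ν
  rw [Finset.sum_singleton, zero_pow (by omega), zero_dvd_iff] at this
  exact hν this

theorem dvd_pos (hP : Good k k01 k0 P) (ν : ι →₀ ℕ)
    (r : ι) : xv r ^ (ν r - if col r then k01 else k0) ∣ coeff ν (Psi col P) := by
  have := dvd_coeff_of (k := if col r then k01 else k0) (P := P) col {r}
    (fun i => cur (if col r then 0 else X r) (if col r then X r else 0) 0 i)
    (fun t => by
      by_cases h1 : col r
      · have h := (hP _ t (Polynomial.C 0) (Polynomial.C (X r : MvPolynomial ι (AX ι))) 0).2.1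
        simp only [h1, if_true]
        refine (congrArg (fun v => (aeval (lin t v) P).natDegree) (funext fun i => ?_)).trans_le h
        rw [cur_C0]
      · have h := (hP _ t (Polynomial.C (X r : MvPolynomial ι (AX ι))) 0 0).2.2
        simp only [h1]
        refine (congrArg (fun v => (aeval (lin t v) P).natDegree) (funext fun i => ?_)).trans_le h
        rw [cur_C00]; simp) (xv r) (by
      intro i
      rw [Finset.sum_singleton, pt_C_mul]
      have := cur_congr (if col r then 0 else X r) (if col r then X r else 0) 0
        (C (xv r) : MvPolynomial ι (AX ι)) i
      rwa [sub_zero] at this) ν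
  rwa [Finset.sum_singleton] at this

theorem dvd_pair (hP : Good k k01 k0 P) (ν : ι →₀ ℕ)
    (r s : ι) (hrs : r ≠ s) :
    (xv r - xv s) ^ (ν r + ν s - k) ∣ coeff ν (Psi col P) := by
  have := dvd_coeff_of (k := k) (P := P) col {r, s}
    (fun i => cur ((if col r then 0 else X r) + (if col s then 0 else X s))
      ((if col r then X r else 0) + (if col s then X s else 0)) (C (xv s)) i)
    (fun t => by
      have h := (hP _ t (Polynomial.C ((if col r then 0 else X r) + (if col s then 0 else X s)))
        (Polynomial.C ((if col r then X r else 0) + (if col s then X s else 0)))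
        (Polynomial.C (C (xv s) : MvPolynomial ι (AX ι)))).1
      refine (congrArg (fun v => (aeval (lin t v) P).natDegree) (funext fun i => ?_)).trans_le h
      rw [cur_C]) (xv r - xv s) (by
      intro i
      rw [Finset.sum_pair hrs, pt_C_mul, pt_C_mul]
      have := cur_congr (if col r then 0 else X r) (if col r then X r else 0) (C (xv s))
        (C (xv r) : MvPolynomial ι (AX ι)) i
      rw [C_sub]
      convert this using 1
      simp only [cur]
      split_ifs <;> ring) ν
  rwa [Finset.sum_pair hrs] at this

end

end QPProof


set_option linter.unusedSectionVars false

namespace QPProof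

open MvPolynomial OrderDual

theorem dvd_coeff_zero {A : Type*} [CommRing A] (H : A) (m : ℕ) (w : Polynomial A)
    (h : ∀ N, H ^ N ∣ (((1 - Polynomial.X) * Polynomial.X) ^ m * w).coeff N) :
    H ^ (2 * m) ∣ w.coeff 0 := by
  let I := Ideal.span {H ^ (2 * m)}
  let φ := Ideal.Quotient.mk I
  rw [← Ideal.mem_span_singleton, ← Ideal.Quotient.eq_zero_iff_mem]
  change φ _ = 0
  rw [← Polynomial.coeff_map]
  have hz : ∀ N, 2 * m ≤ N →
      (((1 - Polynomial.X) * Polynomial.X) ^ m * w.map φ).coeff N = 0 := by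
    intro N hN
    have h1 : ((1 - Polynomial.X) * Polynomial.X) ^ m * w.map φ =
      ((((1 - Polynomial.X) * Polynomial.X) ^ m * w)).map φ := by
      simp
    rw [h1, Polynomial.coeff_map]
    change Ideal.Quotient.mk I _ = 0
    rw [Ideal.Quotient.eq_zero_iff_mem, Ideal.mem_span_singleton]
    exact (pow_dvd_pow H hN).trans (h N)
  generalize w.map φ = w' at hz
  by_cases hw : w' = 0
  · simp [hw]
  exfalso
  let q : Polynomial (A ⧸ I) := Polynomial.X ^ 2 - Polynomial.X
  have hnt : Nontrivial (A ⧸ I) := by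
    by_contra hcon
    rw [not_nontrivial_iff_subsingleton] at hcon
    exact hw (Subsingleton.elim _ _)
  have hq : q.Monic := by
    apply Polynomial.monic_X_pow_sub
    rw [Polynomial.degree_X]
    norm_num
  have hqd : q.natDegree = 2 := by
    rw [Polynomial.natDegree_sub_eq_left_of_natDegree_lt] <;> simp
  have h2 : ((1 - Polynomial.X) * Polynomial.X) ^ m * w' = (-1) ^ m * (q ^ m * w') := by
    rw [← mul_assoc, ← mul_pow]
    congr 2
    simp only [q]; ring
  have h3 := hz (2 * m + w'.natDegree) (by omega)
  have h4 : (q ^ m * w').natDegree = 2 * m + w'.natDegree := by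
    rw [(hq.pow m).natDegree_mul' hw, hq.natDegree_pow, hqd, mul_comm]
  have h5 : (q ^ m * w') ≠ 0 := by
    intro h
    exact hw (by simpa [(hq.pow m).mul_right_eq_zero_iff] using h)
  rw [h2, ← h4] at h3
  have h6 : ((-1 : Polynomial (A ⧸ I)) ^ m) = Polynomial.C ((-1) ^ m) := by simp
  rw [h6, Polynomial.coeff_C_mul] at h3
  have h7 : (q ^ m * w').leadingCoeff = 0 := by
    rcases neg_one_pow_eq_or (A ⧸ I) m with h | h <;> rw [h] at h3 <;> simpa using h3
  exact h5 (Polynomial.leadingCoeff_eq_zero.mp h7)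

theorem natDegree_aeval_C {B : Type*} [CommRing B] [Algebra ℚ B] (t : ℕ → B)
    (P : MvPolynomial ℕ ℚ) : (aeval (fun i => Polynomial.C (t i)) P).natDegree = 0 := by
  have h : (Polynomial.CAlgHom : B →ₐ[ℚ] Polynomial B).comp (aeval t) =
      aeval (fun i => Polynomial.C (t i)) := by
    apply algHom_ext; intro i; simp
  rw [← h, AlgHom.comp_apply, Polynomial.CAlgHom_apply, Polynomial.natDegree_C]

section

variable {ι : Type} [Fintype ι] [LinearOrder ι] (col : ι → Bool)

theorem swap_col {s s' : ι} (hc : col s = col s') (r : ι) : col (Equiv.swap s s' r) = col r := by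
  rcases eq_or_ne r s with rfl | h1
  · simp [hc]
  · rcases eq_or_ne r s' with rfl | h2
    · simp [hc]
    · rw [Equiv.swap_apply_of_ne_of_ne h1 h2]

theorem lead_swap_le {P : MvPolynomial ℕ ℚ} {ν a : ι →₀ ℕ} (hν : Lead (Psi col P) ν)
    {s s' : ι} (hc : col s = col s') (ha : coeff a (Psi col P) ≠ 0)
    (h : ∀ r, r < s → r < s' → a r = ν r) (hs : s < s') : a s' ≤ ν s := by
  by_contra hcon
  have h1 := coeff_symm col (Equiv.swap s s') (swap_col col hc) P a
  have h2 : coeff (a.mapDomain (Equiv.swap s s')) (Psi col P) ≠ 0 := by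
    rw [h1]
    intro h0
    refine ha (rename_injective _ ?_ (h0.trans (map_zero _).symm))
    intro x y hxy
    simpa using hxy
  have h3 := hν.2 _ h2
  refine absurd h3 (not_le.mpr ?_)
  rw [lexlt_iff]
  have hm : ∀ r, a.mapDomain (Equiv.swap s s') r = a (Equiv.swap s s' r) := by
    intro r
    conv_lhs => rw [show r = Equiv.swap s s' (Equiv.swap s s' r) by simp]
    rw [Finsupp.mapDomain_apply (Equiv.swap s s').injective]
  refine ⟨s, fun r hr => ?_, ?_⟩
  · rw [hm, Equiv.swap_apply_of_ne_of_ne hr.ne (hr.trans hs).ne, h r hr (hr.trans hs)]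
  · rw [hm, Equiv.swap_apply_left]; omega

theorem lead_anti {P : MvPolynomial ℕ ℚ} {ν : ι →₀ ℕ} (hν : Lead (Psi col P) ν)
    {s s' : ι} (hc : col s = col s') (hs : s < s') : ν s' ≤ ν s :=
  lead_swap_le col hν hc hν.1 (fun _ _ _ => rfl) hs

/-- Specialisation of two clusters. -/
noncomputable def spec (s s' : ι) :
    MvPolynomial ι (AX ι) →ₐ[AX ι] Polynomial (MvPolynomial ι (AX ι)) :=
  aeval fun r => if r = s then 1 - Polynomial.X else if r = s' then Polynomial.X else
    Polynomial.C (X r)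

/-- Removing two clusters. -/
noncomputable def rem (s s' : ι) (a : ι →₀ ℕ) : ι →₀ ℕ := (a.erase s).erase s'

theorem rem_apply (s s' : ι) (a : ι →₀ ℕ) (r : ι) :
    rem s s' a r = if r = s then 0 else if r = s' then 0 else a r := by
  rw [rem, Finsupp.erase_apply, Finsupp.erase_apply]
  split_ifs <;> rfl

theorem spec_monomial {s s' : ι} (hs : s ≠ s') (a : ι →₀ ℕ) (c : AX ι) :
    spec s s' (monomial a c) = Polynomial.C (monomial (rem s s' a) c) *
      ((1 - Polynomial.X) ^ a s * Polynomial.X ^ a s') := by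
  induction a using finsupp_nat_induction with
  | h0 =>
    rw [show monomial (0 : ι →₀ ℕ) c = algebraMap (AX ι) _ c from rfl, AlgHom.commutes]
    simp [rem]
  | h1 a i ih =>
    rw [show monomial (a + Finsupp.single i 1) c = monomial a c * X i by
        rw [X, monomial_mul, mul_one], map_mul, ih, spec, aeval_X]
    split_ifs with h1 h2
    · subst h1
      have : rem i s' (a + Finsupp.single i 1) = rem i s' a := by
        ext r
        rw [rem_apply, rem_apply]
        split_ifs <;> simp_all
      rw [this]
      simp only [Finsupp.add_apply, Finsupp.single_eq_same, Finsupp.single_eq_of_ne hs.symm]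
      ring
    · subst h2
      have : rem s i (a + Finsupp.single i 1) = rem s i a := by
        ext r
        rw [rem_apply, rem_apply]
        split_ifs <;> simp_all
      rw [this]
      simp only [Finsupp.add_apply, Finsupp.single_eq_same, Finsupp.single_eq_of_ne hs]
      ring
    · have : rem s s' (a + Finsupp.single i 1) = rem s s' a + Finsupp.single i 1 := by
        ext r
        rw [Finsupp.add_apply, rem_apply, rem_apply]
        split_ifs with h3 h4
        · subst h3; rw [Finsupp.single_eq_of_ne (Ne.symm h1), add_zero]
        · subst h4; rw [Finsupp.single_eq_of_ne (Ne.symm h2), add_zero]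
        · simp
      rw [this, show monomial (rem s s' a + Finsupp.single i 1) c =
        monomial (rem s s' a) c * X i by rw [X, monomial_mul, mul_one], map_mul]
      simp only [Finsupp.add_apply, Finsupp.single_eq_of_ne (Ne.symm h1),
        Finsupp.single_eq_of_ne (Ne.symm h2), add_zero]
      ring

theorem coeff_spec {s s' : ι} (hs : s ≠ s') (F : MvPolynomial ι (AX ι)) (κ : ι →₀ ℕ) (N : ℕ) :
    coeff κ ((spec s s' F).coeff N) = (∑ a ∈ F.support with rem s s' a = κ,
      Polynomial.C (coeff a F) * ((1 - Polynomial.X) ^ a s * Polynomial.X ^ a s')).coeff N := by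
  conv_lhs => rw [F.as_sum]
  rw [map_sum, Polynomial.finsetSum_coeff, coeff_sum, Polynomial.finsetSum_coeff,
    Finset.sum_filter]
  refine Finset.sum_congr rfl fun a _ => ?_
  have h1 : ((1 - Polynomial.X) ^ a s * Polynomial.X ^ a s' :
      Polynomial (MvPolynomial ι (AX ι))) =
      ((1 - Polynomial.X) ^ a s * Polynomial.X ^ a s' : Polynomial (AX ι)).map C := by
    simp
  rw [spec_monomial hs, Polynomial.coeff_C_mul, h1, Polynomial.coeff_map, mul_comm, coeff_C_mul,
    coeff_monomial, Polynomial.coeff_C_mul]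
  split_ifs
  · ring
  · simp

theorem dvd_same {P : MvPolynomial ℕ ℚ} {w : ℕ × ℕ × ℕ} (hw : IsWeightedHomogeneous wt P w)
    {ν : ι →₀ ℕ} (hν : Lead (Psi col P) ν) {s s' : ι} (hc : col s = col s') (hs : s < s') :
    (xv s' - xv s) ^ (2 * ν s') ∣ coeff ν (Psi col P) := by
  classical
  have key : ((spec s s').restrictScalars ℚ).comp (Psi col) =
      aeval (lin (fun i => ∑ r ∈ {s, s'}ᶜ, C (pt (col r) (xv r) i) * X r + C (pt (col s) (xv s) i))
        (fun i => C (pt (col s') (xv s') i - pt (col s) (xv s) i))) := by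
    apply algHom_ext
    intro i
    rw [AlgHom.comp_apply, Psi_X, aeval_X, lin, ← Finset.sum_add_sum_compl {s, s'},
      Finset.sum_pair hs.ne, map_add, map_add, map_mul, map_mul, map_sum, map_add, map_sum]
    have h1 : ∀ r, ((spec s s').restrictScalars ℚ) (C (pt (col r) (xv r) i)) =
        Polynomial.C (C (pt (col r) (xv r) i)) := by
      intro r
      rw [AlgHom.restrictScalars_apply, ← algebraMap_eq, AlgHom.commutes]
      rfl
    have h2 : ∑ r ∈ ({s, s'} : Finset ι)ᶜ, ((spec s s').restrictScalars ℚ)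
        (C (pt (col r) (xv r) i) * X r) =
        ∑ r ∈ ({s, s'} : Finset ι)ᶜ, Polynomial.C (C (pt (col r) (xv r) i) * X r) := by
      refine Finset.sum_congr rfl fun r hr => ?_
      simp only [Finset.mem_compl, Finset.mem_insert, Finset.mem_singleton, not_or] at hr
      rw [map_mul, h1, AlgHom.restrictScalars_apply, spec, aeval_X, if_neg hr.1, if_neg hr.2,
        map_mul]
    rw [h2, h1, h1, AlgHom.restrictScalars_apply, AlgHom.restrictScalars_apply, spec, aeval_X,
      aeval_X, if_pos rfl, if_neg hs.ne', if_pos rfl, C_sub, map_sub]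
    ring
  have hdiv : ∀ N, (xv s' - xv s) ^ N ∣
      coeff (rem s s' ν) ((spec s s' (Psi col P)).coeff N) := by
    intro N
    have h1 := div_coeff (B := MvPolynomial ι (AX ι)) (P := P) (k := 0) (fun _ => 0) (fun t => by
      have : (lin t fun _ => Polynomial.C (0 : MvPolynomial ι (AX ι))) =
          fun i => Polynomial.C (t i) := by
        funext i; simp [lin]
      rw [this]
      exact (natDegree_aeval_C t P).le)
      (fun i => ∑ r ∈ {s, s'}ᶜ, C (pt (col r) (xv r) i) * X r + C (pt (col s) (xv s) i))
      (fun i => C (pt (col s') (xv s') i - pt (col s) (xv s) i)) (C (xv s' - xv s)) (by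
        intro i
        rw [sub_zero]
        apply map_dvd
        rw [hc]
        exact cur_congr _ _ _ _ _) N
    rw [← key, Nat.sub_zero] at h1
    obtain ⟨q, hq⟩ := h1
    change _ ∣ coeff _ (((((spec s s').restrictScalars ℚ).comp (Psi col)) P).coeff _)
    rw [hq, ← C_pow, coeff_C_mul]
    exact dvd_mul_right _ _
  -- the exponents which occur
  have hocc : ∀ a ∈ {a ∈ (Psi col P).support | rem s s' a = rem s s' ν},
      (∀ r, r ≠ s → r ≠ s' → a r = ν r) ∧ a s + a s' = ν s + ν s' ∧ ν s' ≤ a s ∧ ν s' ≤ a s' := by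
    intro a ha
    rw [Finset.mem_filter, mem_support_iff] at ha
    have h1 : ∀ r, r ≠ s → r ≠ s' → a r = ν r := by
      intro r h1 h2
      have := DFunLike.congr_fun ha.2 r
      simpa [rem_apply, h1, h2] using this
    have h2 : a s ≤ ν s := by
      by_contra hcon
      refine absurd (hν.2 a ha.1) (not_le.mpr ?_)
      rw [lexlt_iff]
      exact ⟨s, fun r hr => (h1 r hr.ne (hr.trans hs).ne).symm, by omega⟩
    have h3 : a s' ≤ ν s := lead_swap_le col hν hc ha.1 (fun r hr hr' => h1 r hr.ne hr'.ne) hs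
    have h4 : a s + a s' = ν s + ν s' := by
      obtain ⟨e, he⟩ := ne_zero_iff.mp ha.1
      obtain ⟨e', he'⟩ := ne_zero_iff.mp hν.1
      have g := hasSupp_Psi col hw a e he
      have g' := hasSupp_Psi col hw ν e' he'
      have hg : ∑ r, (if col r = col s then a r else 0) = ∑ r, (if col r = col s then ν r else 0) := by
        cases hcs : col s
        · have := g.1.trans g'.1.symm
          convert this using 2
          · rename_i r _; cases col r <;> simp
          · rename_i r _; cases col r <;> simp
        · have := g.2.1.trans g'.2.1.symm
          convert this using 2
      rw [← Finset.sum_add_sum_compl {s, s'}, Finset.sum_pair hs.ne,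
        ← Finset.sum_add_sum_compl {s, s'} (fun r => if col r = col s then ν r else 0),
        Finset.sum_pair hs.ne, if_pos rfl, if_pos rfl, if_pos hc.symm, if_pos hc.symm] at hg
      have : ∑ r ∈ ({s, s'} : Finset ι)ᶜ, (if col r = col s then a r else 0) =
          ∑ r ∈ ({s, s'} : Finset ι)ᶜ, (if col r = col s then ν r else 0) := by
        refine Finset.sum_congr rfl fun r hr => ?_
        simp only [Finset.mem_compl, Finset.mem_insert, Finset.mem_singleton, not_or] at hr
        rw [h1 r hr.1 hr.2]
      omega
    exact ⟨h1, h4, by omega, by omega⟩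
  let W : Polynomial (AX ι) := ∑ a ∈ (Psi col P).support with rem s s' a = rem s s' ν,
    Polynomial.C (coeff a (Psi col P)) *
      ((1 - Polynomial.X) ^ (a s - ν s') * Polynomial.X ^ (a s' - ν s'))
  have hW0 : W.coeff 0 = coeff ν (Psi col P) := by
    rw [Polynomial.finsetSum_coeff, Finset.sum_eq_single ν]
    · rw [Polynomial.coeff_zero_eq_eval_zero]; simp
    · intro a ha hne
      have h1 := hocc a ha
      have : a s' - ν s' ≠ 0 := by
        intro h0
        apply hne
        ext r
        by_cases hr : r = s
        · subst hr; omega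
        · by_cases hr' : r = s'
          · subst hr'; omega
          · exact h1.1 r hr hr'
      rw [Polynomial.coeff_zero_eq_eval_zero]; simp [this]
    · intro h
      exfalso
      apply h
      rw [Finset.mem_filter, mem_support_iff]
      exact ⟨hν.1, rfl⟩
  rw [← hW0]
  apply dvd_coeff_zero
  intro N
  have h1 := hdiv N
  rw [coeff_spec hs.ne] at h1
  refine h1.trans (dvd_of_eq (congrArg (fun p => Polynomial.coeff p N) ?_))
  rw [Finset.mul_sum]
  symm
  refine Finset.sum_congr rfl fun a ha => ?_
  obtain ⟨-, -, h2, h3⟩ := hocc a ha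
  conv_rhs => rw [← Nat.sub_add_cancel h2, ← Nat.sub_add_cancel h3, pow_add, pow_add]
  rw [mul_pow]
  ring

end

end QPProof


set_option linter.unusedSectionVars false

namespace QPProof

open MvPolynomial OrderDual

section

variable {ι : Type} [Fintype ι] [LinearOrder ι] (col : ι → Bool)

/-- The linear factors with top variable `r`. -/
noncomputable def lf (r : ι) : Option ι → AX ι
  | none => xv r
  | some s => xv r - xv s

theorem coeff_lf (r : ι) (o : Option ι) (ho : ∀ s ∈ o, s < r) :
    coeff (Finsupp.single (toDual r) 1) (lf r o) = 1 := by
  classical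
  cases o with
  | none => simp [lf, xv]
  | some s =>
    have := (ho s rfl).ne
    have h2 : Finsupp.single (toDual s) 1 ≠ (Finsupp.single (toDual r) 1 : ιᵒᵈ →₀ ℕ) := by
      intro h
      exact this (toDual.injective (Finsupp.single_left_injective one_ne_zero h))
    simp [lf, xv, coeff_X, h2]

theorem lead_lf (r : ι) (o : Option ι) (ho : ∀ s ∈ o, s < r) :
    Lead (lf r o) (Finsupp.single (toDual r) 1) := by
  classical
  refine ⟨by rw [coeff_lf r o ho]; exact one_ne_zero, fun ν' h => ?_⟩
  cases o with
  | none =>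
    simp only [lf, xv, coeff_X, ite_ne_right_iff] at h
    rw [h.1]
  | some s =>
    simp only [lf, xv, coeff_sub, coeff_X] at h
    by_cases h1 : Finsupp.single (toDual r) 1 = ν'
    · rw [h1]
    · by_cases h2 : Finsupp.single (toDual s) 1 = ν'
      · rw [← h2]
        apply le_of_lt
        rw [lexlt_iff]
        have hs := ho s rfl
        refine ⟨toDual r, fun j hj => ?_, ?_⟩
        · rw [Finsupp.single_eq_of_ne hj.ne,
            Finsupp.single_eq_of_ne (hj.trans (toDual_lt_toDual.mpr hs)).ne]
        · rw [Finsupp.single_eq_same, Finsupp.single_eq_of_ne]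
          · exact one_pos
          · exact fun h => hs.ne' (toDual.injective h)
      · simp [h1, h2] at h

theorem irreducible_lf (r : ι) (o : Option ι) (ho : ∀ s ∈ o, s < r) : Irreducible (lf r o) := by
  classical
  apply irreducible_of_totalDegree_eq_one
  · apply le_antisymm
    · cases o with
      | none => simp [lf, xv]
      | some s =>
        refine (totalDegree_sub _ _).trans ?_
        simp [xv]
    · have := le_totalDegree (p := lf r o) (s := Finsupp.single (toDual r) 1)
        (by rw [mem_support_iff, coeff_lf r o ho]; exact one_ne_zero)
      simpa using this
  · intro x hx
    have := hx (Finsupp.single (toDual r) 1)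
    rw [coeff_lf r o ho] at this
    exact isUnit_of_dvd_one this

theorem not_dvd_lf (r : ι) (o o' : Option ι) (ho : ∀ s ∈ o, s < r) (ho' : ∀ s ∈ o', s < r)
    (hne : o ≠ o') : ¬ lf r o ∣ lf r o' := by
  classical
  rintro ⟨q, hq⟩
  cases o with
  | none =>
    cases o' with
    | none => exact hne rfl
    | some s =>
      have hs := (ho' s rfl).ne'
      have := congrArg (eval (fun i => if i = toDual r then (0 : ℚ) else 1)) hq
      have h2 : toDual s ≠ toDual r := fun h => hs (toDual.injective h).symm
      simp [lf, xv, h2] at this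
  | some s =>
    have hs := (ho s rfl).ne'
    have h2 : toDual s ≠ toDual r := fun h => hs (toDual.injective h).symm
    have := congrArg (eval (fun i => if i = toDual r ∨ i = toDual s then (1 : ℚ) else 0)) hq
    cases o' with
    | none => simp [lf, xv] at this
    | some s' =>
      have hs' := (ho' s' rfl).ne'
      have h3 : toDual s' ≠ toDual r := fun h => hs' (toDual.injective h).symm
      have h4 : toDual s' ≠ toDual s := fun h => hne (congrArg some (toDual.injective h).symm)
      simp [lf, xv, h3, h4] at this

theorem base_le {G : AX ι} {e : ιᵒᵈ →₀ ℕ} (he : Lead G e) (r : ι) (b : Option ι → ℕ)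
    (h : ∀ o, (∀ s ∈ o, s < r) → lf r o ^ b o ∣ G) :
    b none + ∑ s with s < r, b (some s) ≤ e (toDual r) := by
  classical
  let T : Finset (Option ι) := Finset.insertNone (Finset.univ.filter (· < r))
  have hT : ∀ o ∈ T, ∀ s ∈ o, s < r := by
    intro o ho s hs
    have := Finset.mem_insertNone.mp ho s hs
    simpa using this
  have h1 : ∏ o ∈ T, lf r o ^ b o ∣ G := by
    apply Finset.prod_dvd_of_isRelPrime
    · intro o ho o' ho' hne
      apply IsRelPrime.pow
      rw [(irreducible_lf r o (hT o ho)).isRelPrime_iff_not_dvd]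
      exact not_dvd_lf r o o' (hT o ho) (hT o' ho') hne
    · intro o ho
      exact h o (hT o ho)
  obtain ⟨g, hg⟩ := h1
  have hl : Lead (∏ o ∈ T, lf r o ^ b o) (∑ o ∈ T, Finsupp.single (toDual r) (b o)) := by
    apply lead_prod
    intro o ho
    have := lead_prod (Finset.range (b o)) (fun _ => lf r o) (fun _ => Finsupp.single (toDual r) 1)
      (fun _ _ => lead_lf r o (hT o ho))
    simpa using this
  have hg0 : g ≠ 0 := by
    rintro rfl
    rw [mul_zero] at hg
    exact he.1 (by rw [hg]; simp)
  obtain ⟨e', he'⟩ := exists_lead hg0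
  have h2 := hl.mul he'
  rw [← hg] at h2
  have h3 : e = _ := toLex_inj.mp (le_antisymm (h2.2 _ he.1) (he.2 _ h2.1))
  rw [h3, Finsupp.add_apply, Finsupp.finsetSum_apply]
  simp only [Finsupp.single_eq_same]
  rw [Finset.sum_insertNone]
  exact Nat.le_add_right _ _

theorem diff_le {G : AX ι} {e : ιᵒᵈ →₀ ℕ} (he : Lead G e) {s s' : ι} (hs : s < s') (n : ℕ)
    (hdvd : (xv s' - xv s) ^ (2 * n) ∣ G)
    (hsym : rename (fun r => toDual (Equiv.swap s s' (ofDual r))) G = G) :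
    e (toDual s) + 2 * n ≤ e (toDual s') := by
  classical
  obtain ⟨g, hg⟩ := hdvd
  have hD : xv s' - xv s ≠ 0 := (irreducible_lf s' (some s) (by simpa using hs)).ne_zero
  have hgs : rename (fun r => toDual (Equiv.swap s s' (ofDual r))) g = g := by
    rw [hg, map_mul, map_pow, map_sub, xv, xv, rename_X, rename_X] at hsym
    simp only [ofDual_toDual, Equiv.swap_apply_left, Equiv.swap_apply_right] at hsym
    change (xv s - xv s') ^ (2 * n) * _ = (xv s' - xv s) ^ (2 * n) * g at hsym
    rw [← neg_sub (xv s') (xv s), (even_two_mul n).neg_pow] at hsym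
    exact mul_left_cancel₀ (pow_ne_zero _ hD) hsym
  have hg0 : g ≠ 0 := by
    rintro rfl
    rw [mul_zero] at hg
    exact he.1 (by rw [hg]; simp)
  obtain ⟨e', he'⟩ := exists_lead hg0
  have hl := lead_prod (Finset.range (2 * n)) (fun _ => lf s' (some s))
    (fun _ => Finsupp.single (toDual s') 1) (fun _ _ => lead_lf s' (some s) (by simpa using hs))
  rw [Finset.prod_const, Finset.sum_const, Finset.card_range] at hl
  have h2 := hl.mul he'
  change Lead ((xv s' - xv s) ^ (2 * n) * g) _ at h2
  rw [← hg] at h2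
  have h3 : e = _ := toLex_inj.mp (le_antisymm (h2.2 _ he.1) (he.2 _ h2.1))
  have hss : toDual s ≠ toDual s' := fun h => hs.ne (toDual.injective h)
  have hle : e' (toDual s) ≤ e' (toDual s') := by
    by_contra hcon
    have hinj : Function.Injective (fun r : ιᵒᵈ => toDual (Equiv.swap s s' (ofDual r))) := by
      intro x y hxy
      simpa using hxy
    have h4 : coeff (e'.mapDomain (fun r => toDual (Equiv.swap s s' (ofDual r)))) g ≠ 0 := by
      conv_lhs => rw [← hgs]
      rw [coeff_rename_mapDomain _ hinj]
      exact he'.1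
    refine absurd (he'.2 _ h4) (not_le.mpr ?_)
    have hm : ∀ r, e'.mapDomain (fun r => toDual (Equiv.swap s s' (ofDual r))) (toDual r) =
        e' (toDual (Equiv.swap s s' r)) := by
      intro r
      conv_lhs => rw [show toDual r = (fun r => toDual (Equiv.swap s s' (ofDual r)))
        (toDual (Equiv.swap s s' r)) by simp]
      rw [Finsupp.mapDomain_apply hinj]
    rw [lexlt_iff]
    refine ⟨toDual s', fun j hj => ?_, ?_⟩
    · obtain ⟨j, rfl⟩ := toDual.surjective j
      rw [toDual_lt_toDual] at hj
      rw [hm, Equiv.swap_apply_of_ne_of_ne (hs.trans hj).ne' hj.ne']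
    · rw [hm, Equiv.swap_apply_right]; omega
  rw [h3]
  simp only [Finsupp.add_apply, Finsupp.smul_apply, Finsupp.single_eq_same,
    Finsupp.single_eq_of_ne hss]
  simp
  omega

/-- Padded quasi-particle data. -/
structure IsQ (k k01 k0 : ℕ) (ν : ι →₀ ℕ) (e : ιᵒᵈ →₀ ℕ) : Prop where
  le_k : ∀ r, ν r ≤ k
  anti : ∀ s s', col s = col s' → s < s' → ν s' ≤ ν s
  base : ∀ r, (ν r - if col r then k01 else k0) +
    ∑ s with s < r, (if col s = col r then 2 * ν r else ν r + ν s - k) ≤ e (toDual r)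
  diff : ∀ s s', col s = col s' → s < s' → ν s = ν s' →
    e (toDual s) + 2 * ν s ≤ e (toDual s')

theorem qp_upper {k k01 k0 : ℕ} {w : ℕ × ℕ × ℕ} {P : MvPolynomial ℕ ℚ}
    (hP : P ∈ gradedE k k01 k0 w) {ν : ι →₀ ℕ} {e : ιᵒᵈ →₀ ℕ} (hν : Lead (Psi col P) ν)
    (he : Lead (coeff ν (Psi col P)) e) : IsQ col k k01 k0 ν e ∧ Supp col w ν e := by
  rw [mem_gradedE] at hP
  refine ⟨⟨fun r => le_k col hP.1 ν r hν.1, fun s s' hc hs => lead_anti col hν hc hs, ?_, ?_⟩,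
    hasSupp_Psi col hP.2 ν e he.1⟩
  · intro r
    refine base_le he r (fun o => match o with
      | none => ν r - if col r then k01 else k0
      | some s => if col s = col r then 2 * ν r else ν r + ν s - k) ?_
    intro o ho
    cases o with
    | none => exact dvd_pos col hP.1 ν r
    | some s =>
      have hs := ho s rfl
      change (xv r - xv s) ^ _ ∣ _
      dsimp only
      split_ifs with h
      · exact dvd_same col hP.2 hν h hs
      · exact dvd_pair col hP.1 ν r s hs.ne'
  · intro s s' hc hs hn
    apply diff_le he hs
    · rw [hn]; exact dvd_same col hP.2 hν hc hs
    · have := coeff_symm col (Equiv.swap s s') (swap_col col hc) P ν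
      rw [← this]
      congr 1
      ext r
      conv_lhs => rw [show r = Equiv.swap s s' (Equiv.swap s s' r) by simp]
      rw [Finsupp.mapDomain_apply (Equiv.swap s s').injective]
      rcases eq_or_ne r s with rfl | h1
      · simp [hn]
      · rcases eq_or_ne r s' with rfl | h2
        · simp [hn]
        · rw [Equiv.swap_apply_of_ne_of_ne h1 h2]

end

end QPProof


set_option linter.unusedSectionVars false

namespace QPProof

open MvPolynomial OrderDual

/-- The set of clusters. -/
abbrev IX (M : ℕ) := Lex (Bool × Fin M)

/-- Cluster of given colour and number. -/
def cl {M : ℕ} (c : Bool) (i : Fin M) : IX M := toLex (c, i)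

/-- Colour of a cluster. -/
def colx {M : ℕ} (r : IX M) : Bool := (ofLex r).1

theorem sum_IX {M : ℕ} {B : Type*} [AddCommMonoid B] (f : IX M → B) :
    ∑ r, f r = ∑ i, f (cl false i) + ∑ i, f (cl true i) := by
  rw [← Equiv.sum_comp toLex, Fintype.sum_prod_type, Fintype.sum_bool, add_comm]
  rfl

theorem Psi_inj {M : ℕ} {P : MvPolynomial ℕ ℚ} {w : ℕ × ℕ × ℕ}
    (hP : IsWeightedHomogeneous wt P w) (hM : w.2.2 ≤ M) (h : Psi (colx (M := M)) P = 0) :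
    P = 0 := by
  classical
  let V : Matrix (Fin M) (Fin M) ℚ := Matrix.vandermonde (fun i => ((i : ℕ) : ℚ))
  have hV : IsUnit V.det := by
    rw [isUnit_iff_ne_zero, Matrix.det_vandermonde_ne_zero_iff]
    intro i j hij
    exact Fin.ext (by simpa using hij)
  let ev : AX (IX M) →+* ℚ := eval (fun r => (((ofLex (ofDual r)).2 : ℕ) : ℚ))
  let L : MvPolynomial (IX M) (AX (IX M)) →+* MvPolynomial ℕ ℚ :=
    eval₂Hom (C.comp ev) (fun r => ∑ j : Fin M, C (V⁻¹ j (ofLex r).2) *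
      X (2 * (j : ℕ) + if (ofLex r).1 then 1 else 0))
  have key : L (Psi colx P) = P := by
    change (L.comp (Psi (colx (M := M))).toRingHom) P = RingHom.id _ P
    refine hom_congr_vars (Subsingleton.elim _ _) ?_ rfl
    intro i hi _
    have hi2 : i < 2 * w.2.2 := by
      obtain ⟨a, ha, hai⟩ := mem_vars_iff_mem_support i |>.mp hi
      by_contra hcon
      rw [mem_support_iff] at ha
      exact (Finsupp.mem_support_iff.mp hai) (eq_zero_of_weight (hP ha) i (by omega))
    have hiM : i / 2 < M := by omega
    change L (Psi (colx (M := M)) (X i)) = X i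
    rw [Psi_X, map_sum, sum_IX]
    have hgen : ∀ c : Bool, ∑ j : Fin M, L (C (pt (colx (cl c j)) (xv (cl c j)) i) * X (cl c j)) =
        if (Even i ↔ c = false) then X i else 0 := by
      intro c
      have h1 : ∀ j : Fin M, L (C (pt (colx (cl c j)) (xv (cl c j)) i) * X (cl c j)) =
          if (Even i ↔ c = false) then ∑ j' : Fin M, C (V⁻¹ j' j * V j ⟨i / 2, hiM⟩) *
            X (2 * (j' : ℕ) + if c then 1 else 0) else 0 := by
        intro j
        rw [map_mul, coe_eval₂Hom, eval₂_C, eval₂_X]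
        simp only [cl, ofLex_toLex, RingHom.comp_apply, colx, pt, cur, xv, ev, map_mul, map_pow,
          eval_X, ofDual_toDual, V, Matrix.vandermonde_apply]
        by_cases hev : Even i <;> cases c <;> simp [hev, Finset.mul_sum] <;>
          exact Finset.sum_congr rfl fun _ _ => by ring
      rw [Finset.sum_congr rfl fun j _ => h1 j]
      by_cases hpar : (Even i ↔ c = false)
      · simp only [if_pos hpar]
        rw [Finset.sum_comm]
        simp only [← Finset.sum_mul, ← map_sum]
        have h2 : ∀ j', ∑ j, V⁻¹ j' j * V j ⟨i / 2, hiM⟩ = if j' = ⟨i / 2, hiM⟩ then 1 else 0 := by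
          intro j'
          rw [← Matrix.mul_apply, Matrix.nonsing_inv_mul V hV, Matrix.one_apply]
        simp only [h2]
        rw [Finset.sum_eq_single ⟨i / 2, hiM⟩]
        · simp only [if_true, map_one, one_mul]
          congr 1
          cases c
          · have := Nat.even_iff.mp (hpar.mpr rfl); simp; omega
          · have : ¬ Even i := fun h => by simpa using hpar.mp h
            rw [Nat.even_iff] at this; simp; omega
        · intro j' _ hne
          simp [hne]
        · simp
      · simp only [if_neg hpar, Finset.sum_const_zero]
    rw [hgen, hgen]
    by_cases hev : Even i <;> simp [hev]
  rw [h, map_zero] at key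
  exact key.symm

end QPProof


set_option linter.unusedSectionVars false

namespace QPProof

open MvPolynomial OrderDual

section LevelLead

variable {ι : Type} [Fintype ι] [LinearOrder ι] (col : ι → Bool)

theorem Psi_X_level (c : ℕ) (c' : Bool) (hc : Odd c ↔ c' = true) (j : ℕ) :
    Psi col (X (2 * j + c)) = ∑ r ∈ Finset.univ.filter (fun r => col r = c'),
      (C (xv r ^ (c / 2)) * X r) * C (xv r) ^ j := by
  classical
  rw [Psi_X, Finset.sum_filter]
  refine Finset.sum_congr rfl fun r _ => ?_
  have h1 : Even (2 * j + c) ↔ c' = false := by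
    rw [Nat.even_add]
    simp only [even_two, Even.mul_right, true_iff]
    rw [← Nat.not_odd_iff_even, hc]
    simp
  have h2 : (2 * j + c) / 2 = c / 2 + j := by omega
  unfold pt cur
  rw [h2]
  by_cases h : Even (2 * j + c)
  · have h3 := h1.mp h
    rw [if_pos h]
    cases hr : col r <;> simp [h3]
    ring
  · have h3 : c' = true := by
      by_contra h4
      exact h (h1.mpr (by simpa using h4))
    rw [if_neg h]
    cases hr : col r <;> simp [h3]
    ring

variable (D : Finset ι) (b : ι → ℕ)

/-- A single term of the expansion. -/
noncomputable def term (g : {s // s ∈ D} → ι) : AX ι :=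
  (∏ s, xv (g s) ^ (b s / 2)) * aeval (fun s => xv (g s)) (Del (fun s : {s // s ∈ D} => b s))

/-- Colour preserving maps. -/
noncomputable def maps : Finset ({s // s ∈ D} → ι) := by
  classical
  exact Fintype.piFinset fun s : {s // s ∈ D} => Finset.univ.filter (fun r => col r = col s)

theorem mem_maps {g : {s // s ∈ D} → ι} : g ∈ maps col D ↔ ∀ s, col (g s) = col s := by
  classical
  simp [maps]

theorem prod_X_mono (g : {s // s ∈ D} → ι) :
    (∏ s, (X (g s) : MvPolynomial ι (AX ι))) = monomial (∑ s, Finsupp.single (g s) 1) 1 := by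
  classical
  rw [monomial_sum_one]
  rfl

theorem Psi_Epol (hpar : ∀ s ∈ D, (Odd (b s) ↔ col s = true)) :
    Psi col (Epol (fun s : {s // s ∈ D} => b s)) = ∑ g ∈ maps col D,
      monomial (∑ s, Finsupp.single (g s) 1) (term D b g) := by
  classical
  rw [Epol, map_umb, umb_congr (fun (s : {s // s ∈ D}) j => Psi_X_level col (b s) (col s) (hpar s s.2) j),
    umb_sum (fun s : {s // s ∈ D} => Finset.univ.filter (fun r => col r = col s))
    (fun r s j => (C (xv r ^ (b s / 2)) * X r) * C (xv r) ^ j)]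
  have : maps col D =
    Fintype.piFinset fun s : {s // s ∈ D} => Finset.univ.filter (fun r => col r = col s) := by
    ext g; simp [mem_maps]
  rw [this]
  refine Finset.sum_congr rfl fun g _ => ?_
  rw [umb_geom (fun s => C (xv (g s) ^ (b s / 2)) * X (g s)) (fun s => C (xv (g s))),
    Finset.prod_mul_distrib, prod_X_mono, term]
  have h2 : aeval (fun s => (C (xv (g s)) : MvPolynomial ι (AX ι)))
      (Del (fun s : {s // s ∈ D} => b s)) =
      C (aeval (fun s => xv (g s)) (Del (fun s : {s // s ∈ D} => b s))) := by
    have := MvPolynomial.map_aeval (fun s => xv (g s)) 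
      (C : AX ι →+* MvPolynomial ι (AX ι)) (Del (fun s : {s // s ∈ D} => b s))
    rw [this, aeval_def]
    congr 1
  rw [h2, ← map_prod, mul_right_comm, ← C_mul, C_mul_monomial, mul_one]

theorem term_eq_zero {g : {s // s ∈ D} → ι} (hg : ¬ Function.Injective g) : term D b g = 0 := by
  classical
  simp only [Function.Injective, not_forall] at hg
  obtain ⟨p, q, h1, h2⟩ := hg
  obtain ⟨z, hz⟩ := dvd_Del (fun s : {s // s ∈ D} => b s) h2
  rw [term, hz, map_mul, map_sub, aeval_X, aeval_X, h1, sub_self, zero_mul, mul_zero]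

/-- Indicator. -/
noncomputable def ind : ι →₀ ℕ := ∑ s : {s // s ∈ D}, Finsupp.single (s : ι) 1

theorem sum_single_apply {κ : Type*} [Fintype κ] {g : κ → ι} (hg : Function.Injective g) (r : ι)
    [Decidable (r ∈ Set.range g)] :
    (∑ s, Finsupp.single (g s) 1 : ι →₀ ℕ) r = if r ∈ Set.range g then 1 else 0 := by
  classical
  rw [Finsupp.finsetSum_apply]
  split_ifs with h
  · obtain ⟨s, rfl⟩ := h
    rw [Finset.sum_eq_single s]
    · simp
    · intro s' _ hs
      rw [Finsupp.single_eq_of_ne (fun h => hs (hg h.symm))]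
    · simp
  · refine Finset.sum_eq_zero fun s _ => ?_
    rw [Finsupp.single_eq_of_ne]
    rintro rfl
    exact h ⟨s, rfl⟩

theorem ind_apply (r : ι) : ind D r = if r ∈ D then 1 else 0 := by
  classical
  rw [ind, sum_single_apply Subtype.val_injective]
  simp

theorem maps_le (hstart : ∀ s ∈ D, ∀ s', col s' = col s → s' < s → s' ∈ D)
    {g : {s // s ∈ D} → ι} (hg : g ∈ maps col D) (hi : Function.Injective g) :
    toLex (∑ s, Finsupp.single (g s) 1 : ι →₀ ℕ) ≤ toLex (ind D) := by
  classical
  rw [mem_maps] at hg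
  by_contra hcon
  rw [not_le, lexlt_iff] at hcon
  obtain ⟨r, h1, h2⟩ := hcon
  simp only [ind_apply, sum_single_apply hi] at h1 h2
  have hr : r ∉ D := by
    intro h; rw [if_pos h] at h2; split_ifs at h2 <;> omega
  have hr' : r ∈ Set.range g := by
    by_contra h; rw [if_neg h] at h2; omega
  have h3 : Finset.image g (Finset.univ.filter (fun s : {s // s ∈ D} => col s = col r)) ⊆ 
      (D.filter (fun s => col s = col r)) → False := by
    intro h
    obtain ⟨s, rfl⟩ := hr'
    exact hr (Finset.mem_of_mem_filter _ (h (Finset.mem_image_of_mem _ (by simp [hg]))))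
  apply h3
  apply Eq.subset
  symm
  apply Finset.eq_of_subset_of_card_le
  · intro s hs
    rw [Finset.mem_filter] at hs
    have hlt : s < r := by
      rcases lt_trichotomy s r with h | h | h
      · exact h
      · rw [h] at hs; exact absurd hs.1 hr
      · exact absurd (hstart s hs.1 r hs.2.symm h) hr
    have h4 := h1 s hlt
    rw [if_pos hs.1] at h4
    have h5 : s ∈ Set.range g := by by_contra h; rw [if_neg h] at h4; omega
    obtain ⟨t, rfl⟩ := h5
    rw [hg] at hs
    exact Finset.mem_image_of_mem _ (by simp [hs.2])
  · refine Finset.card_image_le.trans ?_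
    rw [← Finset.card_map (Function.Embedding.subtype _)]
    apply Finset.card_le_card
    intro s hs
    simp at hs
    simp [hs]

theorem lead_ind (hpar : ∀ s ∈ D, (Odd (b s) ↔ col s = true))
    (hstart : ∀ s ∈ D, ∀ s', col s' = col s → s' < s → s' ∈ D)
    (hne : coeff (ind D) (Psi col (Epol (fun s : {s // s ∈ D} => b s))) ≠ 0) :
    Lead (Psi col (Epol (fun s : {s // s ∈ D} => b s))) (ind D) := by
  classical
  refine ⟨hne, fun ν' h => ?_⟩
  rw [Psi_Epol col D b hpar, coeff_sum] at h
  obtain ⟨g, hg, h1⟩ := Finset.exists_ne_zero_of_sum_ne_zero h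
  rw [coeff_monomial] at h1
  by_cases h2 : ∑ s, Finsupp.single (g s) 1 = ν'
  · rw [← h2]
    refine maps_le col D hstart hg ?_
    by_contra h3
    rw [term_eq_zero D b h3, ite_self] at h1
    exact h1 rfl
  · rw [if_neg h2] at h1
    exact absurd rfl h1

end LevelLead

end QPProof


set_option linter.unusedSectionVars false

namespace QPProof

open MvPolynomial OrderDual

section LevelLead2

variable {ι : Type} [Fintype ι] [LinearOrder ι] (col : ι → Bool)

theorem lead_xv_sub {s s' : ι} (h : s ≠ s') :
    Lead (xv s - xv s' : AX ι) (Finsupp.single (toDual (max s s')) 1) := by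
  rcases lt_or_gt_of_ne h with h | h
  · rw [max_eq_right h.le]
    have := (lead_lf s' (some s) (by simpa using h)).smul (u := -1) (by norm_num)
    simpa [lf] using this
  · rw [max_eq_left h.le]
    simpa [lf] using lead_lf s (some s') (by simpa using h)

variable (D : Finset ι) (b : ι → ℕ)

/-- Multiplicity of a factor. -/
def mult (s s' : ι) : ℕ := if s ≠ s' ∧ ¬ (col s = true ∧ col s' = false) then 1 else 0

/-- Exponent of the kernel. -/
noncomputable def delE : ιᵒᵈ →₀ ℕ :=
  ∑ s : {s // s ∈ D}, ∑ s' : {s // s ∈ D}, mult col s s' • Finsupp.single (toDual (max (s : ι) s')) 1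

theorem lead_del (hpar : ∀ s ∈ D, (Odd (b s) ↔ col s = true)) :
    Lead (aeval (fun s : {s // s ∈ D} => xv (s : ι)) (Del (fun s : {s // s ∈ D} => b s)))
      (delE col D) := by
  classical
  rw [Del, map_prod]
  refine lead_prod _ _ _ fun s _ => ?_
  rw [map_prod]
  refine lead_prod _ _ _ fun s' _ => ?_
  unfold fac mult
  have h1 : (s ≠ s' ∧ ¬ (Odd (b s) ∧ Even (b s'))) ↔
      ((s : ι) ≠ s' ∧ ¬ (col s = true ∧ col s' = false)) := by
    rw [hpar s s.2, ← Nat.not_odd_iff_even, hpar s' s'.2, Bool.not_eq_true, Ne, Ne,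
      Subtype.ext_iff]
  rw [if_congr h1 rfl rfl]
  split_ifs with h
  · rw [one_smul, map_sub, aeval_X, aeval_X]
    exact lead_xv_sub h.1
  · rw [zero_smul, map_one]
    exact lead_one

theorem delE_apply (r : ι) : delE col D (toDual r) =
    if r ∈ D then ∑ s ∈ D with s < r, (if col s = col r then 2 else 1) else 0 := by
  classical
  have h0 : delE col D (toDual r) = ∑ s ∈ D, ∑ s' ∈ D, (if max s s' = r then mult col s s' else 0) := by
    rw [delE, Finsupp.finsetSum_apply, ← Finset.sum_coe_sort D]
    refine Finset.sum_congr rfl fun s _ => ?_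
    rw [Finsupp.finsetSum_apply, ← Finset.sum_coe_sort D]
    refine Finset.sum_congr rfl fun s' _ => ?_
    rw [Finsupp.smul_apply, Finsupp.single_apply, if_congr toDual_inj rfl rfl, smul_eq_mul,
      mul_ite, mul_one, mul_zero]
  rw [h0]
  have h1 : ∀ s s', (if max s s' = r then mult col s s' else 0) =
      (if s = r then (if s' < r then mult col r s' else 0) else 0) +
      (if s' = r then (if s < r then mult col s r else 0) else 0) := by
    intro s s'
    rcases lt_trichotomy s s' with h | h | h
    · rw [max_eq_right h.le]
      by_cases h2 : s' = r
      · subst h2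
        simp [h, h.ne]
      · by_cases h3 : s = r
        · subst h3
          simp [h2, h.le]
        · simp [h2, h3]
    · subst h
      by_cases h2 : s = r
      · subst h2
        simp [mult]
      · simp [h2]
    · rw [max_eq_left h.le]
      by_cases h2 : s = r
      · subst h2
        simp [h, h.ne]
      · by_cases h3 : s' = r
        · subst h3
          simp [h2, h.le]
        · simp [h2, h3]
  simp only [h1, Finset.sum_add_distrib]
  rw [Finset.sum_comm (s := D) (t := D) (f := fun s s' => if s = r then (if s' < r then mult col r s' else 0) else 0)]
  simp only [Finset.sum_ite_eq']
  split_ifs with hr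
  · rw [← Finset.sum_add_distrib, Finset.sum_filter]
    refine Finset.sum_congr rfl fun s _ => ?_
    split_ifs with h2 h3
    · simp [mult, h3, h2.ne, h2.ne']
    · cases hs : col s <;> cases hr : col r <;> simp_all [mult, h2.ne, h2.ne']
    · rfl
  · simp

theorem term_perm (hpar : ∀ s ∈ D, (Odd (b s) ↔ col s = true))
    (π : Equiv.Perm {s // s ∈ D}) (hπ : ∀ s, col (π s) = col s) :
    term D b (fun s => π s) = monomial (∑ s, Finsupp.single (toDual (π s : ι)) (b s / 2)) 1 *
      aeval (fun s : {s // s ∈ D} => xv (s : ι)) (Del (fun s : {s // s ∈ D} => b s)) := by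
  classical
  rw [term]
  congr 1
  · rw [monomial_sum_one]
    refine Finset.prod_congr rfl fun s _ => ?_
    rw [xv, X_pow_eq_monomial]
  · conv_rhs => rw [← rename_Del π, aeval_rename]
    congr 1
    apply Del_congr
    intro s
    rw [← Nat.not_odd_iff_even, ← Nat.not_odd_iff_even, hpar s s.2, hpar (π s) (π s).2, hπ]

theorem exists_perm {g : {s // s ∈ D} → ι} (hi : Function.Injective g)
    (h : ∑ s, Finsupp.single (g s) 1 = ind D) :
    ∃ π : Equiv.Perm {s // s ∈ D}, ∀ s, g s = π s := by
  classical
  have h1 : ∀ s, g s ∈ D := by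
    intro s
    have := DFunLike.congr_fun h (g s)
    rw [sum_single_apply hi, ind_apply, if_pos ⟨s, rfl⟩] at this
    by_contra h2
    rw [if_neg h2] at this
    omega
  refine ⟨Equiv.ofBijective (fun s => ⟨g s, h1 s⟩) ?_, fun s => rfl⟩
  rw [← Finite.injective_iff_bijective]
  intro s s' hs
  exact hi (by simpa using hs)

theorem perm_apply (π : Equiv.Perm {s // s ∈ D}) (β : ι → ℕ) (s : {s // s ∈ D}) :
    (∑ s, Finsupp.single (toDual (π s : ι)) (β s) : ιᵒᵈ →₀ ℕ) (toDual (π s : ι)) = β s := by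
  classical
  rw [Finsupp.finsetSum_apply, Finset.sum_eq_single s]
  · simp
  · intro s' _ hs
    rw [Finsupp.single_eq_of_ne]
    intro h
    exact hs (π.injective (Subtype.ext (toDual.injective h.symm)))
  · simp

theorem perm_apply_of_notMem (π : Equiv.Perm {s // s ∈ D}) (β : ι → ℕ) (r : ι) (hr : r ∉ D) :
    (∑ s, Finsupp.single (toDual (π s : ι)) (β s) : ιᵒᵈ →₀ ℕ) (toDual r) = 0 := by
  classical
  rw [Finsupp.finsetSum_apply]
  refine Finset.sum_eq_zero fun s _ => ?_
  rw [Finsupp.single_eq_of_ne]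
  intro h
  exact hr (toDual.injective h ▸ (π s).2)

/-- Base exponent. -/
noncomputable def betE (β : ι → ℕ) : ιᵒᵈ →₀ ℕ :=
  ∑ s : {s // s ∈ D}, Finsupp.single (toDual (s : ι)) (β s)

theorem betE_apply (β : ι → ℕ) (r : ι) : betE D β (toDual r) = if r ∈ D then β r else 0 := by
  split_ifs with h
  · exact perm_apply D (Equiv.refl _) β ⟨r, h⟩
  · exact perm_apply_of_notMem D (Equiv.refl _) β r h

theorem perm_le (β : ι → ℕ)
    (hmono : ∀ s ∈ D, ∀ s' ∈ D, col s = col s' → s < s' → β s ≤ β s')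
    (π : Equiv.Perm {s // s ∈ D}) (hπ : ∀ s, col (π s) = col s) :
    toLex (∑ s, Finsupp.single (toDual (π s : ι)) (β s) : ιᵒᵈ →₀ ℕ) ≤ toLex (betE D β) := by
  classical
  by_contra hcon
  rw [not_le, lexlt_iff] at hcon
  obtain ⟨r, h1, h2⟩ : ∃ r : ι, (∀ j, j < toDual r → betE D β j =
      (∑ s, Finsupp.single (toDual (π s : ι)) (β s) : ιᵒᵈ →₀ ℕ) j) ∧ betE D β (toDual r) <
      (∑ s, Finsupp.single (toDual (π s : ι)) (β s) : ιᵒᵈ →₀ ℕ) (toDual r) := by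
    obtain ⟨r', h1, h2⟩ := hcon
    exact ⟨ofDual r', h1, h2⟩
  have hrD : r ∈ D := by
    by_contra h
    rw [perm_apply_of_notMem D π β r h] at h2
    omega
  rw [betE_apply, if_pos hrD] at h2
  obtain ⟨t, ht⟩ := π.surjective ⟨r, hrD⟩
  have htr : (π t : ι) = r := by rw [ht]
  rw [← htr, perm_apply, htr] at h2
  have hct : col t = col r := by rw [← hπ, htr]
  let A : Finset {s // s ∈ D} := Finset.univ.filter fun s => col s = col r ∧ β r < β s
  let A' : Finset {s // s ∈ D} := A.map π.toEmbedding
  have hsub : A ⊆ A' := by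
    intro s hs
    simp only [A, Finset.mem_filter, Finset.mem_univ, true_and] at hs
    have hlt : r < s := by
      rcases lt_trichotomy r (s : ι) with h | h | h
      · exact h
      · rw [← h] at hs; omega
      · have := hmono s s.2 r hrD hs.1 h
        omega
    have h3 := h1 (toDual (s : ι)) (toDual_lt_toDual.mpr hlt)
    obtain ⟨u, hu⟩ := π.surjective s
    rw [← hu, betE_apply, if_pos (π u).2, perm_apply, hu] at h3
    rw [Finset.mem_map_equiv]
    simp only [A, Finset.mem_filter, Finset.mem_univ, true_and]
    have hu' : π.symm s = u := by rw [← hu]; simp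
    rw [hu', ← h3]
    refine ⟨?_, hs.2⟩
    rw [← hπ, hu]; exact hs.1
  have heq : A = A' := Finset.eq_of_subset_of_card_le hsub (by simp [A'])
  have h4 : (⟨r, hrD⟩ : {s // s ∈ D}) ∈ A' := by
    rw [Finset.mem_map_equiv, ← ht]
    simp [A, hct, h2]
  rw [← heq] at h4
  simp [A] at h4

theorem lead_sum_mono {σ κ : Type*} [LinearOrder σ] (S : Finset κ) (m : κ → σ →₀ ℕ) (μ : σ →₀ ℕ)
    (hex : ∃ i ∈ S, m i = μ) (hle : ∀ i ∈ S, toLex (m i) ≤ toLex μ) :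
    Lead (∑ i ∈ S, monomial (m i) (1 : ℚ)) μ := by
  classical
  constructor
  · rw [coeff_sum]
    simp only [coeff_monomial]
    apply ne_of_gt
    apply Finset.sum_pos'
    · intro i _; split_ifs <;> norm_num
    · obtain ⟨i, hi, h⟩ := hex
      exact ⟨i, hi, by rw [if_pos h]; norm_num⟩
  · intro ν' h
    rw [coeff_sum] at h
    obtain ⟨i, hi, h⟩ := Finset.exists_ne_zero_of_sum_ne_zero h
    rw [coeff_monomial, ite_ne_right_iff] at h
    rw [← h.1]
    exact hle i hi

theorem lead_Epol (hpar : ∀ s ∈ D, (Odd (b s) ↔ col s = true))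
    (hstart : ∀ s ∈ D, ∀ s', col s' = col s → s' < s → s' ∈ D)
    (hmono : ∀ s ∈ D, ∀ s' ∈ D, col s = col s' → s < s' → b s / 2 ≤ b s' / 2) :
    Lead (Psi col (Epol (fun s : {s // s ∈ D} => b s))) (ind D) ∧
    Lead (coeff (ind D) (Psi col (Epol (fun s : {s // s ∈ D} => b s))))
      (betE D (fun s => b s / 2) + delE col D) := by
  classical
  suffices h : Lead (coeff (ind D) (Psi col (Epol (fun s : {s // s ∈ D} => b s))))
      (betE D (fun s => b s / 2) + delE col D) by
    refine ⟨lead_ind col D b hpar hstart ?_, h⟩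
    intro h0
    rw [h0] at h
    exact h.1 (by simp)
  let S := (maps col D).filter fun g => ∑ s, Finsupp.single (g s) 1 = ind D ∧ Function.Injective g
  have hS : ∀ g ∈ S, ∃ π : Equiv.Perm {s // s ∈ D}, (∀ s, g s = π s) ∧ ∀ s, col (π s) = col s := by
    intro g hg
    simp only [S, Finset.mem_filter] at hg
    obtain ⟨π, hπ⟩ := exists_perm D hg.2.2 hg.2.1
    refine ⟨π, hπ, fun s => ?_⟩
    rw [← hπ]; exact (mem_maps col D).mp hg.1 s
  have hc : coeff (ind D) (Psi col (Epol (fun s : {s // s ∈ D} => b s))) =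
      (∑ g ∈ S, monomial (∑ s, Finsupp.single (toDual (g s)) (b s / 2)) 1) *
      aeval (fun s : {s // s ∈ D} => xv (s : ι)) (Del (fun s : {s // s ∈ D} => b s)) := by
    rw [Psi_Epol col D b hpar, coeff_sum, Finset.sum_mul, Finset.sum_filter]
    refine Finset.sum_congr rfl fun g hg => ?_
    rw [coeff_monomial]
    by_cases h1 : ∑ s, Finsupp.single (g s) 1 = ind D
    · by_cases h2 : Function.Injective g
      · rw [if_pos h1, if_pos ⟨h1, h2⟩]
        obtain ⟨π, h3, h4⟩ := hS g (by simp only [S, Finset.mem_filter]; exact ⟨hg, h1, h2⟩)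
        have : g = fun s => (π s : ι) := funext h3
        rw [this]
        exact term_perm col D b hpar π h4
      · rw [if_pos h1, term_eq_zero D b h2, if_neg (fun h => h2 h.2)]
    · rw [if_neg h1, if_neg (fun h => h1 h.1)]
  rw [hc]
  refine Lead.mul ?_ (lead_del col D b hpar)
  apply lead_sum_mono
  · refine ⟨fun s => s, ?_, rfl⟩
    simp only [S, Finset.mem_filter, mem_maps]
    exact ⟨fun _ => trivial, rfl, Subtype.val_injective⟩
  · intro g hg
    obtain ⟨π, h3, h4⟩ := hS g hg
    simp only [h3]
    exact perm_le col D (fun s => b s / 2) hmono π h4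

end LevelLead2

end QPProof


set_option linter.unusedSectionVars false

namespace QPProof

open MvPolynomial OrderDual

theorem cnt (k a c : ℕ) :
    ∑ j ∈ Finset.range k, (if a ≤ j ∧ j < c then 1 else 0) = min c k - a := by
  have : (Finset.range k).filter (fun j => a ≤ j ∧ j < c) = Finset.Ico a (min c k) := by
    ext j; simp; omega
  rw [← Finset.sum_filter, this]; simp

section Levels

variable {ι : Type} [Fintype ι] [LinearOrder ι] (col : ι → Bool)

/-- The base value. -/
def bas (k k01 k0 : ℕ) (ν : ι →₀ ℕ) (r : ι) : ℕ :=
  (ν r - if col r then k01 else k0) +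
    ∑ s with s < r, (if col s = col r then 2 * ν r else ν r + ν s - k)

/-- Level sets. -/
def lev (k : ℕ) (ν : ι →₀ ℕ) (j : ℕ) : Finset ι :=
  Finset.univ.filter fun r => if col r then k ≤ j + ν r else j < ν r

/-- Half of the parameter of the level. -/
def lb (k k2 k0 : ℕ) (ν : ι →₀ ℕ) (ε : ι → ℕ) (j : ℕ) (r : ι) : ℕ :=
  if col r then (if j < k2 then 1 else 0) + (if ν r + j = k then ε r else 0)
  else (if k0 ≤ j then 1 else 0) + (if ν r = j + 1 then ε r else 0)

/-- Parameter of the level. -/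
def lbb (k k2 k0 : ℕ) (ν : ι →₀ ℕ) (ε : ι → ℕ) (j : ℕ) (r : ι) : ℕ :=
  2 * lb col k k2 k0 ν ε j r + if col r then 1 else 0

theorem lbb_half (k k2 k0 : ℕ) (ν : ι →₀ ℕ) (ε : ι → ℕ) (j : ℕ) (r : ι) :
    lbb col k k2 k0 ν ε j r / 2 = lb col k k2 k0 ν ε j r := by
  unfold lbb; split_ifs <;> omega

theorem eps_mono (hcol : ∀ s s', col s = false → col s' = true → s < s')
    {k k01 k0 : ℕ} {ν : ι →₀ ℕ} {e : ιᵒᵈ →₀ ℕ} (hQ : IsQ col k k01 k0 ν e) (N : ℕ) :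
    ∀ s s', (Finset.univ.filter fun t => s < t ∧ t < s').card ≤ N → col s = col s' → s < s' →
      ν s = ν s' → e (toDual s) - bas col k k01 k0 ν s ≤ e (toDual s') - bas col k k01 k0 ν s' := by
  classical
  induction N with
  | zero =>
    intro s s' hN hc hlt hν
    have hno : ∀ t, s < t → ¬ t < s' := by
      intro t h1 h2
      have : t ∈ (Finset.univ.filter fun t => s < t ∧ t < s') := by simp [h1, h2]
      rw [Finset.card_eq_zero.mp (Nat.le_zero.mp hN)] at this
      simp at this
    have h1 : (Finset.univ.filter fun t => t < s') = insert s (Finset.univ.filter fun t => t < s) := by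
      ext t
      simp only [Finset.mem_filter, Finset.mem_univ, true_and, Finset.mem_insert]
      constructor
      · intro h
        by_contra hcon
        push Not at hcon
        exact hno t (lt_of_le_of_ne hcon.2 (Ne.symm hcon.1)) h
      · rintro (rfl | h)
        · exact hlt
        · exact h.trans hlt
    have h2 : bas col k k01 k0 ν s' = bas col k k01 k0 ν s + 2 * ν s := by
      unfold bas
      rw [h1, Finset.sum_insert (by simp), ← hc, ← hν]
      simp
      ring
    have := hQ.diff s s' hc hlt hν
    omega
  | succ N ih =>
    intro s s' hN hc hlt hν
    by_cases hex : ∃ t, s < t ∧ t < s'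
    · obtain ⟨t, h1, h2⟩ := hex
      have hct : col t = col s := by
        cases hs : col s <;> cases ht : col t
        · rfl
        · exact absurd (hcol s' t (by rw [← hc, hs]) ht) h2.not_gt
        · exact absurd (hcol t s ht hs) h1.not_gt
        · rfl
      have a1 := hQ.anti s t hct.symm h1
      have a2 := hQ.anti t s' (hct.trans hc) h2
      refine (ih s t ?_ hct.symm h1 (by omega)).trans (ih t s' ?_ (hct.trans hc) h2 (by omega))
      · refine Nat.le_of_lt_succ (lt_of_lt_of_le (Finset.card_lt_card ?_) hN)
        rw [Finset.ssubset_iff_of_subset]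
        · exact ⟨t, by simp [h1, h2], by simp⟩
        · intro x hx
          simp only [Finset.mem_filter, Finset.mem_univ, true_and] at hx ⊢
          exact ⟨hx.1, hx.2.trans h2⟩
      · refine Nat.le_of_lt_succ (lt_of_lt_of_le (Finset.card_lt_card ?_) hN)
        rw [Finset.ssubset_iff_of_subset]
        · exact ⟨t, by simp [h1, h2], by simp⟩
        · intro x hx
          simp only [Finset.mem_filter, Finset.mem_univ, true_and] at hx ⊢
          exact ⟨h1.trans hx.1, hx.2⟩
    · refine ih s s' ?_ hc hlt hν
      rw [Finset.card_eq_zero.mpr]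
      · omega
      · rw [Finset.filter_eq_empty_iff]
        intro t _ h
        exact hex ⟨t, h⟩

theorem sum_ind {k : ℕ} {ν : ι →₀ ℕ} (hle : ∀ r, ν r ≤ k) :
    ∑ j ∈ Finset.range k, ind (lev col k ν j) = ν := by
  ext r
  rw [Finsupp.finsetSum_apply]
  have hr := hle r
  cases hc : col r
  · rw [Finset.sum_congr rfl (g := fun j => if 0 ≤ j ∧ j < ν r then 1 else 0), cnt]
    · omega
    · intro j _
      simp [ind_apply, lev, hc]
  · rw [Finset.sum_congr rfl (g := fun j => if k - ν r ≤ j ∧ j < k then 1 else 0), cnt]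
    · omega
    · intro j hj
      rw [Finset.mem_range] at hj
      rw [ind_apply]
      apply if_congr _ rfl rfl
      simp [lev, hc]; omega

theorem sum_exp (hcol : ∀ s s', col s = false → col s' = true → s < s')
    {k k0 k1 k2 : ℕ} (hk : k0 + k1 + k2 = k) {ν : ι →₀ ℕ} {e : ιᵒᵈ →₀ ℕ}
    (hQ : IsQ col k (k0 + k1) k0 ν e) (h0 : ∀ r, ν r = 0 → e (toDual r) = 0) :
    ∑ j ∈ Finset.range k, (betE (lev col k ν j) (fun s => lb col k k2 k0 ν
        (fun r => e (toDual r) - bas col k (k0 + k1) k0 ν r) j s) +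
      delE col (lev col k ν j)) = e := by
  classical
  ext r'
  obtain ⟨r, hr'⟩ : ∃ r : ι, toDual r = r' := ⟨ofDual r', rfl⟩
  rw [← hr']
  clear hr' r'
  rw [Finset.sum_add_distrib, Finsupp.add_apply, Finsupp.finsetSum_apply, Finsupp.finsetSum_apply]
  simp only [betE_apply, delE_apply]
  have hr := hQ.le_k r
  have hbase : bas col k (k0 + k1) k0 ν r ≤ e (toDual r) := hQ.base r
  set ε := fun r => e (toDual r) - bas col k (k0 + k1) k0 ν r with hε
  have hεr : ε r = e (toDual r) - bas col k (k0 + k1) k0 ν r := rfl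
  have hB : ∑ j ∈ Finset.range k, (if r ∈ lev col k ν j then
      ∑ s ∈ lev col k ν j with s < r, (if col s = col r then 2 else 1) else 0) =
      ∑ s with s < r, (if col s = col r then 2 * ν r else ν r + ν s - k) := by
    have h1 : ∀ j, (if r ∈ lev col k ν j then
      ∑ s ∈ lev col k ν j with s < r, (if col s = col r then 2 else 1) else 0) =
      ∑ s with s < r, (if r ∈ lev col k ν j ∧ s ∈ lev col k ν j then
        (if col s = col r then 2 else 1) else 0) := by
      intro j
      split_ifs with h
      · simp only [true_and, h]
        rw [← Finset.sum_filter]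
        apply Finset.sum_congr _ (fun _ _ => rfl)
        ext s
        simp [and_comm]
      · simp [h]
    simp only [h1]
    rw [Finset.sum_comm]
    refine Finset.sum_congr rfl fun s hs => ?_
    have hs : s < r := by simpa using hs
    have hsk := hQ.le_k s
    split_ifs with hc
    · have ha := hQ.anti s r hc hs
      cases hcr : col r
      · rw [Finset.sum_congr rfl (g := fun j => 2 * (if 0 ≤ j ∧ j < ν r then 1 else 0)),
          ← Finset.mul_sum, cnt]
        · congr 1; omega
        · intro j _
          rw [mul_ite, mul_one, mul_zero]
          apply if_congr _ rfl rfl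
          simp [lev, hc, hcr]; omega
      · rw [Finset.sum_congr rfl (g := fun j => 2 * (if k - ν r ≤ j ∧ j < k then 1 else 0)),
          ← Finset.mul_sum, cnt]
        · congr 1; omega
        · intro j hj
          rw [Finset.mem_range] at hj
          rw [mul_ite, mul_one, mul_zero]
          apply if_congr _ rfl rfl
          simp [lev, hc, hcr]; omega
    · have hcs : col s = false ∧ col r = true := by
        cases h1 : col s <;> cases h2 : col r
        · simp_all
        · simp
        · exact absurd (hcol r s h2 h1) hs.not_gt
        · simp_all
      rw [Finset.sum_congr rfl (g := fun j => (if k - ν r ≤ j ∧ j < ν s then 1 else 0)), cnt]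
      · omega
      · intro j hj
        apply if_congr _ rfl rfl
        simp [lev, hcs]
  rw [hB]
  have hbr : bas col k (k0 + k1) k0 ν r = (ν r - if col r then k0 + k1 else k0) +
    ∑ s with s < r, (if col s = col r then 2 * ν r else ν r + ν s - k) := rfl
  suffices hA : ∑ j ∈ Finset.range k, (if r ∈ lev col k ν j then lb col k k2 k0 ν ε j r else 0) =
      (ν r - if col r then k0 + k1 else k0) + ε r by
    rw [hA]; omega
  rcases Nat.eq_zero_or_pos (ν r) with hz | hpos
  · have := h0 r hz
    rw [hεr, this, hz, Finset.sum_eq_zero]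
    · simp
    · intro j hj
      rw [Finset.mem_range] at hj
      rw [if_neg]
      cases hcr : col r <;> simp [lev, hcr, hz]
      omega
  · cases hcr : col r
    · rw [Finset.sum_congr rfl (g := fun j => (if k0 ≤ j ∧ j < ν r then 1 else 0) +
        (if j = ν r - 1 then ε r else 0)), Finset.sum_add_distrib, cnt, Finset.sum_ite_eq', if_pos]
      · simp; omega
      · simp; omega
      · intro j _
        simp only [lev, lb, hcr, Finset.mem_filter, Finset.mem_univ, true_and]
        simp only [Bool.false_eq_true, if_false]
        by_cases h1 : j < ν r
        · by_cases h2 : k0 ≤ j <;> by_cases h3 : j = ν r - 1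
          · have : ν r = j + 1 := by omega
            simp [h1, h2, this]
          · have : ¬ ν r = j + 1 := by omega
            simp [h1, h2, h3, this]
          · have : ν r = j + 1 := by omega
            simp [h1, h2, this]
          · have : ¬ ν r = j + 1 := by omega
            simp [h1, h2, h3, this]
        · have : ¬ j = ν r - 1 := by omega
          simp [h1, this]
    · rw [Finset.sum_congr rfl (g := fun j => (if k - ν r ≤ j ∧ j < k2 then 1 else 0) +
        (if j = k - ν r then ε r else 0)), Finset.sum_add_distrib, cnt, Finset.sum_ite_eq', if_pos]
      · simp; omega
      · simp; omega
      · intro j _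
        simp only [lev, lb, hcr, Finset.mem_filter, Finset.mem_univ, true_and, if_true]
        by_cases h1 : k ≤ j + ν r
        · have h1' : k - ν r ≤ j := by omega
          rw [if_pos h1]
          congr 1
          · simp [h1']
          · apply if_congr _ rfl rfl
            omega
        · have : ¬ j = k - ν r := by omega
          have h1' : ¬ k - ν r ≤ j := by omega
          rw [if_neg h1, if_neg this, if_neg (fun h => h1' h.1)]

theorem qp_lower (hcol : ∀ s s', col s = false → col s' = true → s < s')
    {k k0 k1 k2 : ℕ} (hk : k0 + k1 + k2 = k) (h02 : k0 * k2 = 0) {w : ℕ × ℕ × ℕ}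
    {ν : ι →₀ ℕ} {e : ιᵒᵈ →₀ ℕ}
    (hQ : IsQ col k (k0 + k1) k0 ν e) (hS : Supp col w ν e) :
    ∃ P ∈ gradedE k (k0 + k1) k0 w, Lead (Psi col P) ν ∧ Lead (coeff ν (Psi col P)) e := by
  classical
  let ε := fun r => e (toDual r) - bas col k (k0 + k1) k0 ν r
  let D := fun j => lev col k ν j
  let b := fun j r => lbb col k k2 k0 ν ε j r
  let F := fun j => Epol (fun s : {s // s ∈ D j} => b j s)
  have hL : ∀ j, Lead (Psi col (F j)) (ind (D j)) ∧ Lead (coeff (ind (D j)) (Psi col (F j)))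
      (betE (D j) (fun s => b j s / 2) + delE col (D j)) := by
    intro j
    apply lead_Epol
    · intro s _
      simp only [b, lbb]
      cases hc : col s <;> simp
    · intro s hs s' hc hlt
      have := hQ.anti s' s hc hlt
      simp only [D, lev, Finset.mem_filter, Finset.mem_univ, true_and, hc] at hs ⊢
      split_ifs at hs ⊢ <;> omega
    · intro s hs s' hs' hc hlt
      have ha := hQ.anti s s' hc hlt
      have hm := eps_mono col hcol hQ _ s s' le_rfl hc hlt
      simp only [b, lbb_half]
      simp only [D, lev, Finset.mem_filter, Finset.mem_univ, true_and, hc] at hs hs'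
      simp only [lb, hc]
      have hεs : ν s = ν s' → ε s ≤ ε s' := hm
      cases hcs : col s' <;> simp only [hcs, Bool.false_eq_true, if_false, if_true] at hs hs' ⊢
      · apply Nat.add_le_add_left
        by_cases h1 : ν s = j + 1
        · have h2 : ν s' = j + 1 := by omega
          rw [if_pos h1, if_pos h2]
          exact hεs (by omega)
        · rw [if_neg h1]; exact Nat.zero_le _
      · apply Nat.add_le_add_left
        by_cases h1 : ν s + j = k
        · have h2 : ν s' + j = k := by omega
          rw [if_pos h1, if_pos h2]
          exact hεs (by omega)
        · rw [if_neg h1]; exact Nat.zero_le _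
  have hν := sum_ind col hQ.le_k
  have he := sum_exp col hcol hk hQ hS.2.2.2
  let P := ∏ j ∈ Finset.range k, F j
  have h1 : Lead (Psi col P) ν := by
    simp only [P]
    rw [map_prod, ← hν]
    exact lead_prod _ _ _ fun j _ => (hL j).1
  have h2 : Lead (coeff ν (Psi col P)) e := by
    have : coeff ν (Psi col P) = ∏ j ∈ Finset.range k, coeff (ind (D j)) (Psi col (F j)) := by
      simp only [P]
      conv_lhs => rw [map_prod, ← hν]
      exact coeff_lead_prod _ _ _ fun j _ => (hL j).1
    rw [this, ← he]
    refine lead_prod _ _ _ fun j _ => ?_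
    have := (hL j).2
    simp only [b, lbb_half] at this
    exact this
  refine ⟨P, ?_, h1, h2⟩
  rw [mem_gradedE]
  constructor
  · have hg := good_prod (Finset.range k) (fun _ => 1)
      (fun j => if k0 ≤ j ∧ j < k2 then 0 else 1) (fun j => if k0 ≤ j then 0 else 1) F ?_
    · refine hg.mono (by simp) ?_ ?_
      · rcases Nat.mul_eq_zero.mp h02 with h | h
        · rw [Finset.sum_congr rfl (g := fun j => if k2 ≤ j ∧ j < k then 1 else 0), cnt]
          · omega
          · intro j hj
            rw [Finset.mem_range] at hj
            by_cases h3 : j < k2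
            · rw [if_pos ⟨by omega, h3⟩, if_neg (by omega)]
            · rw [if_neg (by omega), if_pos (by omega)]
        · refine (Finset.sum_le_card_nsmul _ _ 1 ?_).trans ?_
          · intro j _; split_ifs <;> omega
          · simp; omega
      · rw [Finset.sum_congr rfl (g := fun j => if 0 ≤ j ∧ j < k0 then 1 else 0), cnt]
        · omega
        · intro j hj
          by_cases h3 : k0 ≤ j
          · rw [if_pos h3, if_neg (by omega)]
          · rw [if_neg h3, if_pos (by omega)]
    · intro j _
      apply Epol_good
      · by_cases h3 : k0 ≤ j ∧ j < k2
        · right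
          intro s
          simp only [b, lbb, lb, h3]
          split_ifs <;> simp at * <;> omega
        · left; rw [if_neg h3]
      · by_cases h3 : k0 ≤ j
        · right
          intro s
          simp only [b, lbb, lb, h3]
          split_ifs <;> simp at * <;> omega
        · left; rw [if_neg h3]
  · have hw : ∀ j, ∃ w, IsWeightedHomogeneous wt (F j) w := fun j => Epol_isWeightedHomogeneous _
    choose W hW using hw
    have hPW : IsWeightedHomogeneous wt P (∑ j ∈ Finset.range k, W j) :=
      IsWeightedHomogeneous.prod _ _ _ fun j _ => hW j
    have hS' := hasSupp_Psi col hPW ν e h2.1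
    have : ∑ j ∈ Finset.range k, W j = w := by
      refine Prod.ext ?_ (Prod.ext ?_ ?_)
      · rw [← hS'.1, ← hS.1]
      · rw [← hS'.2.1, ← hS.2.1]
      · rw [← hS'.2.2.1, ← hS.2.2.1]
    rw [← this]
    exact hPW

end Levels

end QPProof


set_option linter.unusedSectionVars false

namespace QPProof

open MvPolynomial OrderDual

/-- One coloured part of a quasi-particle datum. -/
structure IsHalf (k : ℕ) (c : ℕ → ℕ) (a : ℕ) (n : Fin a → ℕ) (m : Fin a → ℤ) : Prop where
  pos : ∀ s, 1 ≤ n s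
  le : ∀ s, n s ≤ k
  anti : ∀ s t : Fin a, s ≤ t → n t ≤ n s
  diff : ∀ (s : ℕ) (h : s + 1 < a), n ⟨s + 1, h⟩ = n ⟨s, Nat.lt_of_succ_lt h⟩ →
    m ⟨s + 1, h⟩ ≤ m ⟨s, Nat.lt_of_succ_lt h⟩ - 2 * (n ⟨s, Nat.lt_of_succ_lt h⟩ : ℤ)
  start : ∀ s : Fin a, m s ≤ -(n s : ℤ) - (c (n s) : ℤ) - 2 * (s : ℕ) * (n s : ℤ)

/-- The same in terms of padded exponents. -/
structure IsFun (k : ℕ) (c : ℕ → ℕ) (M : ℕ) (F G : Fin M → ℕ) : Prop where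
  le : ∀ i, F i ≤ k
  anti : ∀ i j, i < j → F j ≤ F i
  base : ∀ i : Fin M, c (F i) + (i : ℕ) * (2 * F i) ≤ G i
  diff : ∀ i j, i < j → F i = F j → G i + 2 * F i ≤ G j
  zero : ∀ i, F i = 0 → G i = 0

/-- Padding. -/
def pN (a : ℕ) (n : Fin a → ℕ) (i : ℕ) : ℕ := if h : i < a then n ⟨i, h⟩ else 0

/-- Padding. -/
def pG (a : ℕ) (n : Fin a → ℕ) (m : Fin a → ℤ) (i : ℕ) : ℕ :=
  if h : i < a then (-m ⟨i, h⟩ - n ⟨i, h⟩).toNat else 0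

theorem pN_of {a : ℕ} (n : Fin a → ℕ) (s : Fin a) : pN a n s = n s := by
  simp [pN]

theorem IsHalf.pG_of {k : ℕ} {c : ℕ → ℕ} {a : ℕ} {n : Fin a → ℕ} {m : Fin a → ℤ}
    (h : IsHalf k c a n m) (s : Fin a) : (pG a n m s : ℤ) = -m s - n s := by
  have h1 := h.start s
  have h2 : (0 : ℤ) ≤ 2 * (s : ℕ) * (n s : ℤ) := by positivity
  simp only [pG, s.2, dif_pos, Fin.eta]
  omega

theorem sum_pad {a M : ℕ} (h : a ≤ M) {B : Type*} [AddCommMonoid B] (f : ℕ → B)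
    (hf : ∀ i, a ≤ i → f i = 0) : ∑ i : Fin M, f i = ∑ s : Fin a, f s := by
  rw [Fin.sum_univ_eq_sum_range, Fin.sum_univ_eq_sum_range]
  symm
  apply Finset.sum_subset
  · intro i hi
    rw [Finset.mem_range] at *
    omega
  · intro i _ hi
    rw [Finset.mem_range] at hi
    exact hf i (by omega)

theorem pN_zero {a : ℕ} (n : Fin a → ℕ) (i : ℕ) (h : a ≤ i) : pN a n i = 0 := by
  rw [pN, dif_neg (by omega)]

theorem pG_zero {a : ℕ} (n : Fin a → ℕ) (m : Fin a → ℤ) (i : ℕ) (h : a ≤ i) :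
    pG a n m i = 0 := by
  rw [pG, dif_neg (by omega)]

theorem IsHalf.sum_pN {k : ℕ} {c : ℕ → ℕ} {a : ℕ} {n : Fin a → ℕ} {m : Fin a → ℤ}
    (_h : IsHalf k c a n m) {M : ℕ} (ha : a ≤ M) : ∑ i : Fin M, pN a n i = ∑ s, n s := by
  rw [sum_pad ha _ (pN_zero n)]
  simp only [pN_of]

theorem IsHalf.sum_pG {k : ℕ} {c : ℕ → ℕ} {a : ℕ} {n : Fin a → ℕ} {m : Fin a → ℤ}
    (h : IsHalf k c a n m) {M : ℕ} (ha : a ≤ M) :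
    ((∑ i : Fin M, (pN a n i + pG a n m i) : ℕ) : ℤ) = -∑ s, m s := by
  rw [sum_pad ha (fun i => pN a n i + pG a n m i)
    (fun i hi => by rw [pN_zero n i hi, pG_zero n m i hi, add_zero])]
  rw [Nat.cast_sum, ← Finset.sum_neg_distrib]
  refine Finset.sum_congr rfl fun s _ => ?_
  rw [Nat.cast_add, h.pG_of, pN_of]
  ring

theorem IsHalf.a_le {k : ℕ} {c : ℕ → ℕ} {a : ℕ} {n : Fin a → ℕ} {m : Fin a → ℤ}
    (h : IsHalf k c a n m) : a ≤ ∑ s, n s := by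
  calc a = ∑ s : Fin a, 1 := by simp
    _ ≤ _ := Finset.sum_le_sum fun s _ => h.pos s

theorem IsHalf.isFun {k : ℕ} {c : ℕ → ℕ} (hc : c 0 = 0) {a : ℕ} {n : Fin a → ℕ} {m : Fin a → ℤ}
    (h : IsHalf k c a n m) (M : ℕ) :
    IsFun k c M (fun i => pN a n i) (fun i => pG a n m i) := by
  have hanti : ∀ i j : ℕ, i ≤ j → pN a n j ≤ pN a n i := by
    intro i j hij
    by_cases hj : j < a
    · have hi : i < a := by omega
      rw [pN, pN, dif_pos hj, dif_pos hi]
      exact h.anti _ _ hij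
    · rw [pN_zero n j (by omega)]; exact Nat.zero_le _
  refine ⟨?_, ?_, ?_, ?_, ?_⟩
  · intro i
    simp only [pN]
    split_ifs with h1
    · exact h.le _
    · exact Nat.zero_le _
  · intro i j hij
    exact hanti i j hij.le
  · intro i
    by_cases hi : (i : ℕ) < a
    · have h1 := h.start ⟨i, hi⟩
      have h2 := h.pG_of ⟨i, hi⟩
      have h3 := pN_of n ⟨i, hi⟩
      simp only at h1 h2 h3
      rw [← h3] at h1 h2
      zify
      rw [h2]
      linarith
    · simp only [pN_zero n i (by omega), hc]
      simp
  · intro i j hij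
    have key : ∀ j : ℕ, (i : ℕ) + 1 ≤ j → pN a n i = pN a n j →
        pG a n m i + 2 * pN a n i ≤ pG a n m j := by
      intro j hj
      induction j, hj using Nat.le_induction with
      | base =>
        intro he
        by_cases h1 : (i : ℕ) + 1 < a
        · have h2 : (i : ℕ) < a := by omega
          have d := h.diff i h1
          have g1 := h.pG_of ⟨i, h2⟩
          have g2 := h.pG_of ⟨i + 1, h1⟩
          have g3 := pN_of n ⟨i, h2⟩
          have g4 := pN_of n ⟨i + 1, h1⟩
          simp only at g1 g2 g3 g4
          rw [← g3, ← g4] at d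
          rw [← g3] at g1
          rw [← g4] at g2
          have d' := d he.symm
          zify
          rw [g1, g2, ← he]
          linarith
        · rw [pN_zero n (i + 1) (by omega)] at he
          have : a ≤ (i : ℕ) := by
            by_contra h2
            have := h.pos ⟨i, by omega⟩
            rw [← pN_of n] at this
            simp only at this
            omega
          rw [pG_zero n m i this, he]
          omega
      | succ j hj ih =>
        intro he
        have a1 := hanti i j (by omega)
        have a2 := hanti j (j + 1) (by omega)
        have ih' := ih (by omega)
        refine ih'.trans ?_
        by_cases h1 : j + 1 < a
        · have h2 : j < a := by omega
          have d := h.diff j h1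
          have g1 := h.pG_of ⟨j, h2⟩
          have g2 := h.pG_of ⟨j + 1, h1⟩
          have g3 := pN_of n ⟨j, h2⟩
          have g4 := pN_of n ⟨j + 1, h1⟩
          simp only at g1 g2 g3 g4
          rw [← g3, ← g4] at d
          rw [← g3] at g1
          rw [← g4] at g2
          have d' := d (by omega)
          zify
          rw [g1, g2]
          have : pN a n j = pN a n (j + 1) := by omega
          rw [← this]
          linarith
        · rw [pN_zero n (j + 1) (by omega)] at he
          have : a ≤ j := by
            by_contra h2
            have := h.pos ⟨j, by omega⟩
            rw [← pN_of n] at this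
            simp only at this
            omega
          rw [pG_zero n m j this]
          exact Nat.zero_le _
    exact key j hij
  · intro i hi
    apply pG_zero
    by_contra h2
    have := h.pos ⟨i, by omega⟩
    rw [← pN_of n] at this
    simp only at this hi
    omega

theorem exists_len {M : ℕ} (F : Fin M → ℕ) (hF : ∀ i j, i < j → F j ≤ F i) :
    ∃ a, a ≤ M ∧ ∀ i : Fin M, F i ≠ 0 ↔ (i : ℕ) < a := by
  classical
  by_cases hex : ∃ i : ℕ, ∃ h : i < M, F ⟨i, h⟩ = 0
  · refine ⟨Nat.find hex, ?_, ?_⟩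
    · obtain ⟨h, _⟩ := Nat.find_spec hex
      exact h.le
    · intro i
      constructor
      · intro hi
        by_contra hcon
        obtain ⟨h, h0⟩ := Nat.find_spec hex
        rcases (not_lt.mp hcon).lt_or_eq with h1 | h1
        · have := hF ⟨Nat.find hex, h⟩ i h1
          omega
        · apply hi
          rw [← h0]
          congr 1
          exact Fin.ext h1.symm
      · intro hi h0
        exact Nat.find_min hex hi ⟨i.2, h0⟩
  · refine ⟨M, le_rfl, fun i => ⟨fun _ => i.2, fun _ h => hex ⟨i, i.2, h⟩⟩⟩

theorem IsFun.exists_half {k : ℕ} {c : ℕ → ℕ} {M : ℕ} {F G : Fin M → ℕ} (h : IsFun k c M F G) :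
    ∃ (a : ℕ) (n : Fin a → ℕ) (m : Fin a → ℤ), a ≤ M ∧ IsHalf k c a n m ∧
      (∀ i : Fin M, pN a n i = F i) ∧ ∀ i : Fin M, pG a n m i = G i := by
  obtain ⟨a, ha, hF⟩ := exists_len F h.anti
  refine ⟨a, fun s => F ⟨s, by omega⟩, fun s => -(F ⟨s, by omega⟩ : ℤ) - (G ⟨s, by omega⟩ : ℤ),
    ha, ⟨?_, ?_, ?_, ?_, ?_⟩, ?_, ?_⟩
  · intro s
    have := (hF ⟨s, by omega⟩).mpr s.2
    omega
  · intro s; exact h.le _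
  · intro s t hst
    rcases hst.lt_or_eq with h1 | h1
    · exact h.anti _ _ h1
    · rw [h1]
  · intro s hs he
    have := h.diff ⟨s, by omega⟩ ⟨s + 1, by omega⟩ (by simp) he.symm
    simp only at he ⊢
    rw [he]
    omega
  · intro s
    have := h.base ⟨s, by omega⟩
    simp only at this ⊢
    zify at this
    linarith
  · intro i
    rw [pN]
    split_ifs with h1
    · rfl
    · by_contra h2
      exact h1 ((hF i).mp (Ne.symm h2))
  · intro i
    rw [pG]
    split_ifs with h1
    · simp only [Fin.eta]
      omega
    · have : F i = 0 := by
        by_contra h2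
        exact h1 ((hF i).mp h2)
      exact (h.zero i this).symm

theorem half_inj {k : ℕ} {c c' : ℕ → ℕ} {a a' M : ℕ} {n : Fin a → ℕ} {m : Fin a → ℤ}
    {n' : Fin a' → ℕ} {m' : Fin a' → ℤ} (h : IsHalf k c a n m) (h' : IsHalf k c' a' n' m')
    (ha : a ≤ M) (ha' : a' ≤ M) (hN : ∀ i : Fin M, pN a n i = pN a' n' i)
    (hG : ∀ i : Fin M, pG a n m i = pG a' n' m' i) : a = a' ∧ n ≍ n' ∧ m ≍ m' := by
  have key : a = a' := by
    rcases lt_trichotomy a a' with h1 | h1 | h1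
    · have := hN ⟨a, by omega⟩
      have h2 := h'.pos ⟨a, h1⟩
      rw [← pN_of n'] at h2
      rw [pN_zero n _ le_rfl] at this
      simp only at this h2
      omega
    · exact h1
    · have := hN ⟨a', by omega⟩
      have h2 := h.pos ⟨a', h1⟩
      rw [← pN_of n] at h2
      rw [pN_zero n' _ le_rfl] at this
      simp only at this h2
      omega
  subst key
  have hn : n = n' := by
    funext s
    have := hN ⟨s, by omega⟩
    rwa [pN_of, pN_of] at this
  subst hn
  refine ⟨rfl, HEq.rfl, heq_of_eq ?_⟩
  funext s
  have := hG ⟨s, by omega⟩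
  have h1 := h.pG_of s
  have h2 := h'.pG_of s
  simp only at this
  omega

end QPProof


set_option linter.unusedSectionVars false

namespace QPProof

open MvPolynomial OrderDual

/-- Bound for the second colour. -/
def c2 (k k01 M : ℕ) (F : Fin M → ℕ) (n : ℕ) : ℕ := (n - k01) + ∑ i, (n + F i - k)

theorem cl_lt {M : ℕ} {c c' : Bool} {i i' : Fin M} :
    cl c i < cl c' i' ↔ c < c' ∨ c = c' ∧ i < i' := by
  rw [cl, cl, Prod.Lex.toLex_lt_toLex]

theorem colx_cl {M : ℕ} (c : Bool) (i : Fin M) : colx (cl c i) = c := rfl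

theorem exists_cl {M : ℕ} (r : IX M) : ∃ c i, r = cl c i := ⟨(ofLex r).1, (ofLex r).2, rfl⟩

theorem colx_lt {M : ℕ} (s s' : IX M) (h : colx s = false) (h' : colx s' = true) : s < s' := by
  obtain ⟨c, i, rfl⟩ := exists_cl s
  obtain ⟨c', i', rfl⟩ := exists_cl s'
  rw [colx_cl] at h h'
  subst h h'
  rw [cl_lt]
  left; decide

theorem sum_lt_const {M : ℕ} (i : Fin M) (z : ℕ) :
    ∑ j : Fin M, (if j < i then z else 0) = i * z := by
  rw [← Finset.sum_filter, Finset.sum_const, smul_eq_mul]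
  congr 1
  rw [← Fin.card_Iio i]
  congr 1
  ext j
  simp

theorem base_false {M : ℕ} (i : Fin M) (k : ℕ) (ν : IX M →₀ ℕ) :
    ∑ s with s < cl false i, (if colx s = colx (cl false i) then 2 * ν (cl false i)
      else ν (cl false i) + ν s - k) = i * (2 * ν (cl false i)) := by
  rw [Finset.sum_filter, sum_IX]
  simp only [cl_lt, colx_cl, lt_self_iff_false, true_and, false_or, if_true]
  rw [sum_lt_const]
  simp

theorem base_true {M : ℕ} (i : Fin M) (k : ℕ) (ν : IX M →₀ ℕ) :
    ∑ s with s < cl true i, (if colx s = colx (cl true i) then 2 * ν (cl true i)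
      else ν (cl true i) + ν s - k) =
      ∑ j, (ν (cl true i) + ν (cl false j) - k) + i * (2 * ν (cl true i)) := by
  rw [Finset.sum_filter, sum_IX]
  simp only [cl_lt, colx_cl, lt_self_iff_false, true_and, false_or, if_true]
  rw [sum_lt_const]
  simp

theorem isQ_iff {M k k01 k0 : ℕ} {ν : IX M →₀ ℕ} {e : (IX M)ᵒᵈ →₀ ℕ} :
    (IsQ colx k k01 k0 ν e ∧ ∀ r, ν r = 0 → e (toDual r) = 0) ↔
    IsFun k (fun n => n - k0) M (fun i => ν (cl false i)) (fun i => e (toDual (cl false i))) ∧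
    IsFun k (c2 k k01 M (fun i => ν (cl false i))) M (fun i => ν (cl true i))
      (fun i => e (toDual (cl true i))) := by
  constructor
  · rintro ⟨h, h0⟩
    refine ⟨⟨fun i => h.le_k _, ?_, ?_, ?_, fun i => h0 _⟩,
      ⟨fun i => h.le_k _, ?_, ?_, ?_, fun i => h0 _⟩⟩
    · intro i j hij
      exact h.anti _ _ rfl (cl_lt.mpr (Or.inr ⟨rfl, hij⟩))
    · intro i
      have := h.base (cl false i)
      rw [base_false] at this
      simpa [colx_cl] using this
    · intro i j hij hν
      exact h.diff _ _ rfl (cl_lt.mpr (Or.inr ⟨rfl, hij⟩)) hν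
    · intro i j hij
      exact h.anti _ _ rfl (cl_lt.mpr (Or.inr ⟨rfl, hij⟩))
    · intro i
      have := h.base (cl true i)
      rw [base_true] at this
      simp only [c2, colx_cl, if_true] at this ⊢
      omega
    · intro i j hij hν
      exact h.diff _ _ rfl (cl_lt.mpr (Or.inr ⟨rfl, hij⟩)) hν
  · rintro ⟨h1, h2⟩
    refine ⟨⟨?_, ?_, ?_, ?_⟩, ?_⟩
    · intro r
      obtain ⟨c, i, rfl⟩ := exists_cl r
      cases c
      · exact h1.le i
      · exact h2.le i
    · intro s s' hc hlt
      obtain ⟨c, i, rfl⟩ := exists_cl s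
      obtain ⟨c', i', rfl⟩ := exists_cl s'
      rw [colx_cl, colx_cl] at hc
      subst hc
      rw [cl_lt] at hlt
      have hlt' : i < i' := by simpa using hlt
      cases c
      · exact h1.anti i i' hlt'
      · exact h2.anti i i' hlt'
    · intro r
      obtain ⟨c, i, rfl⟩ := exists_cl r
      cases c
      · rw [base_false]
        simpa [colx_cl] using h1.base i
      · rw [base_true]
        have := h2.base i
        simp only [c2, colx_cl, if_true] at this ⊢
        omega
    · intro s s' hc hlt
      obtain ⟨c, i, rfl⟩ := exists_cl s
      obtain ⟨c', i', rfl⟩ := exists_cl s'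
      rw [colx_cl, colx_cl] at hc
      subst hc
      rw [cl_lt] at hlt
      have hlt' : i < i' := by simpa using hlt
      cases c
      · exact h1.diff i i' hlt'
      · exact h2.diff i i' hlt'
    · intro r
      obtain ⟨c, i, rfl⟩ := exists_cl r
      cases c
      · exact h1.zero i
      · exact h2.zero i

theorem dmax1_eq (k₀ n : ℕ) : dmax1 k₀ n = -(n : ℤ) - ((n - k₀ : ℕ) : ℤ) := by
  unfold dmax1; omega

theorem dmax2_eq (k₀ k₁ n : ℕ) : dmax2 k₀ k₁ n = -(n : ℤ) - ((n - (k₀ + k₁) : ℕ) : ℤ) := by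
  unfold dmax2; omega

theorem c2_eq {k k01 M a n : ℕ} (ha : a ≤ M) (n1 : Fin a → ℕ) (hn : n ≤ k) :
    (c2 k k01 M (fun i => pN a n1 i) n : ℤ) =
      ((n - k01 : ℕ) : ℤ) + ∑ s' : Fin a, max 0 ((n : ℤ) + (n1 s' : ℤ) - (k : ℤ)) := by
  unfold c2
  rw [sum_pad ha (fun i => n + pN a n1 i - k)
    (fun i hi => by rw [pN_zero n1 i hi]; omega), Nat.cast_add, Nat.cast_sum]
  congr 1
  refine Finset.sum_congr rfl fun s _ => ?_
  rw [pN_of]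
  omega

theorem half1 {k k₀ k₁ : ℕ} (q : QPDatum k k₀ k₁) : IsHalf k (fun n => n - k₀) q.a q.n1 q.m1 := by
  refine ⟨q.n1_pos, q.n1_le, q.n1_anti, q.diff1, fun s => ?_⟩
  have := q.init1 s
  rw [dmax1_eq] at this
  exact this

theorem half2 {k k₀ k₁ : ℕ} (q : QPDatum k k₀ k₁) {M : ℕ} (ha : q.a ≤ M) :
    IsHalf k (c2 k (k₀ + k₁) M (fun i => pN q.a q.n1 i)) q.b q.n2 q.m2 := by
  refine ⟨q.n2_pos, q.n2_le, q.n2_anti, q.diff2, fun s => ?_⟩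
  have := q.init2 s
  rw [dmax2_eq] at this
  rw [c2_eq ha _ (q.n2_le s)]
  linarith

/-- Charges as exponents. -/
noncomputable def toNu {k k₀ k₁ : ℕ} (M : ℕ) (q : QPDatum k k₀ k₁) : IX M →₀ ℕ :=
  Finsupp.equivFunOnFinite.symm fun r =>
    if colx r then pN q.b q.n2 (ofLex r).2 else pN q.a q.n1 (ofLex r).2

/-- Degrees as exponents. -/
noncomputable def toE {k k₀ k₁ : ℕ} (M : ℕ) (q : QPDatum k k₀ k₁) : (IX M)ᵒᵈ →₀ ℕ :=
  Finsupp.equivFunOnFinite.symm fun r =>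
    if colx (ofDual r) then pG q.b q.n2 q.m2 (ofLex (ofDual r)).2
    else pG q.a q.n1 q.m1 (ofLex (ofDual r)).2

section
variable {k k₀ k₁ : ℕ} (M : ℕ) (q : QPDatum k k₀ k₁) (i : Fin M)
theorem toNu_false : toNu M q (cl false i) = pN q.a q.n1 i := rfl
theorem toNu_true : toNu M q (cl true i) = pN q.b q.n2 i := rfl
theorem toE_false : toE M q (toDual (cl false i)) = pG q.a q.n1 q.m1 i := rfl
theorem toE_true : toE M q (toDual (cl true i)) = pG q.b q.n2 q.m2 i := rfl
end

theorem c2_zero {k k01 M : ℕ} {F : Fin M → ℕ} (hF : ∀ i, F i ≤ k) : c2 k k01 M F 0 = 0 := by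
  unfold c2
  rw [Finset.sum_eq_zero]
  · simp
  · intro i _
    have := hF i
    omega

theorem supp_toNu {k k₀ k₁ M : ℕ} (q : QPDatum k k₀ k₁) (ha : q.a ≤ M) (hb : q.b ≤ M)
    (n₁ n₂ d : ℕ) :
    ((∑ r, (if colx r then 0 else toNu M q r)) = n₁ ∧
      (∑ r, (if colx r then toNu M q r else 0)) = n₂ ∧
      (∑ r, (toNu M q r + toE M q (toDual r))) = d) ↔
    (q.charge = (n₁, n₂) ∧ q.degree = (d : ℤ)) := by
  rw [sum_IX, sum_IX, sum_IX]
  simp only [colx_cl, toNu_false, toNu_true, toE_false, toE_true, Bool.false_eq_true, if_false,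
    if_true, Finset.sum_const_zero, add_zero, zero_add]
  rw [(half1 q).sum_pN ha, (half2 q ha).sum_pN hb, QPDatum.charge, QPDatum.degree, Prod.mk.injEq,
    and_assoc]
  have h1 := (half1 q).sum_pG ha
  have h2 := (half2 q ha).sum_pG hb
  refine and_congr Iff.rfl (and_congr Iff.rfl ?_)
  omega

theorem card_qp {k k₀ k₁ : ℕ} (n₁ n₂ d M : ℕ) (hM1 : n₁ ≤ M) (hM2 : n₂ ≤ M) :
    Nat.card {q : QPDatum k k₀ k₁ // q.charge = (n₁, n₂) ∧ q.degree = (d : ℤ)} =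
    Nat.card {p : (IX M →₀ ℕ) × ((IX M)ᵒᵈ →₀ ℕ) //
      IsQ colx k (k₀ + k₁) k₀ p.1 p.2 ∧ Supp colx (n₁, n₂, d) p.1 p.2} := by
  have hlen : ∀ q : QPDatum k k₀ k₁, q.charge = (n₁, n₂) → q.a ≤ M ∧ q.b ≤ M := by
    intro q hq
    have h1 := (half1 q).a_le
    have h2 := (half2 q le_rfl).a_le
    rw [QPDatum.charge, Prod.mk.injEq] at hq
    omega
  have hmem : ∀ q : QPDatum k k₀ k₁, q.charge = (n₁, n₂) ∧ q.degree = (d : ℤ) →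
      IsQ colx k (k₀ + k₁) k₀ (toNu M q) (toE M q) ∧
        Supp colx (n₁, n₂, d) (toNu M q) (toE M q) := by
    intro q hq
    obtain ⟨ha, hb⟩ := hlen q hq.1
    have h1 := (half1 q).isFun (by simp) M
    have h2 := (half2 q ha).isFun (c2_zero h1.le) M
    have h3 := isQ_iff.mpr (⟨h1, h2⟩ :
      IsFun k (fun n => n - k₀) M (fun i => toNu M q (cl false i))
        (fun i => toE M q (toDual (cl false i))) ∧
      IsFun k (c2 k (k₀ + k₁) M (fun i => toNu M q (cl false i))) M
        (fun i => toNu M q (cl true i)) (fun i => toE M q (toDual (cl true i))))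
    obtain ⟨g1, g2, g3⟩ := (supp_toNu q ha hb n₁ n₂ d).mpr hq
    exact ⟨h3.1, g1, g2, g3, h3.2⟩
  refine Nat.card_congr (Equiv.ofBijective
    (fun q => ⟨(toNu M q.1, toE M q.1), hmem q.1 q.2⟩) ⟨?_, ?_⟩)
  · rintro ⟨q, hq⟩ ⟨q', hq'⟩ h
    simp only [Subtype.mk.injEq, Prod.mk.injEq] at h
    obtain ⟨hN, hE⟩ := h
    obtain ⟨ha, hb⟩ := hlen q hq.1
    obtain ⟨ha', hb'⟩ := hlen q' hq'.1
    obtain ⟨e1, e2, e3⟩ := half_inj (half1 q) (half1 q') ha ha'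
      (fun i => DFunLike.congr_fun hN (cl false i))
      (fun i => DFunLike.congr_fun hE (toDual (cl false i)))
    obtain ⟨f1, f2, f3⟩ := half_inj (half2 q ha) (half2 q' ha') hb hb'
      (fun i => DFunLike.congr_fun hN (cl true i))
      (fun i => DFunLike.congr_fun hE (toDual (cl true i)))
    rw [Subtype.mk.injEq]
    clear hN hE hq hq' ha hb ha' hb'
    obtain ⟨a, b, n1, n2, m1, m2⟩ := q
    obtain ⟨a', b', n1', n2', m1', m2'⟩ := q'
    simp only at e1 e2 e3 f1 f2 f3
    subst e1 f1
    have e2 := eq_of_heq e2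
    have e3 := eq_of_heq e3
    have f2 := eq_of_heq f2
    have f3 := eq_of_heq f3
    subst e2 e3 f2 f3
    rfl
  · rintro ⟨⟨ν, e⟩, hQ, hS⟩
    obtain ⟨h1, h2⟩ := isQ_iff.mp ⟨hQ, hS.2.2.2⟩
    obtain ⟨a, n1, m1, ha, H1, hn1, hm1⟩ := h1.exists_half
    obtain ⟨b, n2, m2, hb, H2, hn2, hm2⟩ := h2.exists_half
    let q : QPDatum k k₀ k₁ := 
      { a := a, b := b, n1 := n1, n2 := n2, m1 := m1, m2 := m2
        n1_pos := H1.pos, n1_le := H1.le, n1_anti := H1.anti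
        n2_pos := H2.pos, n2_le := H2.le, n2_anti := H2.anti
        diff1 := H1.diff, diff2 := H2.diff
        init1 := by
          intro s
          rw [dmax1_eq]
          exact H1.start s
        init2 := by
          intro s
          have := H2.start s
          have hF : (fun i : Fin M => ν (cl false i)) = fun i : Fin M => pN a n1 i :=
            funext fun i => (hn1 i).symm
          rw [hF, c2_eq ha _ (H2.le s)] at this
          rw [dmax2_eq]
          linarith }
    have hν : toNu M q = ν := by
      ext r
      obtain ⟨c, i, rfl⟩ := exists_cl r
      cases c
      · exact hn1 i
      · exact hn2 i
    have he : toE M q = e := by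
      ext r
      obtain ⟨c, i, hr⟩ := exists_cl (ofDual r)
      obtain rfl : r = toDual (cl c i) := hr
      cases c
      · exact hm1 i
      · exact hm2 i
    refine ⟨⟨q, ?_⟩, ?_⟩
    · rw [← supp_toNu q ha hb, hν, he]
      exact ⟨hS.1, hS.2.1, hS.2.2.1⟩
    · simp only [hν, he]

end QPProof


set_option linter.unusedSectionVars false

namespace QPProof

open MvPolynomial OrderDual

theorem card_config (k k₀ k₁ k₂ : ℕ) (hk : 1 ≤ k) (hsum : k₀ + k₁ + k₂ = k) (n₁ n₂ d : ℕ) :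
    Nat.card {a : ℕ →₀ ℕ //
        IsAdmissibleConfig k k₀ k₁ a ∧ configCharge a = (n₁, n₂) ∧ configDegree a = d} =
      Module.finrank ℚ (gradedE k (k₀ + k₁) k₀ (n₁, n₂, d)) := by
  have hlow : ∀ a : {a : ℕ →₀ ℕ //
        IsAdmissibleConfig k k₀ k₁ a ∧ configCharge a = (n₁, n₂) ∧ configDegree a = d},
      ∃ P : gradedE k (k₀ + k₁) k₀ (n₁, n₂, d), Lead (P : MvPolynomial ℕ ℚ) a.1 := by
    rintro ⟨a, ⟨h1, h2, h3⟩, h4⟩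
    obtain ⟨P, hP, hl⟩ := config_lower hk (Nat.le_add_right k₀ k₁) (by omega) h1 h2 h3
    rw [(weight_wt_iff _ _ _ _).mpr h4] at hP
    exact ⟨⟨P, hP⟩, hl⟩
  choose p hp using hlow
  refine card_eq_finrank_of_triangular
    (fun a => (lcoeff ℚ a.1).comp (gradedE k (k₀ + k₁) k₀ (n₁, n₂, d)).subtype) ?_ p
    (fun a => toLex a.1) ?_ ?_
  · rintro ⟨P, hP⟩ hne
    have hne' : P ≠ 0 := fun h => hne (Subtype.ext h)
    obtain ⟨a, ha⟩ := exists_lead hne'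
    rw [mem_gradedE] at hP
    refine ⟨⟨a, config_upper hP.1 ha, (weight_wt_iff _ _ _ _).mp (hP.2 ha.1)⟩, ha.1⟩
  · intro a
    exact (hp a).1
  · intro a a' h
    rcases ((hp a).2 a'.1 h).lt_or_eq with h1 | h1
    · exact Or.inr h1
    · exact Or.inl (Subtype.ext (toLex_inj.mp h1))

theorem card_quasi (k k₀ k₁ k₂ : ℕ) (hsum : k₀ + k₁ + k₂ = k) (hmin : k₀ * k₂ = 0)
    (n₁ n₂ d : ℕ) :
    Nat.card {q : QPDatum k k₀ k₁ // q.charge = (n₁, n₂) ∧ q.degree = (d : ℤ)} =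
      Module.finrank ℚ (gradedE k (k₀ + k₁) k₀ (n₁, n₂, d)) := by
  classical
  let M := n₁ + n₂ + d
  rw [card_qp n₁ n₂ d M (by omega) (by omega)]
  have hlow : ∀ p : {p : (IX M →₀ ℕ) × ((IX M)ᵒᵈ →₀ ℕ) //
      IsQ colx k (k₀ + k₁) k₀ p.1 p.2 ∧ Supp colx (n₁, n₂, d) p.1 p.2},
      ∃ P : gradedE k (k₀ + k₁) k₀ (n₁, n₂, d), Lead (Psi (colx (M := M)) P.1) p.1.1 ∧
        Lead (coeff p.1.1 (Psi (colx (M := M)) P.1)) p.1.2 := by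
    rintro ⟨⟨ν, e⟩, hQ, hS⟩
    obtain ⟨P, hP, h⟩ := qp_lower colx colx_lt hsum hmin hQ hS
    exact ⟨⟨P, hP⟩, h⟩
  choose p hp using hlow
  refine card_eq_finrank_of_triangular
    (fun q => (lcoeff ℚ q.1.2) ∘ₗ ((lcoeff (AX (IX M)) q.1.1).restrictScalars ℚ) ∘ₗ
      (Psi (colx (M := M))).toLinearMap ∘ₗ (gradedE k (k₀ + k₁) k₀ (n₁, n₂, d)).subtype) ?_ p
    (fun q => toLex (toLex q.1.1, toLex q.1.2)) ?_ ?_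
  · rintro ⟨P, hP⟩ hne
    have hne' : P ≠ 0 := fun h => hne (Subtype.ext h)
    have hne2 : Psi (colx (M := M)) P ≠ 0 := fun h =>
      hne' (Psi_inj (mem_gradedE.mp hP).2 (by simp only [M]; omega) h)
    obtain ⟨ν, hν⟩ := exists_lead hne2
    obtain ⟨e, he⟩ := exists_lead hν.1
    exact ⟨⟨(ν, e), qp_upper colx hP hν he⟩, he.1⟩
  · intro q
    exact (hp q).2.1
  · intro q q' h
    change coeff q'.1.2 (coeff q'.1.1 (Psi (colx (M := M)) (p q).1)) ≠ 0 at h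
    have h1 : coeff q'.1.1 (Psi (colx (M := M)) (p q).1) ≠ 0 := by
      intro h0; rw [h0] at h; simp at h
    rcases ((hp q).1.2 _ h1).lt_or_eq with h2 | h2
    · right
      rw [Prod.Lex.toLex_lt_toLex]
      exact Or.inl h2
    · have h3 := toLex_inj.mp h2
      rw [h3] at h
      rcases ((hp q).2.2 _ h).lt_or_eq with h4 | h4
      · right
        rw [Prod.Lex.toLex_lt_toLex]
        exact Or.inr ⟨h2, h4⟩
      · left
        exact Subtype.ext (Prod.ext h3 (toLex_inj.mp h4))

end QPProof

/-- The number of `(k,3)`-admissible configurations of charge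
`(n₁, n₂)` and degree `d` equals the number of quasi-particle data of charge `(n₁, n₂)`
and degree `d`. -/
theorem count_admissible_configs_eq_count_quasiparticle_data
    (k k₀ k₁ k₂ : ℕ) (hk : 1 ≤ k) (hsum : k₀ + k₁ + k₂ = k) (hmin : k₀ * k₂ = 0)
    (n₁ n₂ d : ℕ) :
    Nat.card {a : ℕ →₀ ℕ //
        IsAdmissibleConfig k k₀ k₁ a ∧ configCharge a = (n₁, n₂) ∧ configDegree a = d}
    = Nat.card {q : QPDatum k k₀ k₁ // q.charge = (n₁, n₂) ∧ q.degree = (d : ℤ)} := by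
  rw [QPProof.card_config k k₀ k₁ k₂ hk hsum n₁ n₂ d,
    QPProof.card_quasi k k₀ k₁ k₂ hsum hmin n₁ n₂ d]
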